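/- arXiv:1607.05595 — 4 statements merged into one kernel-verified Lean document; each statement's English description precedes it below -/
import Mathlib

section
/- Let q be a prime and a an integer coprime to q. Then (1/φ(q)) Σ*_{χ mod q} L(0,χ)·L(0, conj χ)·χ(a mod q) = s(a/q), and also (1/π²)·(q/φ(q)) Σ*_{χ mod q, χ(−1)=−1} |L(1,χ)|²·χ(a mod q) = s(a/q), where Σ* runs over the primitive (equivalently, nontrivial) Dirichlet characters modulo q. -/
open Complex Real Finset

open scoped Classical in
/-- The sawtooth function `((x))`. -/
noncomputable def sawtooth (x : ℝ) : ℝ :=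
  if ∃ n : ℤ, x = (n : ℝ) then 0 else x - ⌊x⌋ - 1/2

/-- The Dedekind sum `s(h/k)`. -/
noncomputable def dedekindSum (h : ℤ) (k : ℕ) : ℝ :=
  ∑ m ∈ Finset.Icc 1 (k-1), sawtooth ((m : ℝ) * h / k) * sawtooth ((m : ℝ) / k)

section LValue

open Filter Topology Asymptotics MeasureTheory

variable {N : ℕ} [NeZero N]

/-- numerator polynomial -/
noncomputable def auxQ (Φ : ZMod N → ℂ) (z : ℝ) : ℂ :=
  -∑ j : ZMod N, Φ j * ∑ i ∈ Finset.range j.val, (z : ℂ) ^ i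

/-- denominator polynomial -/
noncomputable def auxS (N : ℕ) (z : ℝ) : ℂ := ∑ i ∈ Finset.range N, (z : ℂ) ^ i

lemma auxS_ne_zero {z : ℝ} (hz : 0 ≤ z) : auxS N z ≠ 0 := by
  have h : auxS N z = ((∑ i ∈ Finset.range N, z ^ i : ℝ) : ℂ) := by
    simp [auxS]
  rw [h, Complex.ofReal_ne_zero]
  have : z ^ 0 ≤ ∑ i ∈ Finset.range N, z ^ i :=
    Finset.single_le_sum (f := fun i => z ^ i) (fun i _ => pow_nonneg hz i)
      (Finset.mem_range.mpr (NeZero.pos N))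
  rw [pow_zero] at this
  linarith

lemma hasSum_aux (Φ : ZMod N → ℂ) (hΦ : ∑ j, Φ j = 0) {z : ℝ} (hz : 0 < z) (hz1 : z < 1) :
    HasSum (fun n : ℕ => Φ n * (z : ℂ) ^ n) (auxQ Φ z / auxS N z) := by
  have hzn : ‖(z : ℂ)‖ < 1 := by
    rw [Complex.norm_real, Real.norm_eq_abs, abs_of_pos hz]; exact hz1
  have hsum : Summable (fun n : ℕ => Φ n * (z : ℂ) ^ n) := by
    obtain ⟨C, hC⟩ : ∃ C, ∀ j, ‖Φ j‖ ≤ C := by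
      obtain ⟨j, hj⟩ := Finite.exists_max (fun j => ‖Φ j‖)
      exact ⟨_, hj⟩
    refine Summable.of_norm_bounded
      (g := fun n => C * ‖(z : ℂ)‖ ^ n) ((summable_geometric_of_lt_one (norm_nonneg _) hzn).mul_left C) ?_
    intro n
    rw [norm_mul, norm_pow]
    gcongr
    exact hC _
  have hzN : ‖(z : ℂ) ^ N‖ < 1 := by
    rw [norm_pow]; exact pow_lt_one₀ (norm_nonneg _) hzn (NeZero.ne N)
  have h1z : (1 : ℂ) - z ≠ 0 := by
    rw [← Complex.ofReal_one, ← Complex.ofReal_sub, Complex.ofReal_ne_zero]; linarith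
  have hgeo : (1 - (z : ℂ)) * auxS N z = 1 - (z : ℂ) ^ N := mul_neg_geom_sum _ _
  rw [hsum.hasSum_iff, Nat.sumByResidueClasses hsum N]
  have : ∀ j : ZMod N, ∑' m : ℕ, Φ ((j.val + N * m : ℕ) : ZMod N) * (z : ℂ) ^ (j.val + N * m)
      = Φ j * (z : ℂ) ^ j.val * (1 - (z : ℂ) ^ N)⁻¹ := by
    intro j
    rw [← tsum_geometric_of_norm_lt_one hzN, ← tsum_mul_left]
    congr 1 with m
    rw [pow_add, pow_mul]
    simp [mul_assoc]
  simp_rw [this]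
  rw [← Finset.sum_mul, ← hgeo]
  have hQ : ∑ j : ZMod N, Φ j * (z : ℂ) ^ j.val = (1 - z) * auxQ Φ z := by
    have : ∑ j : ZMod N, Φ j * (z : ℂ) ^ j.val = -∑ j : ZMod N, Φ j * (1 - (z : ℂ) ^ j.val) := by
      simp only [mul_sub, mul_one, Finset.sum_sub_distrib, hΦ]; ring
    rw [this, auxQ, mul_neg, Finset.mul_sum]
    congr 1
    refine Finset.sum_congr rfl fun j _ => ?_
    rw [← mul_neg_geom_sum]; ring
  rw [hQ]
  have := auxS_ne_zero (N := N) hz.le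
  field_simp

/-- the function `H` -/
noncomputable def auxH (Φ : ZMod N → ℂ) (z : ℝ) : ℂ :=
  auxQ Φ z / auxS N z - (auxQ Φ 1 / auxS N 1) * z

lemma auxH_differentiableAt (Φ : ZMod N → ℂ) {z : ℝ} (hz : 0 ≤ z) :
    DifferentiableAt ℝ (auxH Φ) z := by
  have h0 : Differentiable ℝ (fun z : ℝ => (z : ℂ)) := Complex.ofRealCLM.differentiable
  have h1 : Differentiable ℝ (auxQ Φ) := by
    unfold auxQ; fun_prop
  have h2 : Differentiable ℝ (auxS N) := by
    unfold auxS; fun_prop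
  unfold auxH
  exact ((h1 z).div (h2 z) (auxS_ne_zero hz)).sub ((h0 z).const_mul _)

lemma auxH_one (Φ : ZMod N → ℂ) : auxH Φ 1 = 0 := by simp [auxH]

lemma auxQ_zero (Φ : ZMod N → ℂ) (hΦ : ∑ j, Φ j = 0) (hΦ0 : Φ 0 = 0) : auxQ Φ 0 = 0 := by
  have : ∀ j : ZMod N, Φ j * ∑ i ∈ Finset.range j.val, ((0 : ℝ) : ℂ) ^ i = Φ j := by
    intro j
    by_cases hj : j = 0
    · simp [hj, hΦ0]
    · have hv : j.val ≠ 0 := by rwa [Ne, ZMod.val_eq_zero]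
      obtain ⟨k, hk⟩ := Nat.exists_eq_succ_of_ne_zero hv
      rw [hk, Finset.sum_range_succ']
      simp
  simp only [auxQ, this, hΦ, neg_zero]

lemma auxH_zero (Φ : ZMod N → ℂ) (hΦ : ∑ j, Φ j = 0) (hΦ0 : Φ 0 = 0) : auxH Φ 0 = 0 := by
  simp [auxH, auxQ_zero Φ hΦ hΦ0]

/-- the function whose Mellin transform we take -/
noncomputable def auxG (Φ : ZMod N → ℂ) (t : ℝ) : ℂ := auxH Φ (Real.exp (-t))

lemma mellin_auxG_differentiableAt (Φ : ZMod N → ℂ) (hΦ : ∑ j, Φ j = 0) (hΦ0 : Φ 0 = 0)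
    {s : ℂ} (hs : -1 < s.re) : DifferentiableAt ℂ (mellin (auxG Φ)) s := by
  have hd : Differentiable ℝ (auxG Φ) := by
    intro t
    have h1 : DifferentiableAt ℝ (fun t : ℝ => Real.exp (-t)) t := by fun_prop
    exact (auxH_differentiableAt Φ (Real.exp_pos (-t)).le).comp t h1
  refine mellin_differentiableAt_of_isBigO_rpow_exp (a := 1) (b := -1) one_pos ?_ ?_ ?_ hs
  · exact (hd.continuous.locallyIntegrable).locallyIntegrableOn _
  · have h := (auxH_differentiableAt Φ (le_refl (0 : ℝ))).isBigO_sub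
    simp only [auxH_zero Φ hΦ hΦ0, sub_zero] at h
    have ht : Tendsto (fun t : ℝ => Real.exp (-t)) atTop (𝓝 0) :=
      Real.tendsto_exp_neg_atTop_nhds_zero
    have := h.comp_tendsto ht
    have h3 : (fun x => auxH Φ (Real.exp (-x))) = auxG Φ := rfl
    simp only [Function.comp_def, h3] at this
    simpa only [neg_mul, one_mul] using this
  · have h := (hd 0).isBigO_sub
    have h0 : auxG Φ 0 = 0 := by simp [auxG, auxH_one]
    simp only [h0, sub_zero] at h
    simpa using h.mono nhdsWithin_le_nhds

lemma mellin_auxG_eq (Φ : ZMod N → ℂ) (hΦ : ∑ j, Φ j = 0) (hΦ0 : Φ 0 = 0)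
    {s : ℂ} (hs : 1 < s.re) :
    mellin (auxG Φ) s = Complex.Gamma s * (ZMod.LFunction Φ s - auxQ Φ 1 / auxS N 1) := by
  set c := auxQ Φ 1 / auxS N 1 with hc
  have hs0 : 0 < s.re := by linarith
  have hsne : s ≠ 0 := by rintro rfl; simp at hs0
  have hLS := ZMod.LSeriesSummable_of_one_lt_re Φ hs
  have hsum1 : Summable (fun n : ℕ => Φ n / (n : ℂ) ^ s) := by
    refine hLS.congr fun n => ?_
    rw [LSeries.term_of_ne_zero' hsne]
  have hHS : HasSum (fun n : ℕ => Φ n / (n : ℂ) ^ s) (ZMod.LFunction Φ s) := by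
    rw [hsum1.hasSum_iff, ZMod.LFunction_eq_LSeries Φ hs, LSeries]
    congr 1 with n
    rw [LSeries.term_of_ne_zero' hsne]
  have hsing : HasSum (fun n : ℕ => if n = 1 then c else 0) c := hasSum_ite_eq 1 c
  have hM := hasSum_mellin (a := fun n : ℕ => Φ n - if n = 1 then c else 0) (p := fun n => (n : ℝ))
    (F := auxG Φ) (s := s) ?_ hs0 ?_ ?_
  · refine hM.unique ?_
    have := (hHS.sub hsing).mul_left (Complex.Gamma s)
    refine this.congr_fun ?_
    intro n
    by_cases hn : n = 1
    · subst hn; simp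
    · simp [hn, mul_div_assoc]
  · intro n
    rcases Nat.eq_zero_or_pos n with h | h
    · left; subst h; simp [hΦ0]
    · right; exact_mod_cast h
  · intro t ht
    have ht : 0 < t := ht
    have h1 := hasSum_aux Φ hΦ (Real.exp_pos (-t)) (by rw [Real.exp_lt_one_iff]; linarith)
    have h2 : HasSum (fun n : ℕ => if n = 1 then c * (Real.exp (-t) : ℝ) else 0)
      (c * (Real.exp (-t) : ℝ)) := hasSum_ite_eq 1 _
    refine (h1.sub h2).congr_fun ?_
    intro n
    have : Real.exp (-(n : ℝ) * t) = Real.exp (-t) ^ n := by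
      rw [← Real.exp_nat_mul]; ring_nf
    rw [this]
    by_cases hn : n = 1
    · subst hn; simp [sub_mul]
    · simp [hn]
  · have h1 := hsum1.sub (hsing.summable)
    refine h1.norm.congr fun n => ?_
    by_cases hn : n = 1
    · subst hn; simp
    · rcases Nat.eq_zero_or_pos n with h | h
      · subst h; simp [hΦ0]
      · simp only [hn, if_false, sub_zero, norm_div]
        rw [Complex.norm_natCast_cpow_of_pos h]

lemma LFunction_zero_aux (Φ : ZMod N → ℂ) (hΦ : ∑ j, Φ j = 0) (hΦ0 : Φ 0 = 0) :
    ZMod.LFunction Φ 0 = -(∑ j : ZMod N, Φ j * (j.val : ℂ)) / N := by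
  set c := auxQ Φ 1 / auxS N 1 with hc
  have hcv : c = -(∑ j : ZMod N, Φ j * (j.val : ℂ)) / N := by
    simp [hc, auxQ, auxS]
  rw [← hcv]
  let U : Set ℂ := {s | -1 < s.re}
  have hU : IsOpen U := isOpen_lt continuous_const Complex.continuous_re
  have hUc : IsPreconnected U := (convex_halfSpace_re_gt (-1)).isPreconnected
  have hf : AnalyticOnNhd ℂ (fun s => ZMod.LFunction Φ s - c) U := by
    refine DifferentiableOn.analyticOnNhd (fun s _ => ?_) hU
    exact (((ZMod.differentiable_LFunction_of_sum_zero hΦ) s).sub_const c).differentiableWithinAt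
  have hg : AnalyticOnNhd ℂ (fun s => mellin (auxG Φ) s * (Complex.Gamma s)⁻¹) U := by
    refine DifferentiableOn.analyticOnNhd (fun s hs => ?_) hU
    exact ((mellin_auxG_differentiableAt Φ hΦ hΦ0 hs).mul
      (Complex.differentiable_one_div_Gamma s)).differentiableWithinAt
  have h2 : (2 : ℂ) ∈ U := by simp [U]; norm_num
  have heq := hf.eqOn_of_preconnected_of_eventuallyEq hg hUc h2 ?_
  · have h0 : (0 : ℂ) ∈ U := by simp [U]
    have := heq h0
    simp only [Complex.Gamma_zero, inv_zero, mul_zero] at this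
    exact sub_eq_zero.mp this
  · have hV : IsOpen {s : ℂ | 1 < s.re} := isOpen_lt continuous_const Complex.continuous_re
    filter_upwards [hV.mem_nhds (show (2 : ℂ) ∈ {s : ℂ | 1 < s.re} by simp)] with s hs
    have hs : 1 < s.re := hs
    rw [mellin_auxG_eq Φ hΦ hΦ0 hs]
    have : Complex.Gamma s ≠ 0 := Complex.Gamma_ne_zero_of_re_pos (by linarith)
    rw [← hc]
    field_simp

end LValue

section Dedekind

lemma sawtooth_add_int (x : ℝ) (n : ℤ) : sawtooth (x + n) = sawtooth x := by
  have h : (∃ m : ℤ, x + n = (m : ℝ)) ↔ ∃ m : ℤ, x = (m : ℝ) := by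
    constructor
    · rintro ⟨m, hm⟩; exact ⟨m - n, by push_cast; linarith⟩
    · rintro ⟨m, hm⟩; exact ⟨m + n, by push_cast; linarith⟩
  unfold sawtooth
  by_cases h' : ∃ m : ℤ, x = (m : ℝ)
  · rw [if_pos h', if_pos (h.mpr h')]
  · rw [if_neg h', if_neg (fun hh => h' (h.mp hh)), Int.floor_add_intCast]
    push_cast; ring

lemma sawtooth_neg (x : ℝ) : sawtooth (-x) = -sawtooth x := by
  have h : (∃ m : ℤ, -x = (m : ℝ)) ↔ ∃ m : ℤ, x = (m : ℝ) := by
    constructor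
    · rintro ⟨m, hm⟩; exact ⟨-m, by push_cast; linarith⟩
    · rintro ⟨m, hm⟩; exact ⟨-m, by push_cast; linarith⟩
  unfold sawtooth
  by_cases h' : ∃ m : ℤ, x = (m : ℝ)
  · rw [if_pos h', if_pos (h.mpr h'), neg_zero]
  · rw [if_neg h', if_neg (fun hh => h' (h.mp hh))]
    have : ⌊-x⌋ = -⌊x⌋ - 1 := by
      rw [Int.floor_eq_iff]
      have h1 := Int.floor_le x
      have h2 := Int.lt_floor_add_one x
      have h3 : (⌊x⌋ : ℝ) ≠ x := fun h => h' ⟨⌊x⌋, h.symm⟩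
      have h4 := lt_of_le_of_ne h1 h3
      push_cast
      constructor <;> linarith
    rw [this]; push_cast; ring

variable {q : ℕ} [NeZero q]

/-- sawtooth on residue classes -/
noncomputable def sawB (j : ZMod q) : ℝ := sawtooth ((j.val : ℝ) / q)

lemma sawB_intCast (m : ℤ) : sawB (m : ZMod q) = sawtooth ((m : ℝ) / q) := by
  have hq : (q : ℝ) ≠ 0 := NeZero.ne _
  have h : (((m : ZMod q).val : ℤ)) = m % q := ZMod.val_intCast m
  have h2 : (((m : ZMod q).val : ℝ)) = m - q * ((m / q : ℤ) : ℝ) := by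
    have := Int.emod_add_mul_ediv m q
    rw [← h] at this
    have h3 : (((m : ZMod q).val : ℤ) : ℝ) + (q : ℝ) * ((m / q : ℤ) : ℝ) = m := by exact_mod_cast this
    push_cast at h3 ⊢
    linarith
  have h4 : (m : ℝ) / q = ((m : ZMod q).val : ℝ) / q + ((m / q : ℤ) : ℝ) := by
    rw [h2]; field_simp; ring
  rw [h4, sawtooth_add_int, sawB]

lemma sawB_zero : sawB (0 : ZMod q) = 0 := by
  have := sawB_intCast (q := q) 0
  simp only [Int.cast_zero, zero_div] at this
  rw [this, sawtooth, if_pos ⟨0, by simp⟩]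

lemma sawB_neg (j : ZMod q) : sawB (-j) = -sawB j := by
  obtain ⟨m, rfl⟩ := ZMod.intCast_surjective j
  rw [← Int.cast_neg, sawB_intCast, sawB_intCast, ← sawtooth_neg]
  push_cast; rw [neg_div]

lemma sawB_of_ne {j : ZMod q} (hj : j ≠ 0) : sawB j = (j.val : ℝ) / q - 1 / 2 := by
  have hq : (0 : ℝ) < q := by exact_mod_cast NeZero.pos q
  have hv : 0 < j.val := Nat.pos_of_ne_zero (by rwa [Ne, ZMod.val_eq_zero])
  have h0 : 0 < (j.val : ℝ) / q := by positivity
  have h1 : (j.val : ℝ) / q < 1 := by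
    rw [div_lt_one hq]; exact_mod_cast ZMod.val_lt j
  have hn : ¬ ∃ n : ℤ, (j.val : ℝ) / q = n := by
    rintro ⟨n, hn⟩
    rw [hn] at h0 h1
    have a1 : 0 < n := by exact_mod_cast h0
    have a2 : n < 1 := by exact_mod_cast h1
    lia
  have hf : ⌊(j.val : ℝ) / q⌋ = 0 := by
    rw [Int.floor_eq_iff]; push_cast; constructor <;> linarith
  rw [sawB, sawtooth, if_neg hn, hf]; simp

lemma dedekindSum_eq (a : ℤ) :
    dedekindSum a q = ∑ j : ZMod q, sawB ((a : ZMod q) * j) * sawB j := by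
  have hterm : ∀ m : ℕ, sawtooth ((m : ℝ) * a / q) * sawtooth ((m : ℝ) / q)
      = sawB ((a : ZMod q) * (m : ZMod q)) * sawB (m : ZMod q) := by
    intro m
    have h1 := sawB_intCast (q := q) (a * m)
    have h2 := sawB_intCast (q := q) m
    push_cast at h1 h2
    rw [h1, h2, mul_comm (m : ℝ)]
  unfold dedekindSum
  simp_rw [hterm]
  have h1 : ∑ j : ZMod q, sawB ((a : ZMod q) * j) * sawB j =
      ∑ m ∈ Finset.range q, sawB ((a : ZMod q) * (m : ZMod q)) * sawB (m : ZMod q) := by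
    refine Finset.sum_bij' (fun j _ => j.val) (fun m _ => (m : ZMod q)) ?_ ?_ ?_ ?_ ?_
    · intro j _; exact Finset.mem_range.mpr (ZMod.val_lt j)
    · intro m _; simp
    · intro j _; simp
    · intro m hm; exact ZMod.val_cast_of_lt (Finset.mem_range.mp hm)
    · intro j _; simp
  rw [h1]
  refine Finset.sum_subset ?_ ?_
  · intro m hm
    have := Finset.mem_Icc.mp hm
    have := NeZero.pos q
    rw [Finset.mem_range]; lia
  · intro m hm hm'
    have : m = 0 := by
      rw [Finset.mem_range] at hm
      rw [Finset.mem_Icc] at hm'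
      lia
    subst this
    simp [sawB_zero]

/-- character sum -/
noncomputable def charB (χ : DirichletCharacter ℂ q) : ℂ := ∑ j : ZMod q, χ j * (sawB j : ℂ)

lemma charB_even {χ : DirichletCharacter ℂ q} (h : χ (-1) = 1) : charB χ = 0 := by
  have : charB χ = -charB χ := by
    conv_lhs => rw [charB, ← Equiv.sum_comp (Equiv.neg (ZMod q))]
    rw [charB, ← Finset.sum_neg_distrib]
    refine Finset.sum_congr rfl fun j _ => ?_
    simp only [Equiv.neg_apply, sawB_neg]
    rw [← neg_one_mul j, map_mul, h]
    push_cast; ring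
  exact self_eq_neg.mp this

lemma charB_inv (χ : DirichletCharacter ℂ q) : charB χ⁻¹ = (starRingEnd ℂ) (charB χ) := by
  simp only [charB, map_sum, map_mul, Complex.conj_ofReal]
  refine Finset.sum_congr rfl fun j _ => ?_
  rw [← MulChar.star_apply']; rfl

lemma ringHomComp_conj (χ : DirichletCharacter ℂ q) :
    χ.ringHomComp (starRingEnd ℂ) = χ⁻¹ := by
  ext j
  rw [MulChar.ringHomComp_apply, ← MulChar.star_apply']; rfl

lemma LFunction_zero_eq (hq1 : q ≠ 1) {χ : DirichletCharacter ℂ q} (hχ : χ ≠ 1) :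
    DirichletCharacter.LFunction χ 0 = -charB χ := by
  have hq : (q : ℂ) ≠ 0 := NeZero.ne _
  have hsum : ∑ j, χ j = 0 := χ.sum_eq_zero_of_ne_one hχ
  have h0 : χ 0 = 0 := χ.map_zero' hq1
  have hl : DirichletCharacter.LFunction χ 0 = ZMod.LFunction (fun j => χ j) 0 := rfl
  rw [hl, LFunction_zero_aux _ hsum h0]
  have : charB χ = ∑ j : ZMod q, (χ j * (j.val : ℂ) / q - χ j * (1 / 2)) := by
    refine Finset.sum_congr rfl fun j _ => ?_
    by_cases hj : j = 0
    · subst hj; simp [h0]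
    · rw [sawB_of_ne hj]; push_cast; ring
  rw [this, Finset.sum_sub_distrib, ← Finset.sum_mul, hsum, ← Finset.sum_div]
  ring

lemma sum_charB (hq : q.Prime) (a : ℤ) :
    ∑ χ : DirichletCharacter ℂ q, charB χ * charB χ⁻¹ * χ (a : ZMod q)
      = (q.totient : ℂ) * (dedekindSum a q : ℂ) := by
  have : Fact q.Prime := ⟨hq⟩
  have h1 : ∀ χ : DirichletCharacter ℂ q, charB χ * charB χ⁻¹ * χ (a : ZMod q)
      = ∑ m : ZMod q, ∑ n : ZMod q, (sawB m : ℂ) * sawB n * (χ n⁻¹ * χ (a * m)) := by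
    intro χ
    rw [charB, charB, Finset.sum_mul_sum, Finset.sum_mul]
    refine Finset.sum_congr rfl fun m _ => ?_
    rw [Finset.sum_mul]
    refine Finset.sum_congr rfl fun n _ => ?_
    rw [MulChar.inv_apply', map_mul]; ring
  simp_rw [h1]
  rw [Finset.sum_comm, dedekindSum_eq]
  push_cast
  rw [Finset.mul_sum]
  refine Finset.sum_congr rfl fun m _ => ?_
  rw [Finset.sum_comm]
  have h2 : ∀ n : ZMod q, ∑ χ : DirichletCharacter ℂ q, (sawB m : ℂ) * sawB n * (χ n⁻¹ * χ (a * m))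
      = if n = a * m then (sawB m : ℂ) * sawB n * q.totient else 0 := by
    intro n
    by_cases hn : n = 0
    · subst hn; simp [sawB_zero]
    · rw [← Finset.mul_sum, DirichletCharacter.sum_char_inv_mul_char_eq ℂ (isUnit_iff_ne_zero.mpr hn)]
      split_ifs <;> simp
  simp_rw [h2]
  simp
  ring

lemma norm_LFunction_one (hq : q.Prime) {χ : DirichletCharacter ℂ q} (hχ : χ ≠ 1)
    (hodd : χ (-1) = -1) :
    ((‖DirichletCharacter.LFunction χ 1‖ ^ 2 : ℝ) : ℂ) = (π : ℂ) ^ 2 / q * (charB χ * charB χ⁻¹) := by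
  have : Fact q.Prime := ⟨hq⟩
  have hq0 : (0 : ℝ) < q := by exact_mod_cast hq.pos
  have hodd' : χ.Odd := hodd
  have hinvodd : (χ⁻¹).Odd := by
    change χ⁻¹ (-1) = -1
    rw [MulChar.inv_apply']; simpa using hodd
  have hinv1 : χ⁻¹ ≠ 1 := by simpa using hχ
  have hprim : χ.IsPrimitive := by
    rcases (Nat.dvd_prime hq).mp χ.conductor_dvd_level with h | h
    · exact absurd ((DirichletCharacter.eq_one_iff_conductor_eq_one).mpr h) hχ
    · exact h
  have hfe := hprim.completedLFunction_one_sub 0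
  have e1 := DirichletCharacter.LFunction_eq_completed_div_gammaFactor χ 1 (Or.inl one_ne_zero)
  have e2 := DirichletCharacter.LFunction_eq_completed_div_gammaFactor χ⁻¹ 0 (Or.inr hq.ne_one)
  have g2 : Complex.Gammaℝ (1 + 1) = (π : ℂ)⁻¹ := by
    rw [Complex.Gammaℝ]; norm_num [Complex.cpow_neg_one]
  rw [hodd'.gammaFactor_def, g2] at e1
  rw [hinvodd.gammaFactor_def, zero_add, Complex.Gammaℝ_one, div_one,
    LFunction_zero_eq hq.ne_one hinv1] at e2
  rw [sub_zero, ← e2] at hfe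
  rw [hfe] at e1
  have hG : ‖gaussSum χ (ZMod.stdAddChar (N := q))‖ ^ 2 = q := by
    have h := gaussSum_mul_gaussSum_eq_card hχ (ZMod.isPrimitive_stdAddChar q)
    rw [← star_gaussSum_eq, ZMod.card] at h
    have h' : ((‖gaussSum χ (ZMod.stdAddChar (N := q))‖ ^ 2 : ℝ) : ℂ) = (q : ℂ) := by
      rw [← h, Complex.ofReal_pow, ← Complex.mul_conj']; rfl
    exact_mod_cast h'
  have hroot : ‖χ.rootNumber‖ ^ 2 = 1 := by
    rw [DirichletCharacter.rootNumber, norm_div, norm_div, div_pow, div_pow, hG, norm_pow,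
      Complex.norm_I, one_pow, one_pow, div_one, Complex.norm_natCast_cpow_of_pos hq.pos,
      ← Real.rpow_natCast, ← Real.rpow_mul hq0.le]
    norm_num
  have hmain : ‖DirichletCharacter.LFunction χ 1‖ ^ 2 = π ^ 2 / q * ‖charB χ‖ ^ 2 := by
    rw [e1]
    rw [norm_div, norm_mul, norm_mul, div_pow, mul_pow, mul_pow, hroot, norm_neg, charB_inv,
      RCLike.norm_conj, norm_inv, Complex.norm_real, Complex.norm_natCast_cpow_of_pos hq.pos,
      ← Real.rpow_natCast, ← Real.rpow_mul hq0.le, Real.norm_eq_abs, inv_pow, sq_abs]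
    norm_num [Real.rpow_neg_one]
    ring
  rw [hmain, charB_inv, Complex.mul_conj']
  push_cast; ring

end Dedekind

open scoped Classical in
/-- Corollary 7, equation (1.4): moments of Dirichlet `L`-functions at `0` and `1`
and Dedekind sums. -/
theorem moments_eq_dedekind_sum (q : ℕ) (hq : q.Prime) (a : ℤ)
    (hco : IsCoprime a (q : ℤ)) :
    haveI : NeZero q := ⟨hq.ne_zero⟩
    ((1 / (Nat.totient q : ℂ)) *
        (∑ χ : DirichletCharacter ℂ q, if χ = 1 then 0 else
          χ.LFunction 0 *
            DirichletCharacter.LFunction (χ.ringHomComp (starRingEnd ℂ)) 0 *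
            χ (a : ZMod q))
      = (dedekindSum a q : ℂ)) ∧
    ((1 / (π^2 : ℂ)) * ((q : ℂ) / (Nat.totient q : ℂ)) *
        (∑ χ : DirichletCharacter ℂ q,
          if χ ≠ 1 ∧ χ (-1 : ZMod q) = -1 then
            (‖χ.LFunction 1‖^2 : ℂ) * χ (a : ZMod q)
          else 0)
      = (dedekindSum a q : ℂ)) := by
  have : NeZero q := ⟨hq.ne_zero⟩
  have hφ : (q.totient : ℂ) ≠ 0 := by
    exact_mod_cast (Nat.totient_pos.mpr hq.pos).ne'
  have hq0 : (q : ℂ) ≠ 0 := by exact_mod_cast hq.ne_zero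
  have hπ : (π : ℂ) ≠ 0 := by exact_mod_cast Real.pi_ne_zero
  have hone : charB (1 : DirichletCharacter ℂ q) = 0 :=
    charB_even (MulChar.one_apply (by simp))
  constructor
  · have h : ∀ χ : DirichletCharacter ℂ q, (if χ = 1 then 0 else
          χ.LFunction 0 *
            DirichletCharacter.LFunction (χ.ringHomComp (starRingEnd ℂ)) 0 *
            χ (a : ZMod q)) = charB χ * charB χ⁻¹ * χ (a : ZMod q) := by
      intro χ
      split_ifs with hχ
      · rw [hχ, hone]; simp
      · rw [ringHomComp_conj, LFunction_zero_eq hq.ne_one hχ,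
          LFunction_zero_eq hq.ne_one (by simpa using hχ : χ⁻¹ ≠ 1)]
        ring
    rw [Finset.sum_congr rfl fun χ _ => h χ, sum_charB hq]
    field_simp
  · have h : ∀ χ : DirichletCharacter ℂ q, (if χ ≠ 1 ∧ χ (-1 : ZMod q) = -1 then
            (‖χ.LFunction 1‖^2 : ℂ) * χ (a : ZMod q)
          else 0) = (π : ℂ) ^ 2 / q * (charB χ * charB χ⁻¹ * χ (a : ZMod q)) := by
      intro χ
      split_ifs with hχ
      · have := norm_LFunction_one hq hχ.1 hχ.2
        push_cast at this
        rw [this]; ring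
      · have : charB χ = 0 := by
          by_cases h1 : χ = 1
          · rw [h1, hone]
          · rcases χ.even_or_odd with he | ho
            · exact charB_even he
            · exact absurd ⟨h1, ho⟩ hχ
        rw [this]; simp
    rw [Finset.sum_congr rfl fun χ _ => h χ, ← Finset.mul_sum, sum_charB hq]
    field_simp
end

section
/- Let q be a prime and a an integer coprime to q. Then (q/φ(q)) Σ*_{χ mod q, χ(−1)=−1} L(1, conj χ)·L(0, χ)·χ(a mod q) = (π/2)·c_0(a/q), where Σ* runs over the primitive (equivalently, nontrivial) Dirichlet characters modulo q with χ(−1) = −1. -/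
open Complex Real Finset

/-- The cotangent sum `c_0(h/k) = -∑_{m=1}^{k-1} (m/k) cot(πmh/k)`. -/
noncomputable def cotSum (h : ℤ) (k : ℕ) : ℝ :=
  -∑ m ∈ Finset.Icc 1 (k-1), ((m : ℝ)/k) * Real.cot (π * m * h / k)

open Filter Topology in
lemma rpow_diff_bound {d x y s : ℝ} (hd : 0 < d) (hd1 : d ≤ 1) (n : ℕ)
    (hx : n + d ≤ x) (hy : n + d ≤ y) (hxy : |x - y| ≤ 1) (hs1 : 1 ≤ s) (hs2 : s ≤ 2) :
    |x ^ (-s) - y ^ (-s)| ≤ (2 / d) * (1 / |(n : ℝ) + d| ^ (2:ℝ)) := by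
  have hn : (0:ℝ) ≤ n := n.cast_nonneg
  have key : ∀ z ∈ Set.Ici ((n:ℝ) + d), ‖-s * z ^ (-s - 1)‖ ≤ (2 / d) * (1 / |(n : ℝ) + d| ^ (2:ℝ)) := by
    intro z hz
    have hz' : (n:ℝ) + d ≤ z := hz
    have hz0 : 0 < z := by linarith
    rw [norm_mul, norm_neg, Real.norm_of_nonneg (by linarith), Real.norm_of_nonneg (by positivity),
      abs_of_pos (by linarith)]
    have h1 : z ^ (-s - 1) ≤ ((n:ℝ) + d) ^ (-s - 1) :=
      Real.rpow_le_rpow_of_nonpos (by linarith) hz' (by linarith)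
    have h2 : ((n:ℝ) + d) ^ (-s - 1) ≤ (1 / d) * (1 / ((n : ℝ) + d) ^ (2:ℝ)) := by
      have e : ((n:ℝ) + d) = d * (((n:ℝ) + d) / d) := by field_simp
      have h3 : (((n:ℝ) + d) / d) ^ (-s - 1) ≤ (((n:ℝ) + d) / d) ^ (-2 : ℝ) :=
        Real.rpow_le_rpow_of_exponent_le (by rw [le_div_iff₀ hd]; linarith) (by linarith)
      have h4 : d ^ (-s - 1) ≤ d ^ (-3 : ℝ) :=
        Real.rpow_le_rpow_of_exponent_ge hd hd1 (by linarith)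
      calc ((n:ℝ) + d) ^ (-s - 1) = d ^ (-s - 1) * (((n:ℝ) + d) / d) ^ (-s - 1) := by
            rw [← Real.mul_rpow hd.le (by positivity), ← e]
        _ ≤ d ^ (-3 : ℝ) * (((n:ℝ) + d) / d) ^ (-2 : ℝ) := by gcongr
        _ = _ := by
            rw [Real.rpow_neg hd.le, Real.rpow_neg (by positivity)]
            norm_cast
            field_simp
    calc s * z ^ (-s - 1) ≤ 2 * ((1 / d) * (1 / ((n : ℝ) + d) ^ (2:ℝ))) := by
          gcongr
          exact h1.trans h2
      _ = _ := by ring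
  have := Convex.norm_image_sub_le_of_norm_hasDerivWithin_le (f := fun z : ℝ => z ^ (-s))
    (f' := fun z => -s * z ^ (-s - 1)) (s := Set.Ici ((n:ℝ) + d)) (x := y) (y := x)
    (C := (2 / d) * (1 / |(n : ℝ) + d| ^ (2:ℝ)))
    (fun z hz => (Real.hasDerivAt_rpow_const (Or.inl (by
      have hz' : (n:ℝ) + d ≤ z := hz
      linarith))).hasDerivWithinAt) key (convex_Ici _) hy hx
  refine this.trans ?_
  exact mul_le_of_le_one_right (by positivity) hxy

lemma term_eq {x y s : ℝ} (hx : 0 < x) (hy : 0 < y) :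
    (1 / (x : ℂ) ^ (s : ℂ) - 1 / (y : ℂ) ^ (s : ℂ)) / 2 =
      (((x ^ (-s) - y ^ (-s)) / 2 : ℝ) : ℂ) := by
  rw [← Complex.ofReal_cpow hx.le, ← Complex.ofReal_cpow hy.le, Real.rpow_neg hx.le,
    Real.rpow_neg hy.le]
  push_cast
  ring

open Filter Topology HurwitzZeta in
lemma hurwitzZetaOdd_one {a : ℝ} (h0 : 0 < a) (h1 : a < 1) :
    hurwitzZetaOdd (a : UnitAddCircle) 1 = (π / 2 : ℂ) * (Real.cot (π * a) : ℂ) := by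
  set d : ℝ := min a (1 - a) with hd
  have hd0 : 0 < d := lt_min h0 (by linarith)
  have hda : d ≤ a := min_le_left _ _
  have hdb : d ≤ 1 - a := min_le_right _ _
  set f : ℝ → ℕ → ℂ := fun s n => ((((n + a : ℝ) ^ (-s) - (n + 1 - a : ℝ) ^ (-s)) / 2 : ℝ) : ℂ)
    with hf
  set B : ℕ → ℝ := fun n => (2 / d) * (1 / |(n : ℝ) + d| ^ (2:ℝ)) with hB
  have hBs : Summable B :=
    ((Real.summable_one_div_nat_add_rpow d 2).2 (by norm_num)).mul_left _
  have hbound : ∀ s : ℝ, 1 ≤ s → s ≤ 2 → ∀ n, ‖f s n‖ ≤ B n := by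
    intro s hs1 hs2 n
    have := rpow_diff_bound hd0 (by linarith) n (x := n + a) (y := n + 1 - a) (s := s)
      (by linarith) (by linarith) (by rw [abs_le]; constructor <;> linarith) hs1 hs2
    simp only [hf, Complex.norm_real, Real.norm_eq_abs, abs_div, abs_two]
    have h := abs_nonneg ((n + a : ℝ) ^ (-s) - (n + 1 - a : ℝ) ^ (-s))
    simp only [hB]
    linarith
  have hpos : ∀ n : ℕ, (0:ℝ) < n + a ∧ (0:ℝ) < n + 1 - a := fun n => by
    have := n.cast_nonneg (α := ℝ)
    constructor <;> linarith
  have hsum : ∀ s : ℝ, 1 < s → ∑' n, f s n = hurwitzZetaOdd (a : UnitAddCircle) s := by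
    intro s hs
    rw [← (hasSum_nat_hurwitzZetaOdd_of_mem_Icc (a := a) ⟨h0.le, h1.le⟩ (s := s)
      (by simpa using hs)).tsum_eq]
    refine tsum_congr fun n => ?_
    rw [hf]
    simp only
    rw [← term_eq (hpos n).1 (hpos n).2]
    push_cast
    rfl
  have hlim1 : Tendsto (fun s : ℝ => ∑' n, f s n) (𝓝[>] 1) (𝓝 (∑' n, f 1 n)) := by
    refine tendsto_tsum_of_dominated_convergence hBs ?_ ?_
    · intro n
      have hc : ContinuousAt (fun s : ℝ => f s n) 1 := by
        have e1 := (hpos n).1.ne'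
        have e2 := (hpos n).2.ne'
        simp only [hf]
        refine Complex.continuous_ofReal.continuousAt.comp ?_
        refine ContinuousAt.div_const (ContinuousAt.sub ?_ ?_) _
        · exact (Real.continuousAt_const_rpow e1).comp continuous_neg.continuousAt
        · exact (Real.continuousAt_const_rpow e2).comp continuous_neg.continuousAt
      exact hc.tendsto.mono_left nhdsWithin_le_nhds
    · have : Set.Ioc (1:ℝ) 2 ∈ 𝓝[>] (1:ℝ) := Ioc_mem_nhdsGT (by norm_num)
      filter_upwards [this] with s hs n
      exact hbound s hs.1.le hs.2 n
  have hlim2 : Tendsto (fun s : ℝ => ∑' n, f s n) (𝓝[>] 1)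
      (𝓝 (hurwitzZetaOdd (a : UnitAddCircle) 1)) := by
    have hc : Tendsto (fun s : ℝ => hurwitzZetaOdd (a : UnitAddCircle) (s : ℂ)) (𝓝[>] 1)
        (𝓝 (hurwitzZetaOdd (a : UnitAddCircle) ((1 : ℝ) : ℂ))) :=
      (((differentiable_hurwitzZetaOdd (a : UnitAddCircle)).continuous.comp
        Complex.continuous_ofReal).tendsto 1).mono_left nhdsWithin_le_nhds
    rw [Complex.ofReal_one] at hc
    refine hc.congr' ?_
    filter_upwards [self_mem_nhdsWithin] with s hs
    exact (hsum s hs).symm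
  rw [tendsto_nhds_unique hlim2 hlim1]
  have hs1 : Summable (f 1) := Summable.of_norm_bounded hBs (hbound 1 le_rfl (by norm_num))
  have haZ : (a : ℂ) ∈ Complex.integerComplement := by
    rintro ⟨m, hm⟩
    have hm' : (m : ℝ) = a := by exact_mod_cast hm
    rw [← hm'] at h0 h1
    have e1 : 0 < m := by exact_mod_cast h0
    have e2 : m < 1 := by exact_mod_cast h1
    omega
  have hcot := tendsto_logDeriv_euler_cot_sub haZ
  have ht : Tendsto (fun N : ℕ => 1 / (a : ℂ) - 1 / ((N : ℂ) + a)) atTop (𝓝 (1 / (a : ℂ) - 0)) := by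
    refine tendsto_const_nhds.sub ?_
    have : Tendsto (fun N : ℕ => (1 / ((N : ℝ) + a))) atTop (𝓝 0) := by
      simp_rw [one_div]
      exact tendsto_inv_atTop_zero.comp
        (tendsto_atTop_add_const_right _ _ tendsto_natCast_atTop_atTop)
    have := (Complex.continuous_ofReal.tendsto 0).comp this
    refine (this.congr fun N => ?_)
    simp
  have hps : ∀ N : ℕ, (∑ n ∈ Finset.range N, cotTerm (a : ℂ) n + (1 / (a : ℂ) - 1 / ((N : ℂ) + a))) / 2
      = ∑ n ∈ Finset.range N, f 1 n := by
    intro N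
    induction N with
    | zero => simp
    | succ N ih =>
      rw [Finset.sum_range_succ, Finset.sum_range_succ, ← ih]
      simp only [hf, cotTerm, Real.rpow_neg_one]
      have e1 : ((a : ℂ) - (N + 1)) = -((N : ℂ) + 1 - a) := by ring
      rw [e1]
      push_cast
      simp only [one_div, inv_neg]
      rw [show (a : ℂ) + (N + 1) = N + 1 + a by ring]
      ring
  have h3 := ((hcot.add ht).div_const 2).congr hps
  rw [tendsto_nhds_unique hs1.hasSum.tendsto_sum_nat h3]
  push_cast
  ring

/-- The cotangent as a function on `ZMod N`. -/
noncomputable def ct (N : ℕ) (j : ZMod N) : ℂ := (Real.cot (π * j.val / N) : ℂ)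

lemma ct_intCast (N : ℕ) [NeZero N] (m : ℤ) :
    ct N (m : ZMod N) = (Real.cot (π * m / N) : ℂ) := by
  have hN : (N : ℝ) ≠ 0 := NeZero.ne _
  have h : ((m : ZMod N).val : ℤ) = m - N * (m / N) := by
    rw [ZMod.val_intCast]
    have := Int.emod_add_mul_ediv m N
    linarith
  have h' : ((m : ZMod N).val : ℝ) = m - N * ((m / N : ℤ) : ℝ) := by exact_mod_cast h
  rw [ct, ← Real.tan_inv_eq_cot, ← Real.tan_inv_eq_cot, h']
  have : π * (m - N * ((m / N : ℤ) : ℝ)) / N = π * m / N - ((m / N : ℤ) : ℝ) * π := by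
    field_simp
  rw [this, Real.tan_sub_int_mul_pi]

lemma ct_odd (N : ℕ) [NeZero N] : (ct N).Odd := by
  intro j
  have h : j = ((j.val : ℤ) : ZMod N) := by simp
  have h2 : -j = ((-(j.val : ℤ) : ℤ) : ZMod N) := by simp
  rw [h2, ct_intCast]
  nth_rw 2 [h]
  rw [ct_intCast, ← Real.tan_inv_eq_cot, ← Real.tan_inv_eq_cot]
  push_cast
  rw [mul_neg, neg_div, Complex.tan_neg, inv_neg]

lemma ct_zero (N : ℕ) [NeZero N] : ct N 0 = 0 := (ct_odd N).map_zero

lemma ct_mul (N : ℕ) [NeZero N] {k : ZMod N} (hk : k ≠ 0) :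
    (ZMod.stdAddChar k - 1) * ct N k = I * (ZMod.stdAddChar k + 1) := by
  have hne : (ZMod.stdAddChar k : ℂ) ≠ 1 := by
    intro h
    apply hk
    apply ZMod.injective_stdAddChar
    rw [h, AddChar.map_zero_eq_one]
  have e : (ZMod.stdAddChar k : ℂ) = Complex.exp (2 * I * ((π * k.val / N : ℝ) : ℂ)) := by
    rw [ZMod.stdAddChar_apply, ZMod.toCircle_apply]
    congr 1
    push_cast
    ring
  rw [ct, Complex.ofReal_cot, Complex.cot_eq_exp_ratio, ← e]
  have : (1 : ℂ) - ZMod.stdAddChar k ≠ 0 := sub_ne_zero.2 hne.symm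
  field_simp
  rw [I_sq]
  ring

lemma sum_stdAddChar_ne_zero (N : ℕ) [NeZero N] (j : ZMod N) :
    ∑ k ∈ univ.erase (0 : ZMod N), (ZMod.stdAddChar (k * j) : ℂ) = (if j = 0 then (N : ℂ) else 0) - 1 := by
  have h := AddChar.sum_mulShift j (ZMod.isPrimitive_stdAddChar N)
  rw [← Finset.add_sum_erase _ _ (Finset.mem_univ (0 : ZMod N))] at h
  simp only [zero_mul, AddChar.map_zero_eq_one, ZMod.card] at h
  rw [eq_sub_iff_add_eq, add_comm, h]
  split_ifs <;> simp

/-- The discrete Fourier transform of the cotangent. -/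
noncomputable def dT (N : ℕ) [NeZero N] (j : ZMod N) : ℂ :=
  ∑ k : ZMod N, (ZMod.stdAddChar (k * j) : ℂ) * ct N k

lemma dT_succ (N : ℕ) [NeZero N] (j : ZMod N) :
    dT N (j + 1) - dT N j = I * ((if j + 1 = 0 then (N : ℂ) else 0) + (if j = 0 then (N : ℂ) else 0) - 2) := by
  have : dT N (j + 1) - dT N j = ∑ k ∈ univ.erase (0 : ZMod N),
      I * ((ZMod.stdAddChar (k * (j + 1)) : ℂ) + ZMod.stdAddChar (k * j)) := by
    rw [dT, dT, ← Finset.sum_sub_distrib, ← Finset.add_sum_erase _ _ (Finset.mem_univ (0 : ZMod N))]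
    simp only [ct_zero, mul_zero, sub_zero, zero_add]
    refine Finset.sum_congr rfl fun k hk => ?_
    have := ct_mul N (Finset.ne_of_mem_erase hk)
    rw [mul_add, mul_one, AddChar.map_add_eq_mul]
    linear_combination (ZMod.stdAddChar (k * j) : ℂ) * this
  rw [this, ← Finset.mul_sum, Finset.sum_add_distrib, sum_stdAddChar_ne_zero, sum_stdAddChar_ne_zero]
  ring

lemma dT_zero (N : ℕ) [NeZero N] : dT N 0 = 0 := by
  simp only [dT, mul_zero, AddChar.map_zero_eq_one, one_mul]
  exact (ct_odd N).sum_eq_zero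

lemma dT_nat (N : ℕ) [NeZero N] (j : ℕ) (hj : j + 1 < N) :
    dT N ((j + 1 : ℕ) : ZMod N) = I * (N - 2 * ((j + 1 : ℕ) : ℂ)) := by
  have hne : ∀ i : ℕ, 0 < i → i < N → (i : ZMod N) ≠ 0 := fun i h0 hi h => by
    rw [ZMod.natCast_eq_zero_iff] at h
    exact absurd (Nat.le_of_dvd h0 h) (by omega)
  induction j with
  | zero =>
    have h := dT_succ N 0
    rw [dT_zero, zero_add, if_neg (by simpa using hne 1 one_pos hj)] at h
    simp only [zero_add, Nat.cast_one]
    simp at h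
    rw [h]
    ring
  | succ j ih =>
    have h := dT_succ N ((j + 1 : ℕ) : ZMod N)
    rw [ih (by omega), if_neg (by exact_mod_cast hne (j + 1 + 1) (by omega) hj),
      if_neg (hne (j + 1) (by omega) (by omega))] at h
    rw [Nat.cast_add (j+1) 1, Nat.cast_one]
    push_cast at h ⊢
    linear_combination h

lemma dT_val (N : ℕ) [NeZero N] {j : ZMod N} (hj : j ≠ 0) :
    dT N j = I * (N - 2 * (j.val : ℂ)) := by
  have h0 : j.val ≠ 0 := by simpa using hj
  have hlt := ZMod.val_lt j
  have h := dT_nat N (j.val - 1) (by omega)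
  rw [Nat.sub_add_cancel (by omega)] at h
  simpa using h

lemma LFunction_one_odd (N : ℕ) [NeZero N] {Φ : ZMod N → ℂ} (hΦ : Φ.Odd) :
    ZMod.LFunction Φ 1 = (π / (2 * N) : ℂ) * ∑ j, Φ j * ct N j := by
  have hN : (0 : ℝ) < N := Nat.cast_pos.2 (NeZero.pos N)
  rw [ZMod.LFunction_def_odd hΦ, Finset.mul_sum, Finset.mul_sum]
  refine Finset.sum_congr rfl fun j _ => ?_
  by_cases hj : j = 0
  · simp [hj, hΦ.map_zero]
  have h0 : 0 < j.val := Nat.pos_of_ne_zero (by simpa using hj)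
  rw [ZMod.toAddCircle_apply, hurwitzZetaOdd_one (by positivity)
    (by rw [div_lt_one hN]; exact_mod_cast ZMod.val_lt j), Complex.cpow_neg_one, ct, mul_div_assoc]
  have : (N : ℂ) ≠ 0 := NeZero.ne _
  field_simp

open scoped ZMod in
lemma LFunction_zero_odd (N : ℕ) [NeZero N] {Φ : ZMod N → ℂ} (hΦ : Φ.Odd) :
    ZMod.LFunction Φ 0 = -∑ j, Φ j * ((j.val : ℂ) / N) := by
  have hN : (N : ℂ) ≠ 0 := NeZero.ne _
  have hpi : (π : ℂ) ≠ 0 := by exact_mod_cast Real.pi_ne_zero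
  have h := ZMod.LFunction_one_sub Φ (s := 1) (fun n hn => by
    have : ((1 + n : ℕ) : ℂ) = 0 := by push_cast; rw [hn]; ring
    rw [Nat.cast_eq_zero] at this
    omega) (Or.inl hΦ.map_zero)
  have hodd1 : (ZMod.dft Φ).Odd := ZMod.dft_odd_iff.2 hΦ
  have hodd2 : (ZMod.dft fun x => Φ (-x)).Odd := ZMod.dft_odd_iff.2 (fun x => by
    rw [hΦ (-x)])
  have e1 : ∑ j, ZMod.dft Φ j * ct N j = -∑ j, Φ j * dT N j := by
    simp only [ZMod.dft_apply, smul_eq_mul, Finset.sum_mul, dT, Finset.mul_sum]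
    rw [Finset.sum_comm, ← Finset.sum_neg_distrib]
    refine Finset.sum_congr rfl fun j _ => ?_
    rw [← (Equiv.neg (ZMod N)).sum_comp _ _ (by simp), ← Finset.sum_neg_distrib]
    refine Finset.sum_congr rfl fun k _ => ?_
    simp only [Equiv.neg_apply, mul_neg, neg_neg]
    rw [ct_odd, mul_comm j k]
    ring
  have e2 : ∑ j, ZMod.dft (fun x => Φ (-x)) j * ct N j = ∑ j, Φ j * dT N j := by
    have : (fun x => Φ (-x)) = -Φ := by ext x; exact hΦ x
    rw [this, map_neg]
    simp only [Pi.neg_apply, neg_mul, Finset.sum_neg_distrib, e1, neg_neg]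
  rw [LFunction_one_odd N hodd1, LFunction_one_odd N hodd2, e1, e2] at h
  have x1 : Complex.exp (π * I * 1 / 2) = I := by
    rw [show (π * I * 1 / 2 : ℂ) = π / 2 * I by ring, Complex.exp_pi_div_two_mul_I]
  have x2 : Complex.exp (-π * I * 1 / 2) = -I := by
    rw [show (-π * I * 1 / 2 : ℂ) = -π / 2 * I by ring, Complex.exp_neg_pi_div_two_mul_I]
  have e3 : ∑ j, Φ j * dT N j = -(2 * I) * ∑ j, Φ j * (j.val : ℂ) := by
    have : ∀ j, Φ j * dT N j = I * N * Φ j + -(2 * I) * (Φ j * (j.val : ℂ)) := by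
      intro j
      by_cases hj : j = 0
      · simp [hj, hΦ.map_zero]
      · rw [dT_val N hj]
        ring
    simp only [this, Finset.sum_add_distrib, ← Finset.mul_sum, hΦ.sum_eq_zero]
    ring
  rw [x1, x2, e3, sub_self, Complex.cpow_zero, Complex.cpow_neg_one, Complex.Gamma_one] at h
  rw [h]
  simp only [← mul_div_assoc, ← Finset.sum_div]
  field_simp
  rw [I_sq]
  ring

lemma star_apply (q : ℕ) (χ : DirichletCharacter ℂ q) {m : ZMod q} (hm : IsUnit m) :
    χ.ringHomComp (starRingEnd ℂ) m = χ m⁻¹ := by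
  rw [MulChar.ringHomComp_apply, starRingEnd_apply, MulChar.star_apply', MulChar.inv_apply]
  obtain ⟨u, rfl⟩ := hm
  rw [Ring.inverse_unit, ZMod.inv_coe_unit]

open scoped Classical in
/-- Corollary 7, equation (1.5): a moment of Dirichlet `L`-functions and the
cotangent sum `c_0`. -/
theorem moment_eq_cotangent_sum (q : ℕ) (hq : q.Prime) (a : ℤ)
    (hco : IsCoprime a (q : ℤ)) :
    haveI : NeZero q := ⟨hq.ne_zero⟩
    ((q : ℂ) / (Nat.totient q : ℂ)) *
        (∑ χ : DirichletCharacter ℂ q,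
          if χ ≠ 1 ∧ χ (-1 : ZMod q) = -1 then
            DirichletCharacter.LFunction (χ.ringHomComp (starRingEnd ℂ)) 1 *
              χ.LFunction 0 * χ (a : ZMod q)
          else 0)
      = (π/2 : ℂ) * (cotSum a q : ℂ) := by
  have : NeZero q := ⟨hq.ne_zero⟩
  have : Fact q.Prime := ⟨hq⟩
  have hqc : (q : ℂ) ≠ 0 := NeZero.ne _
  have hphi : (Nat.totient q : ℂ) ≠ 0 := by
    exact_mod_cast (Nat.totient_pos.2 hq.pos).ne'
  have ha : (a : ZMod q) ≠ 0 := by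
    intro h
    rw [ZMod.intCast_zmod_eq_zero_iff_dvd] at h
    have hu := hco.isUnit_of_dvd' h dvd_rfl
    rw [Int.isUnit_iff_natAbs_eq, Int.natAbs_natCast] at hu
    exact hq.one_lt.ne' hu
  have hterm : ∀ χ : DirichletCharacter ℂ q,
      (if χ ≠ 1 ∧ χ (-1 : ZMod q) = -1 then
            DirichletCharacter.LFunction (χ.ringHomComp (starRingEnd ℂ)) 1 *
              χ.LFunction 0 * χ (a : ZMod q)
          else 0) = ∑ n : ZMod q, ∑ m : ZMod q,
          (-(π / (2 * q)) * ct q m * (n.val / q) / 2) *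
            ((if IsUnit m then χ m⁻¹ * χ (n * a) else 0)
              - (if IsUnit m then χ m⁻¹ * χ (-(n * a)) else 0)) := by
    intro χ
    have hsgn : ∀ x, χ (-x) = χ (-1) * χ x := fun x => by rw [← map_mul, neg_one_mul]
    have hpm : χ (-1) = 1 ∨ χ (-1) = -1 := by
      have : χ (-1) * χ (-1) = 1 := by rw [← map_mul]; simp
      exact mul_self_eq_one_iff.1 this
    rcases hpm with h1 | h1
    · rw [if_neg]
      · have hev : ∀ x, χ (-x) = χ x := fun x => by rw [hsgn, h1, one_mul]
        simp only [hev, sub_self, mul_zero, Finset.sum_const_zero]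
      · rintro ⟨-, h⟩
        rw [h1] at h
        norm_num at h
    · have hne : χ ≠ 1 := by
        rintro rfl
        rw [MulChar.one_apply (by simp)] at h1
        norm_num at h1
      rw [if_pos ⟨hne, h1⟩]
      have o1 : (χ : ZMod q → ℂ).Odd := fun x => by rw [hsgn, h1, neg_one_mul]
      have o2 : ((χ.ringHomComp (starRingEnd ℂ)) : ZMod q → ℂ).Odd := fun x => by
        simp only [MulChar.ringHomComp_apply, o1 x, map_neg]
      rw [DirichletCharacter.LFunction, DirichletCharacter.LFunction, LFunction_one_odd q o2,
        LFunction_zero_odd q o1]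
      have : ∀ m : ZMod q, χ.ringHomComp (starRingEnd ℂ) m = if IsUnit m then χ m⁻¹ else 0 := by
        intro m
        split_ifs with hm
        · exact star_apply q χ hm
        · exact MulChar.map_nonunit _ hm
      simp only [this]
      rw [mul_neg, neg_mul, mul_assoc, mul_assoc, mul_comm (∑ j, _) (_ * _), Finset.sum_mul, Finset.sum_mul,
        Finset.mul_sum, ← Finset.sum_neg_distrib]
      refine Finset.sum_congr rfl fun n _ => ?_
      rw [Finset.mul_sum, Finset.mul_sum, ← Finset.sum_neg_distrib]
      refine Finset.sum_congr rfl fun m _ => ?_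
      rw [hsgn, h1, map_mul]
      split_ifs <;> ring
  rw [Finset.sum_congr rfl fun χ _ => hterm χ, Finset.sum_comm]
  have horth : ∀ m b : ZMod q, b ≠ 0 → ∑ χ : DirichletCharacter ℂ q,
      (if IsUnit m then χ m⁻¹ * χ b else 0) = if m = b then (q.totient : ℂ) else 0 := by
    intro m b hb
    split_ifs with h1 h2 h2
    · rw [DirichletCharacter.sum_char_inv_mul_char_eq ℂ h1, if_pos h2]
    · rw [DirichletCharacter.sum_char_inv_mul_char_eq ℂ h1, if_neg h2]
    · exact absurd (h2 ▸ isUnit_iff_ne_zero.2 hb) h1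
    · simp
  have hinner : ∀ n : ZMod q, ∑ χ : DirichletCharacter ℂ q, ∑ m : ZMod q,
          (-(π / (2 * q)) * ct q m * (n.val / q) / 2) *
            ((if IsUnit m then χ m⁻¹ * χ (n * a) else 0)
              - (if IsUnit m then χ m⁻¹ * χ (-(n * a)) else 0)) =
        -(π / (2 * q)) * q.totient * ((n.val / q) * ct q (n * a)) := by
    intro n
    by_cases hn : n = 0
    · simp [hn]
    have hna : n * a ≠ 0 := mul_ne_zero hn ha
    rw [Finset.sum_comm]
    simp only [← Finset.mul_sum, Finset.sum_sub_distrib, horth _ _ hna, horth _ _ (neg_ne_zero.2 hna)]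
    simp only [mul_sub, Finset.sum_sub_distrib, mul_ite, mul_zero, Finset.sum_ite_eq', Finset.mem_univ, if_true]
    rw [ct_odd]
    ring
  rw [Finset.sum_congr rfl fun n _ => hinner n, ← Finset.mul_sum]
  have hfin : ∑ n : ZMod q, ((n.val : ℂ) / q) * ct q (n * a) = -(cotSum a q : ℂ) := by
    have hr : ∑ n : ZMod q, ((n.val : ℂ) / q) * ct q (n * a) =
        ∑ m ∈ Finset.range q, ((m : ℂ) / q) * ct q ((m : ZMod q) * a) := by
      symm
      refine Finset.sum_bij' (fun m _ => (m : ZMod q)) (fun n _ => n.val) ?_ ?_ ?_ ?_ ?_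
      · intros; simp
      · intro n _; simpa using ZMod.val_lt n
      · intro m hm; exact ZMod.val_cast_of_lt (by simpa using hm)
      · intro n _; simp
      · intro m hm
        rw [ZMod.val_cast_of_lt (by simpa using hm)]
    have hI : Finset.range q = insert 0 (Finset.Icc 1 (q - 1)) := by
      ext x
      have := hq.pos
      simp only [Finset.mem_range, Finset.mem_insert, Finset.mem_Icc]
      omega
    rw [hr, hI, Finset.sum_insert (by simp), cotSum]
    push_cast
    rw [neg_neg, zero_div, zero_mul, zero_add]
    refine Finset.sum_congr rfl fun m _ => ?_
    have : ((m : ZMod q) * a) = ((m * a : ℤ) : ZMod q) := by push_cast; rfl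
    rw [this, ct_intCast]
    push_cast
    rw [mul_assoc]
  rw [hfin]
  field_simp
end

section
/- Let q be a positive integer, a an integer coprime to q, and s, z ∈ ℂ with 1 − Re(z) < Re(s) < Re(z). Then (1/q)·Σ_{ℓ=1}^{q} F(s−z, ℓ/q)·F(s+z, aℓ/q) = q^{z−s}·Γ(1−s+z)·(2π)^{s−1−z}·( e^{iπ(1−s+z)/2}·D(s+z, 2s−1; a/q) + e^{−iπ(1−s+z)/2}·D(s+z, 2s−1; −a/q) ), where both Estermann series on the right converge absolutely. -/
open Complex Real Finset HurwitzZeta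

/-- The `n`-th term of the Estermann series `D(u, α; x)`:
`e^{2πinx} σ_α(n) n^{-u}` (with value `0` at `n = 0`). -/
noncomputable def estTerm (u α : ℂ) (x : ℝ) (n : ℕ) : ℂ :=
  Complex.exp (2 * π * Complex.I * n * x) * (∑ d ∈ n.divisors, (d:ℂ)^α) * (n:ℂ)^(-u)


lemma aux_fiber {f : ℕ × ℕ → ℂ} {a : ℂ} (hf : HasSum f a)
    (h0 : ∀ p : ℕ × ℕ, p.1 * p.2 = 0 → f p = 0) :
    HasSum (fun n : ℕ => ∑ p ∈ n.divisorsAntidiagonal, f p) a := by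
  have h := hf.tsum_fiberwise (fun p : ℕ × ℕ => p.1 * p.2)
  refine h.congr_fun ?_
  intro n
  rcases eq_or_ne n 0 with rfl | hn
  · have : ∀ p : (fun p : ℕ × ℕ => p.1 * p.2) ⁻¹' {0}, f p.val = 0 := fun p => h0 _ p.2
    simp [this]
  · rw [show (fun p : ℕ × ℕ => p.1 * p.2) ⁻¹' {n} = n.divisorsAntidiagonal by ext; simp [hn],
      Finset.tsum_subtype' n.divisorsAntidiagonal f]

noncomputable def auxF (u w : ℂ) (x : ℝ) (p : ℕ × ℕ) : ℂ :=
  Complex.exp (2 * π * Complex.I * ((p.1 * p.2 : ℕ) : ℂ) * x) * ((p.1 : ℂ)^(-w) * (p.2 : ℂ)^(-u))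

lemma aux_sum_cpow {u : ℂ} (hu : 1 < u.re) : Summable (fun n : ℕ => ‖(n : ℂ)^(-u)‖) := by
  have := (Complex.summable_one_div_nat_cpow (p := u)).mpr hu
  simpa [Complex.cpow_neg] using this.norm

lemma aux_summable {u w : ℂ} (hu : 1 < u.re) (hw : 1 < w.re) (x : ℝ) :
    Summable (auxF u w x) := by
  refine Summable.of_norm ?_
  have h := (aux_sum_cpow hw).mul_of_nonneg (aux_sum_cpow hu)
    (fun _ => norm_nonneg _) (fun _ => norm_nonneg _)
  refine h.congr fun p => ?_
  rw [auxF, norm_mul, norm_mul]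
  have : 2 * π * Complex.I * ((p.1 * p.2 : ℕ) : ℂ) * x
      = ((2 * π * (p.1 * p.2 : ℕ) * x : ℝ) : ℂ) * Complex.I := by push_cast; ring
  rw [this, Complex.norm_exp_ofReal_mul_I, one_mul]

lemma aux_estTerm {u w : ℂ} (hu : 1 < u.re) (x : ℝ) (n : ℕ) :
    ∑ p ∈ n.divisorsAntidiagonal, auxF u w x p = estTerm u (u - w) x n := by
  rw [estTerm, ← Nat.sum_divisorsAntidiagonal (fun d _ => (d : ℂ)^(u - w)), Finset.mul_sum, Finset.sum_mul]
  refine Finset.sum_congr rfl fun p hp => ?_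
  obtain ⟨hp1, hp2⟩ := Nat.ne_zero_of_mem_divisorsAntidiagonal hp
  obtain ⟨rfl, hn⟩ := Nat.mem_divisorsAntidiagonal.mp hp
  have h1 : (p.1 : ℂ) ≠ 0 := Nat.cast_ne_zero.mpr hp1
  rw [auxF, Nat.cast_mul, Complex.natCast_mul_natCast_cpow, sub_eq_add_neg, Complex.cpow_add _ _ h1]
  have : (p.1 : ℂ)^u * (p.1 : ℂ)^(-u) = 1 := by rw [← Complex.cpow_add _ _ h1]; simp
  linear_combination (-(Complex.exp (2 * π * Complex.I * ((p.1 : ℂ) * p.2) * x) *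
    ((p.1 : ℂ)^(-w) * (p.2 : ℂ)^(-u)))) * this

lemma aux_hasSum {u w : ℂ} (hu : 1 < u.re) (hw : 1 < w.re) (x : ℝ) :
    HasSum (estTerm u (u - w) x)
      (∑' m : ℕ, (m : ℂ)^(-w) * expZeta ((m * x : ℝ) : UnitAddCircle) u) := by
  have hs := aux_summable hu hw x
  have hu0 : u ≠ 0 := by rintro rfl; simp at hu; linarith
  have hw0 : w ≠ 0 := by rintro rfl; simp at hw; linarith
  have h := aux_fiber hs.hasSum (by
    intro p hp
    rcases mul_eq_zero.mp hp with h | h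
    · simp [auxF, h, hw0]
    · simp [auxF, h, hu0])
  simp_rw [aux_estTerm hu] at h
  convert h using 1
  rw [hs.tsum_prod]
  congr 1
  ext m
  rw [← (hasSum_expZeta_of_one_lt_re (m * x) hu).tsum_eq, ← tsum_mul_left]
  congr 1
  ext n
  rw [auxF, Complex.cpow_neg (n : ℂ), div_eq_mul_inv]
  push_cast
  rw [show 2 * (π : ℂ) * Complex.I * (m * x) * n = 2 * π * Complex.I * (m * n) * x by ring]
  ring

lemma aux_hurwitz (q : ℕ) [NeZero q] (c : ℤ) {u w : ℂ} (hu : 1 < u.re) (hw : 1 < w.re) :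
    ∑ j : ZMod q, expZeta (ZMod.toAddCircle ((c : ZMod q) * j)) u * hurwitzZeta (ZMod.toAddCircle j) w
      = (q : ℂ)^w * ∑' n : ℕ, estTerm u (u - w) ((c : ℝ) / q) n := by
  have hq : (q : ℂ) ≠ 0 := Nat.cast_ne_zero.mpr (NeZero.ne q)
  have hw0 : w ≠ 0 := by rintro rfl; simp at hw; linarith
  have h := ZMod.LFunction_eq_LSeries
    (fun j : ZMod q => expZeta (ZMod.toAddCircle ((c : ZMod q) * j)) u) hw
  rw [(aux_hasSum hu hw _).tsum_eq]
  have h2 : LSeries (fun n : ℕ => expZeta (ZMod.toAddCircle ((c : ZMod q) * (n : ZMod q))) u) w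
      = ∑' m : ℕ, (m : ℂ)^(-w) * expZeta ((m * ((c : ℝ) / q) : ℝ) : UnitAddCircle) u := by
    rw [LSeries]
    congr 1
    ext m
    rw [LSeries.term_of_ne_zero' hw0, Complex.cpow_neg, div_eq_mul_inv, mul_comm]
    congr 2
    have := ZMod.toAddCircle_intCast (N := q) (c * m)
    push_cast at this
    rw [this]
    congr 1
    ring
  rw [← h2, ← h, ZMod.LFunction, ← mul_assoc, ← Complex.cpow_add _ _ hq]
  simp

lemma aux_sumIcc (q : ℕ) [NeZero q] (g : ZMod q → ℂ) :
    ∑ l ∈ Finset.Icc 1 q, g (l : ZMod q) = ∑ j : ZMod q, g j := by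
  obtain ⟨n, rfl⟩ : ∃ n, q = n + 1 := Nat.exists_eq_succ_of_ne_zero (NeZero.ne q)
  rw [← Equiv.sum_comp (Equiv.addRight (1 : ZMod (n + 1))) g, ← Finset.Ico_add_one_right_eq_Icc,
    Finset.sum_Ico_eq_sum_range]
  simp only [Nat.add_sub_cancel]
  rw [Finset.sum_range]
  refine Fintype.sum_congr _ _ fun (i : Fin (n+1)) => ?_
  congr 1
  have h : (((i : ℕ) : ZMod (n + 1))) = (i : ZMod (n + 1)) := Fin.cast_val_eq_self i
  exact (Nat.cast_add 1 (i : ℕ)).trans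
    ((congrArg₂ (· + ·) Nat.cast_one h).trans (add_comm _ _))

/-- Lemma 2 of the paper: the bilinear sum of periodic zeta functions in terms of the
Estermann function. -/
theorem periodic_zeta_sum_eq_estermann (q : ℕ) (hq : 0 < q) (a : ℤ)
    (hco : IsCoprime a (q : ℤ)) (s z : ℂ) (h1 : 1 - z.re < s.re) (h2 : s.re < z.re) :
    Summable (fun n : ℕ => ‖estTerm (s + z) (2*s - 1) ((a : ℝ)/q) n‖) ∧
    Summable (fun n : ℕ => ‖estTerm (s + z) (2*s - 1) (-((a : ℝ)/q)) n‖) ∧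
    (1/(q : ℂ)) * (∑ ℓ ∈ Finset.Icc 1 q,
        expZeta (((ℓ : ℝ)/q : ℝ) : UnitAddCircle) (s - z) *
          expZeta (((a : ℝ) * ℓ / q : ℝ) : UnitAddCircle) (s + z)) =
      (q : ℂ) ^ (z - s) * Complex.Gamma (1 - s + z) * (2 * π : ℂ) ^ (s - 1 - z) *
        (Complex.exp (π * Complex.I * (1 - s + z)/2) *
            (∑' n : ℕ, estTerm (s + z) (2*s - 1) ((a : ℝ)/q) n) +
          Complex.exp (-(π * Complex.I * (1 - s + z))/2) *
            (∑' n : ℕ, estTerm (s + z) (2*s - 1) (-((a : ℝ)/q)) n)) := by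
  have hu : 1 < (s + z).re := by simp; linarith
  have hw : 1 < (1 - s + z).re := by simp; linarith
  have hα : 2 * s - 1 = (s + z) - (1 - s + z) := by ring
  have : NeZero q := ⟨hq.ne'⟩
  have hq0 : (q : ℂ) ≠ 0 := Nat.cast_ne_zero.mpr hq.ne'
  rw [hα]
  refine ⟨(aux_hasSum hu hw _).summable.norm, (aux_hasSum hu hw _).summable.norm, ?_⟩
  have hA := aux_hurwitz q a hu hw
  have hB := aux_hurwitz q (-a) hu hw
  set w := 1 - s + z with hwdef
  set u := s + z
  have hsum : ∑ ℓ ∈ Finset.Icc 1 q,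
        expZeta (((ℓ : ℝ)/q : ℝ) : UnitAddCircle) (s - z) *
          expZeta (((a : ℝ) * ℓ / q : ℝ) : UnitAddCircle) u =
      ∑ j : ZMod q, expZeta (ZMod.toAddCircle j) (1 - w) *
        expZeta (ZMod.toAddCircle ((a : ZMod q) * j)) u := by
    rw [← aux_sumIcc]
    refine Finset.sum_congr rfl fun l _ => ?_
    have h1 := ZMod.toAddCircle_natCast (N := q) l
    have h2 := ZMod.toAddCircle_intCast (N := q) (a * l)
    push_cast at h2
    rw [h1, h2, show s - z = 1 - w by rw [hwdef]; ring]
  have hwn : ∀ n : ℕ, w ≠ 1 - n := by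
    intro n h
    rw [h] at hw
    simp at hw
    have : (0 : ℝ) ≤ n := n.cast_nonneg
    linarith
  have hB' : ∑ j : ZMod q, expZeta (ZMod.toAddCircle ((a : ZMod q) * j)) u *
      hurwitzZeta (-ZMod.toAddCircle j) w
      = (q : ℂ)^w * ∑' n : ℕ, estTerm u (u - w) (-((a : ℝ) / q)) n := by
    rw [← Equiv.sum_comp (Equiv.neg (ZMod q))]
    push_cast at hB
    rw [neg_div] at hB
    rw [← hB]
    refine Fintype.sum_congr _ _ fun j => ?_
    simp
  rw [hsum]
  simp_rw [expZeta_one_sub _ hwn]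
  have hsplit : ∀ C E1 E2 : ℂ, ∑ j : ZMod q, C * (E1 * hurwitzZeta (ZMod.toAddCircle j) w +
        E2 * hurwitzZeta (-ZMod.toAddCircle j) w) *
        expZeta (ZMod.toAddCircle ((a : ZMod q) * j)) u
      = C * (E1 * ∑ j : ZMod q, expZeta (ZMod.toAddCircle ((a : ZMod q) * j)) u *
          hurwitzZeta (ZMod.toAddCircle j) w + E2 * ∑ j : ZMod q,
          expZeta (ZMod.toAddCircle ((a : ZMod q) * j)) u *
          hurwitzZeta (-ZMod.toAddCircle j) w) := by
    intro C E1 E2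
    rw [Finset.mul_sum, Finset.mul_sum, ← Finset.sum_add_distrib, Finset.mul_sum]
    exact Finset.sum_congr rfl fun j _ => by ring
  rw [hsplit, hA, hB']
  have e1 : z - s = w - 1 := by rw [hwdef]; ring
  have e2 : s - 1 - z = -w := by rw [hwdef]; ring
  rw [e1, e2, Complex.cpow_sub _ _ hq0, Complex.cpow_one,
    show -(π : ℂ) * Complex.I * w / 2 = -(π * Complex.I * w) / 2 by ring]
  ring
end

section
/- Let s ∈ ℂ with |Re(s)| < 1/2 and s ≠ 0, let z ∈ ℂ with Im(z) > 0, and let δ satisfy |Re(s)| < δ < 1/2. Then the series over j below converges and S_0(s, z) = Σ_{j=0}^∞ ((−1)^j·Q_{2j}(s)/j!)·[ z^j·S_j(s, −1/z) − Σ_{ℓ=0}^j ((−1)^{j−ℓ}/(j−ℓ)!)·ζ(1/2+ℓ+s)·ζ(1/2+ℓ−s)·(z/(2πi))^ℓ − Γ(1/2+s−j)·ζ(1+2s)·(2πi/z)^{−1/2−s} − Γ(1/2−s−j)·ζ(1−2s)·(2πi/z)^{−1/2+s} ] + Z(s, z), where Z(s, z) := (1/2π)·∫_ℝ Γ(w)·(cos(πs)/sin(πw))·ζ(1/2+w−s)·ζ(1/2+w+s)·(−2πiz)^{−w}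 dt with w = 1/2 + δ + it (an absolutely convergent integral). -/
open Complex Real Finset MeasureTheory

/-- `S_j(s,z) = (2πi)^{-j} ∑_{n≥1} e^{2πinz} σ_{2s}(n) n^{-(s+1/2+j)}`. -/
noncomputable def Sfun (j : ℕ) (s z : ℂ) : ℂ :=
  (1/(2 * π * Complex.I)^j) *
    ∑' n : ℕ, Complex.exp (2 * π * Complex.I * n * z) *
      (∑ d ∈ n.divisors, (d:ℂ)^(2*s)) * (n:ℂ) ^ (-(s + 1/2 + j))

/-- `Q_{2j}(s) = ∏_{ℓ=0}^{j-1} ((ℓ+1/2)² - s²)`. -/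
noncomputable def Q2 (j : ℕ) (s : ℂ) : ℂ :=
  ∏ ℓ ∈ Finset.range j, (((ℓ:ℂ) + 1/2)^2 - s^2)

/-- `(2πi/z)^w := exp(w (log 2π + iπ/2 - Log z))`. -/
noncomputable def pow1 (z w : ℂ) : ℂ :=
  Complex.exp (w * ((Real.log (2*π) : ℂ) + π * Complex.I/2 - Complex.log z))

/-- `(-2πiz)^{-w} := exp(-w (log 2π + Log z - iπ/2))`. -/
noncomputable def pow2 (z w : ℂ) : ℂ :=
  Complex.exp (-w * ((Real.log (2*π) : ℂ) + Complex.log z - π * Complex.I/2))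

/-- The integrand of `Z(s,z)` on the line `Re w = 1/2 + δ`, as a function of `t = Im w`. -/
noncomputable def Zigrand (s z : ℂ) (δ : ℝ) (t : ℝ) : ℂ :=
  Complex.Gamma ((1/2 + δ : ℝ) + t * Complex.I) *
    (Complex.cos (π * s) / Complex.sin (π * ((1/2 + δ : ℝ) + t * Complex.I))) *
    riemannZeta (1/2 + ((1/2 + δ : ℝ) + t * Complex.I) - s) *
    riemannZeta (1/2 + ((1/2 + δ : ℝ) + t * Complex.I) + s) *
    pow2 z ((1/2 + δ : ℝ) + t * Complex.I)


open Complex Real Finset MeasureTheory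

theorem integrableOn_rpow_mul_exp {σ c : ℝ} (hσ : 0 < σ) (hc : 0 < c) :
    IntegrableOn (fun t : ℝ => t ^ (σ - 1) * Real.exp (-(c * t))) (Set.Ioi 0) := by
  have := integrableOn_rpow_mul_exp_neg_mul_rpow (p := 1) (s := σ - 1) (b := c) (by linarith) one_pos hc
  simpa using this

theorem cpow_mul_exp_norm {a r : ℂ} {t : ℝ} (ht : 0 < t) :
    ‖(t : ℂ) ^ (a - 1) * Complex.exp (-(r * t))‖ = t ^ (a.re - 1) * Real.exp (-(r.re * t)) := by
  rw [norm_mul, Complex.norm_cpow_eq_rpow_re_of_pos ht, Complex.norm_exp]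
  simp

theorem cpow_mul_exp_meas {a r : ℂ} : AEStronglyMeasurable
    (fun t : ℝ => (t : ℂ) ^ (a - 1) * Complex.exp (-(r * t))) (volume.restrict (Set.Ioi 0)) := by
  apply ContinuousOn.aestronglyMeasurable _ measurableSet_Ioi
  intro t ht
  have ht : 0 < t := ht
  apply ContinuousAt.continuousWithinAt
  apply ContinuousAt.mul
  · exact (continuousAt_cpow_const (Or.inl (by simpa using ht))).comp
      Complex.continuous_ofReal.continuousAt
  · fun_prop

theorem cpow_mul_exp_integrable {a r : ℂ} (ha : 0 < a.re) (hr : 0 < r.re) : IntegrableOn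
    (fun t : ℝ => (t : ℂ) ^ (a - 1) * Complex.exp (-(r * t))) (Set.Ioi 0) := by
  refine Integrable.mono' (integrableOn_rpow_mul_exp ha hr) cpow_mul_exp_meas ?_
  refine (ae_restrict_mem measurableSet_Ioi).mono fun t ht => ?_
  rw [cpow_mul_exp_norm ht]

theorem gammaIntegral_complex {a r : ℂ} (ha : 0 < a.re) (hr : 0 < r.re) :
    ∫ t in Set.Ioi (0:ℝ), (t : ℂ) ^ (a - 1) * Complex.exp (-(r * t)) = (1 / r) ^ a * Complex.Gamma a := by
  set U : Set ℂ := {r : ℂ | 0 < r.re} with hU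
  have hUo : IsOpen U := isOpen_lt continuous_const Complex.continuous_re
  have hf : DifferentiableOn ℂ
      (fun r : ℂ => ∫ t in Set.Ioi (0:ℝ), (t : ℂ) ^ (a - 1) * Complex.exp (-(r * t))) U := by
    intro r hr
    have hr : 0 < r.re := hr
    apply DifferentiableAt.differentiableWithinAt
    have := hasDerivAt_integral_of_dominated_loc_of_deriv_le (μ := volume.restrict (Set.Ioi (0:ℝ)))
      (F := fun (r : ℂ) (t : ℝ) => (t : ℂ) ^ (a - 1) * Complex.exp (-(r * t)))
      (F' := fun (r : ℂ) (t : ℝ) => (t : ℂ) ^ ((a + 1) - 1) * -Complex.exp (-(r * t)))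
      (x₀ := r) (s := Metric.ball r (r.re / 2))
      (bound := fun t => t ^ ((a + 1).re - 1) * Real.exp (-(r.re / 2 * t)))
      (Metric.ball_mem_nhds _ (by linarith)) (Filter.Eventually.of_forall fun _ => cpow_mul_exp_meas)
      (cpow_mul_exp_integrable ha hr)
      (by simp only [mul_neg]; exact (cpow_mul_exp_meas (a := a + 1) (r := r)).neg) ?_
      (integrableOn_rpow_mul_exp (by simp; linarith) (by linarith)) ?_
    · exact this.2.differentiableAt
    · refine (ae_restrict_mem measurableSet_Ioi).mono fun t ht x hx => ?_
      have ht : 0 < t := ht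
      rw [mul_neg, norm_neg, cpow_mul_exp_norm ht]
      have h1 : r.re / 2 ≤ x.re := by
        have h2 := Complex.abs_re_le_norm (x - r)
        rw [Metric.mem_ball, dist_eq_norm] at hx
        have := abs_le.mp (h2.trans hx.le)
        simp at this
        linarith
      gcongr
    · refine (ae_restrict_mem measurableSet_Ioi).mono fun t ht x hx => ?_
      have ht : 0 < t := ht
      have h1 : HasDerivAt (fun r : ℂ => Complex.exp (-(r * t))) (Complex.exp (-(x * t)) * -(1 * t)) x :=
        ((hasDerivAt_id' x).mul_const (t : ℂ)).neg.cexp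
      have h2 := h1.const_mul ((t : ℂ) ^ (a - 1))
      refine h2.congr_deriv ?_
      have h3 : (t : ℂ) ^ ((a + 1) - 1) = (t : ℂ) ^ (a - 1) * t := by
        have : (a + 1) - 1 = (a - 1) + 1 := by ring
        rw [this, Complex.cpow_add _ _ (by exact_mod_cast ht.ne'), Complex.cpow_one]
      rw [h3]; ring
  have hg : DifferentiableOn ℂ (fun r : ℂ => (1 / r) ^ a * Complex.Gamma a) U := by
    intro r hr
    have hr : 0 < r.re := hr
    have hr0 : r ≠ 0 := by rintro rfl; simp at hr
    apply DifferentiableAt.differentiableWithinAt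
    apply DifferentiableAt.mul_const
    apply DifferentiableAt.cpow_const
    · exact (differentiableAt_const _).div differentiableAt_id hr0
    · left
      rw [one_div, Complex.inv_re]
      exact div_pos hr (Complex.normSq_pos.mpr hr0)
  have hp : IsPreconnected U := (convex_halfSpace_re_gt 0).isPreconnected
  refine (hf.analyticOnNhd hUo).eqOn_of_preconnected_of_frequently_eq (hg.analyticOnNhd hUo) hp
    (z₀ := 1) (by simp [hU]) ?_ hr
  have hreal : ∀ x : ℝ, 0 < x → ∫ t in Set.Ioi (0:ℝ), (t : ℂ) ^ (a - 1) * Complex.exp (-((x:ℂ) * t))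
      = (1 / (x : ℂ)) ^ a * Complex.Gamma a := fun x hx =>
    Complex.integral_cpow_mul_exp_neg_mul_Ioi ha hx
  have htend : Filter.Tendsto (fun n : ℕ => (((1 : ℝ) + 1 / ((n : ℝ) + 1) : ℝ) : ℂ)) Filter.atTop
      (nhdsWithin 1 {1}ᶜ) := by
    apply tendsto_nhdsWithin_of_tendsto_nhds_of_eventually_within
    · have h := (tendsto_one_div_add_atTop_nhds_zero_nat (𝕜 := ℝ)).const_add 1
      rw [add_zero] at h
      have h2 := (Complex.continuous_ofReal.tendsto 1).comp h
      simpa [Function.comp_def] using h2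
    · refine Filter.Eventually.of_forall fun n => ?_
      have : (0:ℝ) < 1 / ((n : ℝ) + 1) := by positivity
      simp only [Set.mem_compl_iff, Set.mem_singleton_iff]
      intro h
      have h' : ((1 : ℝ) + 1 / ((n : ℝ) + 1)) = 1 := by exact_mod_cast h
      linarith
  refine htend.frequently (Filter.Frequently.of_forall fun n => ?_)
  exact hreal _ (by positivity)

open Complex Real Finset MeasureTheory

theorem gamma_norm_le {w : ℂ} (hw : 0 < w.re) {φ : ℝ} (h0 : 0 ≤ φ) (h1 : φ < π / 2) :
    ‖Complex.Gamma w‖ ≤ (1 / Real.cos φ) ^ w.re * Real.Gamma w.re * Real.exp (-φ * |w.im|) := by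
  obtain ⟨ψ, hψ, hψ2⟩ : ∃ ψ : ℝ, |ψ| = φ ∧ ψ * w.im = φ * |w.im| := by
    rcases le_total 0 w.im with h | h
    · exact ⟨φ, abs_of_nonneg h0, by rw [abs_of_nonneg h]⟩
    · exact ⟨-φ, by rw [abs_neg, abs_of_nonneg h0], by rw [abs_of_nonpos h]; ring⟩
  have hcos : Real.cos ψ = Real.cos φ := by rw [← hψ, Real.cos_abs]
  have hcpos : 0 < Real.cos φ := Real.cos_pos_of_mem_Ioo ⟨by linarith [Real.pi_pos], h1⟩
  have hψr := abs_le.mp hψ.le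
  have hre : (Complex.exp (ψ * Complex.I)).re = Real.cos φ := by
    rw [Complex.exp_ofReal_mul_I_re, hcos]
  have key := gammaIntegral_complex (a := w) (r := Complex.exp (ψ * Complex.I)) hw
    (by rw [hre]; exact hcpos)
  have hpow : ((1 : ℂ) / Complex.exp (ψ * Complex.I)) ^ w = Complex.exp (-(ψ * Complex.I) * w) := by
    rw [one_div, ← Complex.exp_neg, Complex.cpow_def_of_ne_zero (Complex.exp_ne_zero _),
      Complex.log_exp]
    · simp; linarith [Real.pi_pos]
    · simp; linarith [Real.pi_pos]
  have hn : ‖((1 : ℂ) / Complex.exp (ψ * Complex.I)) ^ w‖ = Real.exp (φ * |w.im|) := by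
    rw [hpow, Complex.norm_exp, ← hψ2]
    congr 1
    simp
  have hb : ‖((1 : ℂ) / Complex.exp (ψ * Complex.I)) ^ w * Complex.Gamma w‖ ≤
      (1 / Real.cos φ) ^ w.re * Real.Gamma w.re := by
    rw [← key, ← Real.integral_rpow_mul_exp_neg_mul_Ioi hw hcpos]
    refine (norm_integral_le_integral_norm _).trans (le_of_eq ?_)
    refine setIntegral_congr_fun measurableSet_Ioi fun t ht => ?_
    have ht : 0 < t := ht
    simp only [norm_mul]
    rw [Complex.norm_cpow_eq_rpow_re_of_pos ht, Complex.norm_exp]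
    congr 2
    simp [hre.symm]
  rw [norm_mul, hn] at hb
  rw [neg_mul, Real.exp_neg, ← div_eq_mul_inv, le_div_iff₀ (Real.exp_pos _), mul_comm]
  exact hb

/-- vertical growth bound `‖f w‖ ≤ C exp(θ |Im w|)` in a strip, for `|Im w|` at least `T`. -/
def VB (A B θ : ℝ) (f : ℂ → ℂ) : Prop :=
  ∃ C T : ℝ, 0 ≤ C ∧ 1 ≤ T ∧ ∀ w : ℂ, A ≤ w.re → w.re ≤ B → T ≤ |w.im| →
    ‖f w‖ ≤ C * Real.exp (θ * |w.im|)

theorem VB.mul {A B θ θ' : ℝ} {f g : ℂ → ℂ} (hf : VB A B θ f) (hg : VB A B θ' g) :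
    VB A B (θ + θ') (fun w => f w * g w) := by
  obtain ⟨C, T, hC, hT, h⟩ := hf
  obtain ⟨C', T', hC', hT', h'⟩ := hg
  refine ⟨C * C', max T T', mul_nonneg hC hC', le_max_of_le_left hT, fun w h1 h2 h3 => ?_⟩
  rw [norm_mul, add_mul, Real.exp_add]
  calc _ ≤ (C * Real.exp (θ * |w.im|)) * (C' * Real.exp (θ' * |w.im|)) := by
        gcongr
        · exact h w h1 h2 ((le_max_left _ _).trans h3)
        · exact h' w h1 h2 ((le_max_right _ _).trans h3)
    _ = _ := by ring

theorem VB.mono {A B θ θ' : ℝ} {f : ℂ → ℂ} (hf : VB A B θ f) (h : θ ≤ θ') : VB A B θ' f := by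
  obtain ⟨C, T, hC, hT, h'⟩ := hf
  refine ⟨C, T, hC, hT, fun w h1 h2 h3 => (h' w h1 h2 h3).trans ?_⟩
  gcongr

theorem VB.union {A B D θ : ℝ} {f : ℂ → ℂ} (hf : VB A B θ f) (hg : VB B D θ f) : VB A D θ f := by
  obtain ⟨C, T, hC, hT, h⟩ := hf
  obtain ⟨C', T', hC', hT', h'⟩ := hg
  refine ⟨C + C', max T T', by positivity, le_max_of_le_left hT, fun w h1 h2 h3 => ?_⟩
  rcases le_total w.re B with h4 | h4
  · refine (h w h1 h4 ((le_max_left _ _).trans h3)).trans ?_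
    gcongr; linarith
  · refine (h' w h4 h2 ((le_max_right _ _).trans h3)).trans ?_
    gcongr; linarith

theorem VB.comp_add {A B θ : ℝ} {f : ℂ → ℂ} (a : ℂ) (hθ : 0 ≤ θ) (hf : VB (A + a.re) (B + a.re) θ f) :
    VB A B θ (fun w => f (w + a)) := by
  obtain ⟨C, T, hC, hT, h⟩ := hf
  refine ⟨C * Real.exp (θ * |a.im|), T + |a.im|, by positivity,
    by linarith [abs_nonneg a.im], fun w h1 h2 h3 => ?_⟩
  refine (h (w + a) (by simpa using h1) (by simpa using h2) ?_).trans ?_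
  · have := abs_sub_abs_le_abs_sub w.im (-a.im)
    rw [abs_neg] at this
    simp only [Complex.add_im]
    have h5 : w.im - -a.im = w.im + a.im := by ring
    rw [h5] at this; linarith
  · rw [mul_assoc, ← Real.exp_add]
    have := abs_add_le w.im a.im
    simp only [Complex.add_im]
    gcongr
    nlinarith

theorem VB.gamma_pos {A B : ℝ} (hA : 0 < A) {φ : ℝ} (h0 : 0 ≤ φ) (h1 : φ < π / 2) :
    VB A B (-φ) Complex.Gamma := by
  have hcpos : 0 < Real.cos φ := Real.cos_pos_of_mem_Ioo ⟨by linarith [Real.pi_pos], h1⟩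
  have hc : ContinuousOn (fun x : ℝ => (1 / Real.cos φ) ^ x * Real.Gamma x) (Set.Icc A B) := by
    intro x hx
    apply ContinuousAt.continuousWithinAt
    apply ContinuousAt.mul
    · exact (Real.continuous_const_rpow (by positivity)).continuousAt
    · refine (Real.differentiableAt_Gamma fun m => ?_).continuousAt
      have := hx.1
      have : (0 : ℝ) ≤ m := m.cast_nonneg
      linarith
  obtain ⟨C, hC⟩ := isCompact_Icc.exists_bound_of_continuousOn hc
  refine ⟨max C 0, 1, le_max_right _ _, le_rfl, fun w h2 h3 h4 => ?_⟩
  refine (gamma_norm_le (hA.trans_le h2) h0 h1).trans ?_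
  gcongr
  exact (le_abs_self _).trans ((hC _ ⟨h2, h3⟩).trans (le_max_left _ _))

theorem gamma_norm_le_add (n : ℕ) {w : ℂ} (hw : 1 ≤ |w.im|) :
    ‖Complex.Gamma w‖ ≤ ‖Complex.Gamma (w + n)‖ := by
  induction n with
  | zero => simp
  | succ n ih =>
    refine ih.trans ?_
    have h1 : 1 ≤ ‖w + n‖ := by
      refine hw.trans ?_
      have := Complex.abs_im_le_norm (w + n)
      simpa using this
    have h2 : w + (n : ℂ) ≠ 0 := by
      intro h; rw [h] at h1; simp at h1; linarith
    have := Complex.Gamma_add_one (w + n) h2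
    rw [Nat.cast_succ, ← add_assoc, this, norm_mul]
    nlinarith [norm_nonneg (Complex.Gamma (w + n))]

theorem VB.gamma (A B : ℝ) {φ : ℝ} (h0 : 0 ≤ φ) (h1 : φ < π / 2) :
    VB A B (-φ) Complex.Gamma := by
  obtain ⟨n, hn⟩ := exists_nat_gt (-A)
  obtain ⟨C, T, hC, hT, h⟩ := VB.gamma_pos (A := A + n) (B := B + n) (by linarith) h0 h1
  refine ⟨C, T, hC, hT, fun w h2 h3 h4 => (gamma_norm_le_add n (hT.trans h4)).trans ?_⟩
  refine (h (w + n) (by simpa using h2) (by simpa using h3) (by simpa using h4)).trans ?_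
  simp

theorem VB.gamma_sub (A B : ℝ) (j : ℕ) {φ : ℝ} (h0 : 0 ≤ φ) (h1 : φ < π / 2) :
    VB A B (-φ) (fun w => Complex.Gamma (w - j)) := by
  obtain ⟨C, T, hC, hT, h⟩ := VB.gamma (A - j) (B - j) h0 h1
  refine ⟨C, T, hC, hT, fun w h2 h3 h4 => ?_⟩
  refine (h (w - j) (by simpa using h2) (by simpa using h3) (by simpa using h4)).trans ?_
  simp

theorem VB.exp (A B : ℝ) (L : ℂ) : VB A B |L.im| (fun w => Complex.exp (-w * L)) := by
  refine ⟨Real.exp (max |A| |B| * |L.re|), 1, by positivity, le_rfl, fun w h1 h2 h3 => ?_⟩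
  rw [Complex.norm_exp, ← Real.exp_add]
  gcongr
  have e : (-w * L).re = -(w.re * L.re) + w.im * L.im := by simp; ring
  rw [e]
  have h4 : |w.re| ≤ max |A| |B| := abs_le_max_abs_abs h1 h2
  have h5 : -(w.re * L.re) ≤ |w.re| * |L.re| := by rw [← abs_mul]; exact neg_le_abs _
  have h6 : w.im * L.im ≤ |w.im| * |L.im| := by rw [← abs_mul]; exact le_abs_self _
  have := mul_le_mul_of_nonneg_right h4 (abs_nonneg L.re)
  linarith [mul_comm |w.im| |L.im|]

open Complex Real Finset MeasureTheory

noncomputable def fracI (t : ℝ) : ℂ := (Set.Ioi (1:ℝ)).indicator (fun t => ((Int.fract t : ℝ) : ℂ)) t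

theorem fracI_norm_le (t : ℝ) : ‖fracI t‖ ≤ 1 := by
  unfold fracI
  refine (norm_indicator_le_norm_self _ _).trans ?_
  rw [Complex.norm_real, Real.norm_of_nonneg (Int.fract_nonneg _)]
  exact (Int.fract_lt_one _).le

theorem fracI_meas : Measurable fracI := by
  unfold fracI
  apply Measurable.indicator _ measurableSet_Ioi
  exact Complex.measurable_ofReal.comp measurable_fract

theorem fracI_mellin_diff {s : ℂ} (hs : s.re < 0) : DifferentiableAt ℂ (mellin fracI) s := by
  apply mellin_differentiableAt_of_isBigO_rpow (a := 0) (b := s.re - 1) _ _ hs _ (by linarith)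
  · apply LocallyIntegrable.locallyIntegrableOn
    refine (locallyIntegrable_const (1:ℝ)).mono fracI_meas.aestronglyMeasurable
      (Filter.Eventually.of_forall fun t => ?_)
    simpa using fracI_norm_le t
  · simp only [neg_zero, Real.rpow_zero]
    exact Asymptotics.IsBigO.of_bound 1 (Filter.Eventually.of_forall fun t => by
      simpa using fracI_norm_le t)
  · apply Asymptotics.IsBigO.of_bound 1
    have : ∀ᶠ t : ℝ in nhdsWithin 0 (Set.Ioi 0), t < 1 :=
      nhdsWithin_le_nhds (eventually_lt_nhds one_pos)
    filter_upwards [this] with t ht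
    have : fracI t = 0 := by
      unfold fracI
      apply Set.indicator_of_notMem
      simp; exact ht.le
    rw [this, norm_zero]; positivity

theorem fracI_mellin_eq (u : ℂ) : mellin fracI (-u) =
    ∫ t in Set.Ioi (1:ℝ), ((Int.fract t : ℝ) : ℂ) * (t : ℂ) ^ (-(u + 1)) := by
  unfold mellin
  have h : ∀ t : ℝ, (t : ℂ) ^ (-u - 1) • fracI t =
      (Set.Ioi (1:ℝ)).indicator (fun t : ℝ => ((Int.fract t : ℝ) : ℂ) * (t : ℂ) ^ (-(u + 1))) t := by
    intro t
    unfold fracI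
    by_cases ht : t ∈ Set.Ioi (1:ℝ)
    · rw [Set.indicator_of_mem ht, Set.indicator_of_mem ht, smul_eq_mul, mul_comm]
      congr 2; ring
    · rw [Set.indicator_of_notMem ht, Set.indicator_of_notMem ht, smul_zero]
  simp_rw [h]
  rw [setIntegral_indicator measurableSet_Ioi]
  congr 2
  ext t
  simp only [Set.mem_inter_iff, Set.mem_Ioi]
  constructor
  · exact fun h => h.2
  · exact fun h => ⟨by linarith, h⟩

theorem fracI_mellin_norm_le {u : ℂ} (hu : 0 < u.re) : ‖mellin fracI (-u)‖ ≤ 1 / u.re := by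
  rw [fracI_mellin_eq]
  have h1 : ∫ t in Set.Ioi (1:ℝ), t ^ (-(u.re + 1)) = 1 / u.re := by
    rw [integral_Ioi_rpow_of_lt (by linarith) one_pos]
    simp
  rw [← h1]
  apply norm_integral_le_of_norm_le (integrableOn_Ioi_rpow_of_lt (by linarith) one_pos)
  refine (ae_restrict_mem measurableSet_Ioi).mono fun t ht => ?_
  have ht : 1 < t := ht
  rw [norm_mul, Complex.norm_real, Real.norm_of_nonneg (Int.fract_nonneg _),
    Complex.norm_cpow_eq_rpow_re_of_pos (by linarith)]
  have : (-(u+1)).re = -(u.re + 1) := by simp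
  rw [this]
  have h2 : 0 ≤ t ^ (-(u.re + 1)) := by positivity
  nlinarith [(Int.fract_lt_one t).le]

theorem zeta_rep_one {u : ℂ} (hu : 1 < u.re) :
    riemannZeta u = u / (u - 1) - u * mellin fracI (-u) := by
  rw [← LSeries_one_eq_riemannZeta hu, fracI_mellin_eq]
  rw [LSeries_eq_mul_integral 1 zero_le_one hu (LSeriesSummable_one_iff.mpr hu)]
  · have hint1 : IntegrableOn (fun t : ℝ => (t : ℂ) ^ (-u)) (Set.Ioi 1) :=
      integrableOn_Ioi_cpow_of_lt (by simpa using hu) one_pos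
    have hint2 : IntegrableOn (fun t : ℝ => ((Int.fract t : ℝ) : ℂ) * (t : ℂ) ^ (-(u + 1))) (Set.Ioi 1) := by
      have h3 : IntegrableOn (fun t : ℝ => (t : ℂ) ^ (-(u + 1))) (Set.Ioi 1) :=
        integrableOn_Ioi_cpow_of_lt (by simp; linarith) one_pos
      refine Integrable.bdd_mul (c := 1) h3 ?_ ?_
      · exact (Complex.measurable_ofReal.comp measurable_fract).aestronglyMeasurable
      · refine Filter.Eventually.of_forall fun t => ?_
        rw [Complex.norm_real, Real.norm_of_nonneg (Int.fract_nonneg _)]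
        exact (Int.fract_lt_one _).le
    have hval : ∫ t in Set.Ioi (1:ℝ), (t : ℂ) ^ (-u) = 1 / (u - 1) := by
      rw [integral_Ioi_cpow_of_lt (by simpa using hu) one_pos]
      simp only [Complex.ofReal_one, Complex.one_cpow]
      rw [← neg_div_neg_eq]; congr 1
      · ring
      · ring
    have : ∫ t in Set.Ioi (1:ℝ), (∑ k ∈ Finset.Icc 1 ⌊t⌋₊, (1 : ℕ → ℂ) k) * (t : ℂ) ^ (-(u + 1)) =
        ∫ t in Set.Ioi (1:ℝ), ((t : ℂ) ^ (-u) - ((Int.fract t : ℝ) : ℂ) * (t : ℂ) ^ (-(u + 1))) := by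
      refine setIntegral_congr_fun measurableSet_Ioi fun t ht => ?_
      have ht : 1 < t := ht
      have e1 : (∑ k ∈ Finset.Icc 1 ⌊t⌋₊, (1 : ℕ → ℂ) k) = ((⌊t⌋₊ : ℝ) : ℂ) := by simp
      have e2 : (⌊t⌋₊ : ℝ) = t - Int.fract t := by
        rw [natCast_floor_eq_intCast_floor (by linarith)]
        have := Int.floor_add_fract t
        linarith
      have e3 : (t : ℂ) ^ (-u) = t * (t : ℂ) ^ (-(u + 1)) := by
        have : -u = 1 + -(u + 1) := by ring
        rw [this, Complex.cpow_add _ _ (by exact_mod_cast (by linarith : t ≠ 0)), Complex.cpow_one]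
      rw [e1, e2, e3]
      push_cast; ring
    rw [this, integral_sub hint1 hint2, hval]
    ring
  · simp only [Pi.one_apply, sum_const, Nat.card_Icc, add_tsub_cancel_right, nsmul_eq_mul, mul_one,
      Real.rpow_one]
    exact Asymptotics.IsBigO.of_bound 1 (Filter.Eventually.of_forall fun n => by simp)

theorem zeta_rep {u : ℂ} (hu : 0 < u.re) (him : u.im ≠ 0) :
    riemannZeta u = u / (u - 1) - u * mellin fracI (-u) := by
  obtain ⟨e, he0, he⟩ : ∃ e : ℝ, e ≠ 0 ∧ 0 < e * u.im :=
    ⟨u.im, him, mul_self_pos.mpr him⟩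
  set U : Set ℂ := {w | 0 < w.re} ∩ {w | 0 < e * w.im} with hU
  have hUo : IsOpen U := (isOpen_lt continuous_const Complex.continuous_re).inter
    (isOpen_lt continuous_const (by fun_prop))
  have hUc : Convex ℝ U := by
    apply (convex_halfSpace_re_gt 0).inter
    apply convex_halfSpace_gt
    constructor
    · intro x y; simp; ring
    · intro c x; simp; ring
  have hne : ∀ w ∈ U, w ≠ 1 := by
    rintro w hw rfl
    have := hw.2
    simp at this
  have hf : DifferentiableOn ℂ riemannZeta U := fun w hw =>
    (differentiableAt_riemannZeta (hne w hw)).differentiableWithinAt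
  have hg : DifferentiableOn ℂ (fun u => u / (u - 1) - u * mellin fracI (-u)) U := by
    intro w hw
    apply DifferentiableAt.differentiableWithinAt
    have h1 : DifferentiableAt ℂ (fun u => mellin fracI (-u)) w := by
      have h2 : DifferentiableAt ℂ (mellin fracI) (-w) := fracI_mellin_diff (by simpa using hw.1)
      exact h2.comp w differentiableAt_id.neg
    apply DifferentiableAt.sub
    · exact differentiableAt_id.div (by fun_prop) (sub_ne_zero.mpr (hne w hw))
    · exact differentiableAt_id.mul h1
  have hz : (⟨2, u.im⟩ : ℂ) ∈ U := ⟨by simp, he⟩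
  refine (hf.analyticOnNhd hUo).eqOn_of_preconnected_of_eventuallyEq (hg.analyticOnNhd hUo)
    hUc.isPreconnected hz ?_ ⟨hu, he⟩
  have : ∀ᶠ w : ℂ in nhds (⟨2, u.im⟩ : ℂ), 1 < w.re :=
    Complex.continuous_re.continuousAt.eventually (lt_mem_nhds (by simp))
  filter_upwards [this] with w hw
  exact zeta_rep_one hw

theorem zeta_norm_le {u : ℂ} (hu : 1 / 2 ≤ u.re) (him : 1 ≤ |u.im|) :
    ‖riemannZeta u‖ ≤ 3 * ‖u‖ := by
  rw [zeta_rep (by linarith) (by intro h; rw [h] at him; simp at him; linarith)]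
  refine (norm_sub_le _ _).trans ?_
  have h1 : 1 ≤ ‖u - 1‖ := him.trans (by simpa using Complex.abs_im_le_norm (u - 1))
  have h2 : ‖u / (u - 1)‖ ≤ ‖u‖ := by
    rw [norm_div]; exact div_le_self (norm_nonneg _) h1
  have h3 : ‖mellin fracI (-u)‖ ≤ 2 := by
    refine (fracI_mellin_norm_le (by linarith)).trans ?_
    rw [div_le_iff₀ (by linarith)]; linarith
  rw [norm_mul]
  nlinarith [norm_nonneg u]

theorem VB.zeta_right (B : ℝ) {ε : ℝ} (hε : 0 < ε) : VB (1 / 2) B ε riemannZeta := by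
  refine ⟨3 * (|B| + 1 / ε), 1, by positivity, le_rfl, fun w h1 h2 h3 => ?_⟩
  refine (zeta_norm_le h1 h3).trans ?_
  rw [mul_assoc]
  gcongr
  refine (Complex.norm_le_abs_re_add_abs_im w).trans ?_
  have h4 : |w.re| ≤ |B| := by
    rw [abs_of_nonneg (by linarith : 0 ≤ w.re)]; exact h2.trans (le_abs_self _)
  have h5 : ε * |w.im| + 1 ≤ Real.exp (ε * |w.im|) := Real.add_one_le_exp _
  have h6 : |w.im| ≤ 1 / ε * Real.exp (ε * |w.im|) := by
    rw [one_div, inv_mul_eq_div, le_div_iff₀ hε]; linarith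
  have h7 : 1 ≤ Real.exp (ε * |w.im|) := Real.one_le_exp (by positivity)
  nlinarith [abs_nonneg B]

theorem norm_cos_le (u : ℂ) : ‖Complex.cos u‖ ≤ Real.exp |u.im| := by
  rw [Complex.cos, norm_div]
  have h1 : ‖Complex.exp (u * Complex.I)‖ ≤ Real.exp |u.im| := by
    rw [Complex.norm_exp]; gcongr; simpa using neg_le_abs u.im
  have h2 : ‖Complex.exp (-u * Complex.I)‖ ≤ Real.exp |u.im| := by
    rw [Complex.norm_exp]; gcongr; simpa using le_abs_self u.im
  have h3 := norm_add_le (Complex.exp (u * Complex.I)) (Complex.exp (-u * Complex.I))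
  simp only [Complex.norm_ofNat]
  linarith

theorem VB.cos (A B : ℝ) : VB A B (π / 2) (fun u => Complex.cos (π * u / 2)) := by
  refine ⟨1, 1, zero_le_one, le_rfl, fun w _ _ _ => ?_⟩
  rw [one_mul]
  refine (norm_cos_le _).trans (le_of_eq ?_)
  congr 1
  have : (π * w / 2).im = (π / 2) * w.im := by
    have : (π * w / 2) = ((π / 2 : ℝ) : ℂ) * w := by push_cast; ring
    rw [this, Complex.im_ofReal_mul]
  rw [this, abs_mul, abs_of_pos (by positivity)]

theorem VB.zeta_left (A : ℝ) {ε : ℝ} (hε : 0 < ε) (hε1 : ε < 1) : VB A (1 / 2) ε riemannZeta := by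
  have hpi := Real.pi_gt_three
  have h := ((VB.exp (1 / 2) (1 - A) (Real.log (2 * π))).mul
    (VB.gamma (1 / 2) (1 - A) (φ := π / 2 - ε / 2) (by linarith) (by linarith))).mul
    ((VB.cos (1 / 2) (1 - A)).mul (VB.zeta_right (1 - A) (half_pos hε)))
  obtain ⟨C, T, hC, hT, h⟩ := h
  refine ⟨2 * C, T, by positivity, hT, fun w h1 h2 h3 => ?_⟩
  have h4 := h (1 - w) (by simp; linarith) (by simp; linarith) (by simpa using h3)
  have him : (1 - w).im ≠ 0 := by
    intro h
    have : w.im = 0 := by simpa using h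
    rw [this] at h3; simp at h3; linarith
  have hfe := riemannZeta_one_sub (s := 1 - w) (by
    intro n h; apply him; rw [h]; simp) (by intro h; apply him; rw [h]; simp)
  rw [sub_sub_cancel] at hfe
  have hpow : ((2 : ℂ) * π) ^ (-(1 - w)) = Complex.exp (-(1 - w) * (Real.log (2 * π) : ℝ)) := by
    have h2pi : (2 * π : ℂ) = ((2 * π : ℝ) : ℂ) := by push_cast; ring
    rw [Complex.cpow_def_of_ne_zero (by rw [h2pi]; exact_mod_cast (by positivity)), h2pi,
      ← Complex.ofReal_log (by positivity), mul_comm]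
  rw [hfe, hpow]
  have e : ∀ a b c d : ℂ, ‖2 * a * b * c * d‖ = 2 * ‖a * b * (c * d)‖ := by
    intro a b c d; simp only [norm_mul, Complex.norm_ofNat]; ring
  rw [e, mul_assoc 2 C]
  refine mul_le_mul_of_nonneg_left (h4.trans (le_of_eq ?_)) zero_le_two
  have h5 : |(1 - w).im| = |w.im| := by simp
  rw [h5]; congr 2
  simp only [Complex.ofReal_im, abs_zero]; ring

theorem VB.zeta (A B : ℝ) {ε : ℝ} (hε : 0 < ε) (hε1 : ε < 1) : VB A B ε riemannZeta :=
  (VB.zeta_left A hε hε1).union (VB.zeta_right B hε)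

open Complex Real Finset MeasureTheory

theorem inv_line_aux {x : ℝ} (hx : 0 < x) (β : ℝ) :
    Filter.Tendsto (fun T : ℝ => ∫ t in (-T)..T, 1 / ((x : ℂ) + ((t - β : ℝ) : ℂ) * Complex.I)) Filter.atTop
      (nhds (π : ℂ)) := by
  have hder : ∀ t : ℝ, HasDerivAt
      (fun t : ℝ => -Complex.I * Complex.log ((x : ℂ) + ((t - β : ℝ) : ℂ) * Complex.I))
      (1 / ((x : ℂ) + ((t - β : ℝ) : ℂ) * Complex.I)) t := by
    intro t
    have h1 : HasDerivAt (fun t : ℝ => (x : ℂ) + ((t - β : ℝ) : ℂ) * Complex.I) (1 * Complex.I) t := by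
      apply HasDerivAt.const_add
      apply HasDerivAt.mul_const
      have := ((hasDerivAt_id' t).sub_const β).ofReal_comp
      simpa using this
    have h2 := (h1.clog_real (by left; simpa using hx)).const_mul (-Complex.I)
    refine h2.congr_deriv ?_
    rw [one_mul, ← mul_div_assoc]
    congr 1
    simp
  have hne : ∀ t : ℝ, (x : ℂ) + ((t - β : ℝ) : ℂ) * Complex.I ≠ 0 := by
    intro t h
    have := congrArg Complex.re h
    simp at this; linarith
  have hcont : Continuous (fun t : ℝ => 1 / ((x : ℂ) + ((t - β : ℝ) : ℂ) * Complex.I)) :=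
    continuous_const.div (by fun_prop) hne
  have hval : ∀ T : ℝ, 0 < T → ∫ t in (-T)..T, 1 / ((x : ℂ) + ((t - β : ℝ) : ℂ) * Complex.I) =
      -Complex.I * (Complex.log (((x * T⁻¹ : ℝ) : ℂ) + ((1 - β * T⁻¹ : ℝ) : ℂ) * Complex.I)
        - Complex.log (((x * T⁻¹ : ℝ) : ℂ) + ((-1 - β * T⁻¹ : ℝ) : ℂ) * Complex.I)) := by
    intro T hT
    rw [intervalIntegral.integral_eq_sub_of_hasDerivAt (fun t _ => hder t) (hcont.intervalIntegrable _ _)]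
    have hT' : (T : ℂ) ≠ 0 := by exact_mod_cast hT.ne'
    have e1 : (x : ℂ) + ((T - β : ℝ) : ℂ) * Complex.I =
        (T : ℂ) * (((x * T⁻¹ : ℝ) : ℂ) + ((1 - β * T⁻¹ : ℝ) : ℂ) * Complex.I) := by
      push_cast; field_simp
    have e2 : (x : ℂ) + ((-T - β : ℝ) : ℂ) * Complex.I =
        (T : ℂ) * (((x * T⁻¹ : ℝ) : ℂ) + ((-1 - β * T⁻¹ : ℝ) : ℂ) * Complex.I) := by
      push_cast; field_simp
    have n1 := hne T
    have n2 := hne (-T)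
    rw [e1] at n1; rw [e2] at n2
    rw [e1, e2, Complex.log_ofReal_mul hT (right_ne_zero_of_mul n1),
      Complex.log_ofReal_mul hT (right_ne_zero_of_mul n2)]
    ring
  have hinv : Filter.Tendsto (fun T : ℝ => T⁻¹) Filter.atTop (nhds 0) := tendsto_inv_atTop_zero
  have key : ContinuousAt (fun u : ℝ =>
      -Complex.I * (Complex.log (((x * u : ℝ) : ℂ) + ((1 - β * u : ℝ) : ℂ) * Complex.I)
        - Complex.log (((x * u : ℝ) : ℂ) + ((-1 - β * u : ℝ) : ℂ) * Complex.I))) 0 := by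
    apply ContinuousAt.mul continuousAt_const
    apply ContinuousAt.sub
    · apply ContinuousAt.clog (by fun_prop)
      right; simp
    · apply ContinuousAt.clog (by fun_prop)
      right; simp
  have key2 := key.tendsto.comp hinv
  have e0 : -Complex.I * (Complex.log (((x * 0 : ℝ) : ℂ) + ((1 - β * 0 : ℝ) : ℂ) * Complex.I)
        - Complex.log (((x * 0 : ℝ) : ℂ) + ((-1 - β * 0 : ℝ) : ℂ) * Complex.I)) = π := by
    simp only [mul_zero, sub_zero, Complex.ofReal_zero, zero_add, Complex.ofReal_one, one_mul,
      Complex.ofReal_neg, neg_one_mul, Complex.log_I, Complex.log_neg_I, neg_mul]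
    ring_nf
    simp
  rw [e0] at key2
  refine key2.congr' ?_
  filter_upwards [Filter.eventually_gt_atTop 0] with T hT
  exact (hval T hT).symm

theorem inv_line_pos {a : ℝ} {p : ℂ} (h : p.re < a) :
    Filter.Tendsto (fun T : ℝ => ∫ t in (-T)..T, 1 / ((a : ℂ) + t * Complex.I - p)) Filter.atTop
      (nhds (π : ℂ)) := by
  refine (inv_line_aux (sub_pos.mpr h) p.im).congr fun T => ?_
  congr 1; ext t; congr 1
  apply Complex.ext <;> simp

theorem inv_line_neg {a : ℝ} {p : ℂ} (h : a < p.re) :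
    Filter.Tendsto (fun T : ℝ => ∫ t in (-T)..T, 1 / ((a : ℂ) + t * Complex.I - p)) Filter.atTop
      (nhds (-π : ℂ)) := by
  have := (inv_line_aux (sub_pos.mpr h) (-p.im)).neg
  refine this.congr fun T => ?_
  have h2 := intervalIntegral.integral_comp_neg (a := -T) (b := T)
    (fun t : ℝ => 1 / ((a : ℂ) + t * Complex.I - p))
  rw [neg_neg] at h2
  rw [← h2, ← intervalIntegral.integral_neg]
  congr 1; ext t
  rw [← div_neg]; congr 1
  apply Complex.ext <;> simp <;> ring

theorem exists_remove_poles {f : ℂ → ℂ} {A B : ℝ} (P : Finset ℂ) (r : ℂ → ℂ)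
    (hP : ∀ p ∈ P, A < p.re ∧ p.re < B)
    (hd : ∀ w : ℂ, A ≤ w.re → w.re ≤ B → w ∉ P → DifferentiableAt ℂ f w)
    (hres : ∀ p ∈ P, Filter.Tendsto (fun w => (w - p) * f w) (nhdsWithin p {p}ᶜ) (nhds (r p))) :
    ∃ g : ℂ → ℂ, (∀ w : ℂ, A ≤ w.re → w.re ≤ B → DifferentiableAt ℂ g w) ∧
      ∀ w ∉ P, g w = f w - ∑ p ∈ P, r p * (1 / (w - p)) := by
  classical
  set h : ℂ → ℂ := fun w => f w - ∑ p ∈ P, r p * (1 / (w - p)) with hh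
  have hPo : IsOpen ((P : Set ℂ)ᶜ) := P.finite_toSet.isClosed.isOpen_compl
  have hhd : ∀ w : ℂ, A ≤ w.re → w.re ≤ B → w ∉ P → DifferentiableAt ℂ h w := by
    intro w h1 h2 h3
    apply (hd w h1 h2 h3).sub
    apply DifferentiableAt.fun_sum
    intro p hp
    have : w - p ≠ 0 := sub_ne_zero.mpr (by rintro rfl; exact h3 hp)
    apply DifferentiableAt.const_mul
    exact (differentiableAt_const _).div (by fun_prop) this
  refine ⟨fun w => if w ∈ P then Filter.limUnder (nhdsWithin w {w}ᶜ) h else h w, ?_, ?_⟩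
  · intro w h1 h2
    by_cases hw : w ∈ P
    · obtain ⟨h3, h4⟩ := hP w hw
      set s : Set ℂ := ({u : ℂ | A < u.re} ∩ {u : ℂ | u.re < B}) ∩ ((P.erase w : Finset ℂ) : Set ℂ)ᶜ with hs
      have hso : IsOpen s := ((isOpen_lt continuous_const Complex.continuous_re).inter
        (isOpen_lt Complex.continuous_re continuous_const)).inter
        (P.erase w).finite_toSet.isClosed.isOpen_compl
      have hws : w ∈ s := ⟨⟨h3, h4⟩, by simp⟩
      have hsP : ∀ u ∈ s, u ≠ w → u ∉ P := by
        intro u hu hne hup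
        exact hu.2 (by simp [hne, hup])
      have hup := Complex.differentiableOn_update_limUnder_of_isLittleO (f := h) (s := s) (c := w)
        (hso.mem_nhds hws) ?_ ?_
      · have h5 : DifferentiableAt ℂ (Function.update h w (Filter.limUnder (nhdsWithin w {w}ᶜ) h)) w :=
          hup.differentiableAt (hso.mem_nhds hws)
        refine h5.congr_of_eventuallyEq ?_
        filter_upwards [hso.mem_nhds hws] with u hu
        by_cases huw : u = w
        · subst huw; simp [hw]
        · rw [if_neg (hsP u hu huw), Function.update_of_ne huw]
      · intro u hu
        exact (hhd u hu.1.1.1.le hu.1.1.2.le (hsP u hu.1 hu.2)).differentiableWithinAt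
      · have hrest : ContinuousAt (fun u => ∑ p ∈ P.erase w, r p * (1 / (u - p))) w := by
          apply tendsto_finsetSum
          intro p hp
          apply ContinuousAt.mul continuousAt_const
          apply ContinuousAt.div continuousAt_const (by fun_prop)
          exact sub_ne_zero.mpr (Finset.ne_of_mem_erase hp).symm
        have hwt : Filter.Tendsto (fun u : ℂ => u - w) (nhdsWithin w {w}ᶜ) (nhds 0) := by
          have : ContinuousAt (fun u : ℂ => u - w) w := by fun_prop
          have := this.tendsto
          rw [sub_self] at this
          exact this.mono_left nhdsWithin_le_nhds
        have ht : Filter.Tendsto (fun u => (u - w) * (h u - h w)) (nhdsWithin w {w}ᶜ) (nhds 0) := by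
          have t1 := ((hres w hw).sub_const (r w)).sub
            (hwt.mul ((hrest.tendsto.mono_left nhdsWithin_le_nhds).add_const (h w)))
          rw [sub_self, zero_mul, sub_zero] at t1
          refine t1.congr' ?_
          filter_upwards [self_mem_nhdsWithin] with u hu
          have hu : u - w ≠ 0 := sub_ne_zero.mpr hu
          have e : h u = f u - (r w * (1 / (u - w)) + ∑ p ∈ P.erase w, r p * (1 / (u - p))) := by
            rw [Finset.add_sum_erase P (fun p => r p * (1 / (u - p))) hw]
          rw [e]
          field_simp
          ring
        rw [Asymptotics.isLittleO_iff_tendsto']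
        · refine ht.congr fun u => ?_
          rw [div_inv_eq_mul, mul_comm]
        · filter_upwards [self_mem_nhdsWithin] with u hu h0
          exact absurd h0 (inv_ne_zero (sub_ne_zero.mpr hu))
    · refine (hhd w h1 h2 hw).congr_of_eventuallyEq ?_
      filter_upwards [hPo.mem_nhds hw] with u hu
      have hu : u ∉ P := fun h => hu (by exact_mod_cast h)
      rw [if_neg hu]
  · intro w hw
    simp [hw, hh]

open Complex Real Finset MeasureTheory

theorem VB.integrable_line {A B η c : ℝ} {f : ℂ → ℂ} (hη : 0 < η) (hb : VB A B (-η) f)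
    (hAc : A ≤ c) (hcB : c ≤ B) (hc : Continuous (fun t : ℝ => f ((c : ℂ) + t * Complex.I))) :
    Integrable (fun t : ℝ => f ((c : ℂ) + t * Complex.I)) := by
  obtain ⟨C, T, hC, hT, h⟩ := hb
  have hre : ∀ t : ℝ, ((c : ℂ) + t * Complex.I).re = c := fun t => by simp
  have him : ∀ t : ℝ, ((c : ℂ) + t * Complex.I).im = t := fun t => by simp
  have hI : IntegrableOn (fun t : ℝ => Real.exp (-η * t)) (Set.Ioi 0) := by
    have := integrableOn_exp_mul_Ioi (a := -η) (by linarith) 0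
    exact this
  have hI2 : IntegrableOn (fun t : ℝ => Real.exp (η * t)) (Set.Iic 0) := by
    have := integrableOn_exp_mul_Iic (a := η) (by linarith) 0
    exact this
  refine hc.locallyIntegrable.integrable_of_isBigO_atBot_atTop
    (g := fun t => Real.exp (η * t)) (g' := fun t => Real.exp (-η * t)) ?_ ?_ ?_ ?_
  · apply Asymptotics.IsBigO.of_bound C
    filter_upwards [Filter.eventually_le_atBot (-T)] with t ht
    have h1 := h (c + t * Complex.I) (by rw [hre]; exact hAc) (by rw [hre]; exact hcB)
      (by rw [him, abs_of_nonpos (by linarith)]; linarith)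
    rw [him, abs_of_nonpos (by linarith)] at h1
    rw [Real.norm_of_nonneg (Real.exp_pos _).le]
    convert h1 using 3; ring
  · exact ⟨Set.Iic 0, Filter.Iic_mem_atBot 0, hI2⟩
  · apply Asymptotics.IsBigO.of_bound C
    filter_upwards [Filter.eventually_ge_atTop T] with t ht
    have h1 := h (c + t * Complex.I) (by rw [hre]; exact hAc) (by rw [hre]; exact hcB)
      (by rw [him, abs_of_nonneg (by linarith)]; linarith)
    rw [him, abs_of_nonneg (by linarith)] at h1
    rwa [Real.norm_of_nonneg (Real.exp_pos _).le]
  · exact ⟨Set.Ioi 0, Filter.Ioi_mem_atTop 0, hI⟩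

theorem line_cont {f : ℂ → ℂ} {c : ℝ}
    (hd : ∀ w : ℂ, w.re = c → DifferentiableAt ℂ f w) :
    Continuous (fun t : ℝ => f ((c : ℂ) + t * Complex.I)) := by
  rw [continuous_iff_continuousAt]
  intro t
  have h1 : ContinuousAt f ((c : ℂ) + t * Complex.I) := (hd _ (by simp)).continuousAt
  have h2 : ContinuousAt (fun t : ℝ => (c : ℂ) + t * Complex.I) t := by fun_prop
  exact ContinuousAt.comp (f := fun t : ℝ => (c : ℂ) + t * Complex.I) (x := t) h1 h2

theorem line_shift {f : ℂ → ℂ} {A B η : ℝ} (hAB : A < B) (hη : 0 < η) (P : Finset ℂ) (r : ℂ → ℂ)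
    (hP : ∀ p ∈ P, A < p.re ∧ p.re < B)
    (hd : ∀ w : ℂ, A ≤ w.re → w.re ≤ B → w ∉ P → DifferentiableAt ℂ f w)
    (hres : ∀ p ∈ P, Filter.Tendsto (fun w => (w - p) * f w) (nhdsWithin p {p}ᶜ) (nhds (r p)))
    (hb : VB A B (-η) f) :
    (∫ t : ℝ, f ((B : ℂ) + t * Complex.I)) - (∫ t : ℝ, f ((A : ℂ) + t * Complex.I)) =
      2 * π * ∑ p ∈ P, r p := by
  have hAP : ∀ w : ℂ, w.re = A → w ∉ P := fun w h hw => by have := (hP w hw).1; linarith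
  have hBP : ∀ w : ℂ, w.re = B → w ∉ P := fun w h hw => by have := (hP w hw).2; linarith
  have hcA : Continuous (fun t : ℝ => f ((A : ℂ) + t * Complex.I)) := line_cont fun w h =>
    hd w h.ge (h.le.trans hAB.le) (hAP w h)
  have hcB : Continuous (fun t : ℝ => f ((B : ℂ) + t * Complex.I)) := line_cont fun w h =>
    hd w (hAB.le.trans h.ge) h.le (hBP w h)
  have hiA := hb.integrable_line hη le_rfl hAB.le hcA
  have hiB := hb.integrable_line hη hAB.le le_rfl hcB
  obtain ⟨g, hg, hgf⟩ := exists_remove_poles P r hP hd hres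
  -- vertical limits
  have hlim : ∀ (c : ℝ) (σ : ℂ), (∀ w : ℂ, w.re = c → w ∉ P) →
      Continuous (fun t : ℝ => f ((c : ℂ) + t * Complex.I)) →
      Integrable (fun t : ℝ => f ((c : ℂ) + t * Complex.I)) →
      (∀ p ∈ P, Filter.Tendsto (fun T : ℝ => ∫ t in (-T)..T, 1 / ((c : ℂ) + t * Complex.I - p))
        Filter.atTop (nhds σ)) →
      Filter.Tendsto (fun T : ℝ => ∫ t in (-T)..T, g ((c : ℂ) + t * Complex.I)) Filter.atTop
        (nhds ((∫ t : ℝ, f ((c : ℂ) + t * Complex.I)) - ∑ p ∈ P, r p * σ)) := by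
    intro c σ hcP hcc hci hl
    have t1 := intervalIntegral_tendsto_integral hci Filter.tendsto_neg_atTop_atBot Filter.tendsto_id
    have t2 := tendsto_finsetSum P (fun p hp => (hl p hp).const_mul (r p))
    refine (t1.sub t2).congr fun T => ?_
    have hcp : ∀ p ∈ P, Continuous fun t : ℝ => 1 / ((c : ℂ) + t * Complex.I - p) := by
      intro p hp
      refine continuous_const.div (by fun_prop) fun t => ?_
      refine sub_ne_zero.mpr ?_
      intro h
      exact hcP ((c : ℂ) + t * Complex.I) (by simp) (h ▸ hp)
    have e : (fun t : ℝ => g ((c : ℂ) + t * Complex.I)) = fun t : ℝ => f ((c : ℂ) + t * Complex.I) -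
        ∑ p ∈ P, r p * (1 / ((c : ℂ) + t * Complex.I - p)) := by
      ext t; exact hgf _ (hcP _ (by simp))
    rw [e, intervalIntegral.integral_sub, intervalIntegral.integral_finset_sum]
    · simp only [intervalIntegral.integral_const_mul, id]
    · intro p hp
      exact ((hcp p hp).const_mul (r p)).intervalIntegrable _ _
    · exact hcc.intervalIntegrable _ _
    · exact (continuous_finset_sum P fun p hp => (hcp p hp).const_mul (r p)).intervalIntegrable _ _
  have hlA := hlim A (-π) hAP hcA hiA (fun p hp => inv_line_neg (hP p hp).1)
  have hlB := hlim B π hBP hcB hiB (fun p hp => inv_line_pos (hP p hp).2)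
  -- horizontal limits
  obtain ⟨C, T0, hC, hT0, hbd⟩ := hb
  have hb0 : Filter.Tendsto (fun T : ℝ => (C * Real.exp (-η * T) + ∑ p ∈ P, ‖r p‖ * (1 / (T - |p.im|))) *
      |B - A|) Filter.atTop (nhds 0) := by
    have t1 : Filter.Tendsto (fun T : ℝ => Real.exp (-η * T)) Filter.atTop (nhds 0) := by
      apply Real.tendsto_exp_atBot.comp
      exact Filter.tendsto_id.const_mul_atTop_of_neg (by linarith)
    have t2 : ∀ p ∈ P, Filter.Tendsto (fun T : ℝ => ‖r p‖ * (1 / (T - |p.im|))) Filter.atTop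
        (nhds (‖r p‖ * 0)) := by
      intro p _
      apply Filter.Tendsto.const_mul
      simp only [one_div]
      apply tendsto_inv_atTop_zero.comp
      exact Filter.tendsto_atTop_add_const_right _ _ Filter.tendsto_id
    have t3 := ((t1.const_mul C).add (tendsto_finsetSum P t2)).mul_const |B - A|
    simpa using t3
  have hev : ∀ᶠ T : ℝ in Filter.atTop, T0 ≤ T ∧ ∀ p ∈ P, |p.im| < T := by
    refine (Filter.eventually_ge_atTop T0).and ?_
    rw [Filter.eventually_all_finset]
    exact fun p _ => Filter.eventually_gt_atTop _
  have hhor : ∀ y : ℝ → ℝ, (∀ T, |y T| = |T|) →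
      Filter.Tendsto (fun T : ℝ => ∫ x in A..B, g ((x : ℂ) + y T * Complex.I)) Filter.atTop (nhds 0) := by
    intro y hy
    refine squeeze_zero_norm' ?_ hb0
    filter_upwards [hev] with T hT
    have hTa : |y T| = T := by rw [hy, abs_of_nonneg (by linarith [hT.1])]
    apply intervalIntegral.norm_integral_le_of_norm_le_const
    intro x hx
    rw [Set.uIoc_of_le hAB.le] at hx
    have him : ((x : ℂ) + y T * Complex.I).im = y T := by simp
    have hre : ((x : ℂ) + y T * Complex.I).re = x := by simp
    have hnP : ((x : ℂ) + y T * Complex.I) ∉ P := by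
      intro h
      have := hT.2 _ h
      rw [him, hTa] at this
      exact lt_irrefl _ this
    rw [hgf _ hnP]
    refine (norm_sub_le _ _).trans (add_le_add ?_ ?_)
    · have := hbd _ (by rw [hre]; exact hx.1.le) (by rw [hre]; exact hx.2)
        (by rw [him, hTa]; exact hT.1)
      rwa [him, hTa] at this
    · refine (norm_sum_le _ _).trans (Finset.sum_le_sum fun p hp => ?_)
      rw [norm_mul, norm_div, norm_one]
      have h1 : T - |p.im| ≤ ‖(x : ℂ) + y T * Complex.I - p‖ := by
        have := Complex.abs_im_le_norm ((x : ℂ) + y T * Complex.I - p)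
        rw [Complex.sub_im, him] at this
        have h2 := abs_sub_abs_le_abs_sub (y T) p.im
        rw [hTa] at h2
        linarith
      have h3 := hT.2 p hp
      gcongr
  have hh1 := hhor (fun T => -T) (fun T => abs_neg T)
  have hh2 := hhor (fun T => T) (fun T => rfl)
  have hrect : ∀ T : ℝ, (∫ x in A..B, g ((x : ℂ) + ((-T : ℝ) : ℂ) * Complex.I)) -
      (∫ x in A..B, g ((x : ℂ) + T * Complex.I)) +
      Complex.I * (∫ t in (-T)..T, g ((B : ℂ) + t * Complex.I)) -
      Complex.I * (∫ t in (-T)..T, g ((A : ℂ) + t * Complex.I)) = 0 := by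
    intro T
    have := Complex.integral_boundary_rect_eq_zero_of_differentiableOn g ⟨A, -T⟩ ⟨B, T⟩ ?_
    · simpa using this
    · intro w hw
      apply DifferentiableAt.differentiableWithinAt
      have h1 : w.re ∈ Set.uIcc A B := hw.1
      rw [Set.uIcc_of_le hAB.le] at h1
      exact hg w h1.1 h1.2
  have htot := ((hh1.sub hh2).add (hlB.const_mul Complex.I)).sub (hlA.const_mul Complex.I)
  have h0 := tendsto_nhds_unique (htot.congr hrect) tendsto_const_nhds
  simp only [← Finset.sum_mul] at h0
  have hI := Complex.I_ne_zero
  have h1 : Complex.I * ((∫ t : ℝ, f ((B : ℂ) + t * Complex.I)) - (∫ t : ℝ, f ((A : ℂ) + t * Complex.I)) -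
      2 * π * ∑ p ∈ P, r p) = 0 := by
    rw [← h0]; ring
  have h2 := (mul_eq_zero.mp h1).resolve_left hI
  exact sub_eq_zero.mp h2

open Complex Real Finset MeasureTheory

theorem exp_re_pos {L : ℂ} (hL : |L.im| < π / 2) : 0 < (Complex.exp L).re := by
  rw [Complex.exp_re]
  have := abs_lt.mp hL
  exact mul_pos (Real.exp_pos _) (Real.cos_pos_of_mem_Ioo ⟨by linarith, by linarith⟩)

theorem gamma_line_diff {c : ℝ} (hc : 0 < c) : ∀ w : ℂ, w.re = c → DifferentiableAt ℂ Complex.Gamma w := by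
  intro w hw
  apply Complex.differentiableAt_Gamma
  rintro m rfl
  simp at hw
  have : (0:ℝ) ≤ m := m.cast_nonneg
  linarith

theorem exists_phi {x : ℝ} (hx : |x| < π / 2) : ∃ φ : ℝ, 0 ≤ φ ∧ φ < π / 2 ∧ |x| < φ := by
  obtain ⟨φ, h1, h2⟩ := exists_between hx
  exact ⟨φ, (abs_nonneg x).trans h1.le, h2, h1⟩

theorem gamma_exp_integrable {L : ℂ} (hL : |L.im| < π / 2) {c : ℝ} (hc : 0 < c) :
    Integrable (fun t : ℝ => Complex.Gamma (c + t * Complex.I) * Complex.exp (-(c + t * Complex.I) * L)) := by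
  obtain ⟨φ, h0, h1, h2⟩ := exists_phi hL
  have hb := (VB.gamma c c h0 h1).mul (VB.exp c c L)
  have hη : -φ + |L.im| = -(φ - |L.im|) := by ring
  rw [hη] at hb
  refine hb.integrable_line (sub_pos.mpr h2) le_rfl le_rfl ?_
  apply line_cont (f := fun w => Complex.Gamma w * Complex.exp (-w * L))
  intro w hw
  exact (gamma_line_diff hc w hw).mul (by fun_prop)

theorem mellin_exp {L : ℂ} (hL : |L.im| < π / 2) {w : ℂ} (hw : 0 < w.re) :
    mellin (fun x : ℝ => Complex.exp (-(Complex.exp L * x))) w =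
      Complex.Gamma w * Complex.exp (-w * L) := by
  unfold mellin
  simp only [smul_eq_mul]
  rw [gammaIntegral_complex hw (exp_re_pos hL), one_div, ← Complex.exp_neg,
    Complex.cpow_def_of_ne_zero (Complex.exp_ne_zero _), Complex.log_exp, mul_comm]
  · congr 2; ring
  · have := abs_lt.mp hL
    simp; linarith [Real.pi_pos]
  · have := abs_lt.mp hL
    simp; linarith [Real.pi_pos]

theorem exp_inversion {L : ℂ} (hL : |L.im| < π / 2) {c : ℝ} (hc : 0 < c) :
    (1 / (2 * π) : ℂ) * ∫ t : ℝ, Complex.Gamma (c + t * Complex.I) * Complex.exp (-(c + t * Complex.I) * L) =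
      Complex.exp (-Complex.exp L) := by
  have he : ∀ t : ℝ, mellin (fun x : ℝ => Complex.exp (-(Complex.exp L * x))) (c + t * Complex.I) =
      Complex.Gamma (c + t * Complex.I) * Complex.exp (-(c + t * Complex.I) * L) := by
    intro t
    exact mellin_exp hL (by simpa using hc)
  have h := mellinInv_mellin_eq c (fun x : ℝ => Complex.exp (-(Complex.exp L * x))) one_pos ?_ ?_ ?_
  · unfold mellinInv at h
    simp only [Complex.ofReal_one, Complex.one_cpow, one_smul, mul_one] at h
    rw [← h]
    simp_rw [he]
    rw [Complex.real_smul]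
    push_cast; ring
  · unfold MellinConvergent
    simp only [smul_eq_mul]
    exact cpow_mul_exp_integrable (by simpa using hc) (exp_re_pos hL)
  · unfold VerticalIntegrable
    simp_rw [he]
    exact gamma_exp_integrable hL hc
  · fun_prop

theorem exp_inversion_nat {L : ℂ} (hL : |L.im| < π / 2) {c : ℝ} (hc : 0 < c) {n : ℕ} (hn : n ≠ 0) :
    (1 / (2 * π) : ℂ) * ∫ t : ℝ, Complex.Gamma (c + t * Complex.I) * Complex.exp (-(c + t * Complex.I) * L)
      * (1 / (n : ℂ) ^ (c + t * Complex.I)) = Complex.exp (-(n * Complex.exp L)) := by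
  have hn0 : (n : ℂ) ≠ 0 := by exact_mod_cast hn
  have h := exp_inversion (L := L + Real.log n) (by rw [Complex.add_im, Complex.ofReal_im, add_zero]; exact hL) hc
  rw [Complex.exp_add, ← Complex.ofReal_exp, Real.exp_log (by positivity), mul_comm (Complex.exp L)] at h
  rw [Complex.ofReal_natCast] at h
  rw [← h]
  congr 2
  ext t
  rw [mul_add, Complex.exp_add, mul_assoc]
  congr 2
  rw [one_div, ← Complex.cpow_neg, Complex.cpow_def_of_ne_zero hn0, Complex.natCast_log, mul_comm]

theorem dirichlet_inversion {L : ℂ} (hL : |L.im| < π / 2) {c : ℝ} (hc : 0 < c) {b : ℕ → ℂ}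
    (hb0 : b 0 = 0) (hb : LSeriesSummable b c) :
    ∑' n : ℕ, Complex.exp (-(n * Complex.exp L)) * b n =
      (1 / (2 * π) : ℂ) * ∫ t : ℝ, Complex.Gamma (c + t * Complex.I) *
        Complex.exp (-(c + t * Complex.I) * L) * LSeries b (c + t * Complex.I) := by
  set G : ℝ → ℂ := fun t => Complex.Gamma (c + t * Complex.I) * Complex.exp (-(c + t * Complex.I) * L) with hG
  have hGi : Integrable G := gamma_exp_integrable hL hc
  have hnorm : ∀ (n : ℕ) (t : ℝ), ‖LSeries.term b (c + t * Complex.I) n‖ = ‖LSeries.term b c n‖ := by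
    intro n t
    rw [LSeries.norm_term_eq, LSeries.norm_term_eq]; simp
  have hcont : ∀ n : ℕ, Continuous fun t : ℝ => LSeries.term b (c + t * Complex.I) n := by
    intro n
    rcases eq_or_ne n 0 with rfl | hn
    · simp only [LSeries.term_zero]; exact continuous_const
    · simp only [LSeries.term_of_ne_zero hn]
      have hn0 : (n : ℂ) ≠ 0 := by exact_mod_cast hn
      refine continuous_const.div ?_ fun t => ?_
      · exact Continuous.const_cpow (by fun_prop) (Or.inl hn0)
      · rw [Complex.cpow_def_of_ne_zero hn0]; exact Complex.exp_ne_zero _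
  have hIntg : ∀ n : ℕ, Integrable fun t : ℝ => G t * LSeries.term b (c + t * Complex.I) n := by
    intro n
    refine hGi.mul_bdd (c := ‖LSeries.term b c n‖) (hcont n).aestronglyMeasurable ?_
    exact Filter.Eventually.of_forall fun t => (hnorm n t).le
  have hs := hasSum_integral_of_summable_integral_norm hIntg ?_
  · have h2 := hs.mul_left (1 / (2 * π) : ℂ)
    have e1 : ∀ t : ℝ, ∑' n : ℕ, G t * LSeries.term b (c + t * Complex.I) n =
        G t * LSeries b (c + t * Complex.I) := fun t => by rw [tsum_mul_left]; rfl
    simp only [e1] at h2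
    rw [← h2.tsum_eq]
    congr 1; ext n
    rcases eq_or_ne n 0 with rfl | hn
    · simp [hb0]
    · rw [← exp_inversion_nat hL hc hn, mul_assoc, ← integral_mul_const]
      congr 2; ext t
      rw [LSeries.term_of_ne_zero hn]
      ring
  · simp only [norm_mul, hnorm]
    simp only [integral_mul_const]
    exact hb.norm.mul_left _

noncomputable def Dz (s w : ℂ) : ℂ := riemannZeta (1 / 2 + w - s) * riemannZeta (1 / 2 + w + s)

theorem LSeries_cpow {a w : ℂ} (h : 1 < (w - a).re) :
    LSeriesSummable (fun n : ℕ => (n : ℂ) ^ a) w ∧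
    LSeries (fun n : ℕ => (n : ℂ) ^ a) w = riemannZeta (w - a) := by
  have e : ∀ n : ℕ, LSeries.term (fun n : ℕ => (n : ℂ) ^ a) w n = LSeries.term 1 (w - a) n := by
    intro n
    rcases eq_or_ne n 0 with rfl | hn
    · simp
    · have hn0 : (n : ℂ) ≠ 0 := by exact_mod_cast hn
      rw [LSeries.term_of_ne_zero hn, LSeries.term_of_ne_zero hn, Complex.cpow_sub _ _ hn0]
      simp
  have e' : LSeries.term (fun n : ℕ => (n : ℂ) ^ a) w = LSeries.term 1 (w - a) := funext e
  constructor
  · unfold LSeriesSummable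
    rw [e']
    exact LSeriesSummable_one_iff.mpr h
  · rw [← LSeries_one_eq_riemannZeta h]
    unfold LSeries
    rw [e']

noncomputable def acoef (j : ℕ) (s : ℂ) (n : ℕ) : ℂ :=
  (∑ d ∈ n.divisors, (d:ℂ)^(2*s)) * (n:ℂ) ^ (-(s + 1/2 + j))

theorem acoef_eq (j : ℕ) (s : ℂ) : acoef j s =
    LSeries.convolution (fun n : ℕ => (n : ℂ) ^ (s - 1 / 2 - j)) (fun n : ℕ => (n : ℂ) ^ (-s - 1 / 2 - j)) := by
  ext n
  rw [LSeries.convolution_def]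
  unfold acoef
  beta_reduce
  rw [Nat.sum_divisorsAntidiagonal (fun a b : ℕ => (a : ℂ) ^ (s - 1 / 2 - j) * (b : ℂ) ^ (-s - 1 / 2 - j)), sum_mul]
  refine Finset.sum_congr rfl fun d hd => ?_
  have hd1 := Nat.dvd_of_mem_divisors hd
  have hn := (Nat.mem_divisors.mp hd).2
  obtain ⟨e, rfl⟩ := hd1
  have hd0 : d ≠ 0 := left_ne_zero_of_mul hn
  have hd0' : (d : ℂ) ≠ 0 := by exact_mod_cast hd0
  rw [Nat.mul_div_cancel_left _ (Nat.pos_of_ne_zero hd0), Nat.cast_mul, Complex.natCast_mul_natCast_cpow,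
    ← mul_assoc, ← Complex.cpow_add _ _ hd0']
  congr 2 <;> ring

theorem acoef_LSeries (j : ℕ) {s w : ℂ} (hw : 1 / 2 + |s.re| < w.re) :
    LSeriesSummable (acoef j s) w ∧ LSeries (acoef j s) w = Dz s (w + j) := by
  have hj : (0:ℝ) ≤ j := j.cast_nonneg
  have h1 := LSeries_cpow (a := s - 1 / 2 - j) (w := w) (by
    simp; linarith [le_abs_self s.re])
  have h2 := LSeries_cpow (a := -s - 1 / 2 - j) (w := w) (by
    simp; linarith [neg_abs_le s.re])
  rw [acoef_eq]
  refine ⟨h1.1.convolution h2.1, ?_⟩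
  rw [LSeries_convolution' h1.1 h2.1, h1.2, h2.2, Dz]
  congr 2 <;> ring

theorem Sfun_eq (j : ℕ) (s z : ℂ) : Sfun j s z = (1/(2 * π * Complex.I)^j) *
    ∑' n : ℕ, Complex.exp (2 * π * Complex.I * n * z) * acoef j s n := by
  unfold Sfun acoef
  simp only [mul_assoc]

/-- Mellin-Barnes representation of the Dirichlet-type series. -/
theorem series_integral (j : ℕ) {s L : ℂ} (hL : |L.im| < π / 2) {c : ℝ} (hc : 1 / 2 + |s.re| < c) :
    ∑' n : ℕ, Complex.exp (-(n * Complex.exp L)) * acoef j s n =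
      (1 / (2 * π) : ℂ) * ∫ t : ℝ, Complex.Gamma (c + t * Complex.I) *
        Complex.exp (-(c + t * Complex.I) * L) * Dz s (c + t * Complex.I + j) := by
  have hc0 : 0 < c := by linarith [abs_nonneg s.re]
  rw [dirichlet_inversion hL hc0 (by simp [acoef]) (acoef_LSeries j (by simpa using hc)).1]
  congr 2; ext t
  rw [(acoef_LSeries j (by simpa using hc)).2]

open Complex Real Finset MeasureTheory
open Filter Topology

theorem gamma_residue (n : ℕ) :
    Tendsto (fun w : ℂ => (w + n) * Complex.Gamma w) (𝓝[≠] (-(n:ℂ))) (𝓝 ((-1) ^ n / (Nat.factorial n : ℂ))) := by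
  induction n with
  | zero => simpa using Complex.tendsto_self_mul_Gamma_nhds_zero
  | succ n ih =>
    have hm : Tendsto (fun w : ℂ => w + 1) (𝓝[≠] (-((n+1 : ℕ):ℂ))) (𝓝[≠] (-(n:ℂ))) := by
      rw [tendsto_nhdsWithin_iff]
      refine ⟨?_, ?_⟩
      · have : Tendsto (fun w : ℂ => w + 1) (𝓝 (-((n+1 : ℕ):ℂ))) (𝓝 (-((n+1 : ℕ):ℂ) + 1)) :=
          Continuous.tendsto (by fun_prop) _
        have e : (-((n+1 : ℕ):ℂ) + 1) = -n := by push_cast; ring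
        rw [e] at this
        exact this.mono_left nhdsWithin_le_nhds
      · filter_upwards [self_mem_nhdsWithin] with w hw h
        apply hw
        simp only [Set.mem_singleton_iff] at h ⊢
        push_cast
        linear_combination h
    have h0 : (-((n+1 : ℕ):ℂ)) ≠ 0 := by
      rw [neg_ne_zero]; exact_mod_cast Nat.succ_ne_zero n
    have h1 := (ih.comp hm).div (b := -((n+1 : ℕ):ℂ)) (g := fun w : ℂ => w)
      ((continuous_id.tendsto _).mono_left nhdsWithin_le_nhds) h0
    have e : (-1 : ℂ) ^ n / (Nat.factorial n : ℂ) / (-((n+1 : ℕ):ℂ)) =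
        (-1) ^ (n+1) / (Nat.factorial (n+1) : ℂ) := by
      have hf : (Nat.factorial n : ℂ) ≠ 0 := by exact_mod_cast Nat.factorial_ne_zero n
      have hn : (n : ℂ) + 1 ≠ 0 := by exact_mod_cast Nat.succ_ne_zero n
      rw [Nat.factorial_succ]
      push_cast
      rw [div_div, div_eq_div_iff (by simp [hf]; intro h; apply hn; linear_combination -h) (by simp [hf, hn])]
      ring
    rw [e] at h1
    refine h1.congr' ?_
    have : ∀ᶠ w : ℂ in 𝓝 (-((n+1 : ℕ):ℂ)), w ≠ 0 := isOpen_ne.mem_nhds h0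
    filter_upwards [nhdsWithin_le_nhds this] with w hw
    change (w + 1 + n) * Complex.Gamma (w + 1) / w = _
    rw [Complex.Gamma_add_one w hw]
    push_cast
    field_simp
    ring

theorem tendsto_punctured_add (p a q : ℂ) (h : p + a = q) : Tendsto (fun w : ℂ => w + a) (𝓝[≠] p) (𝓝[≠] q) := by
  subst h
  rw [tendsto_nhdsWithin_iff]
  refine ⟨(Continuous.tendsto (by fun_prop) _).mono_left nhdsWithin_le_nhds, ?_⟩
  filter_upwards [self_mem_nhdsWithin] with w hw h
  exact hw (by simpa using h)

noncomputable def fj (j : ℕ) (s L w : ℂ) : ℂ := Complex.Gamma (w - j) * Complex.exp (-w * L) * Dz s w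

theorem Dz_diff {s w : ℂ} (h1 : w ≠ 1 / 2 + s) (h2 : w ≠ 1 / 2 - s) : DifferentiableAt ℂ (Dz s) w := by
  have e1 : (1 / 2 + w - s) ≠ 1 := fun h => h1 (by linear_combination h)
  have e2 : (1 / 2 + w + s) ≠ 1 := fun h => h2 (by linear_combination h)
  have d1 : DifferentiableAt ℂ (fun w => riemannZeta (1 / 2 + w - s)) w :=
    DifferentiableAt.comp w (differentiableAt_riemannZeta e1) (by fun_prop)
  have d2 : DifferentiableAt ℂ (fun w => riemannZeta (1 / 2 + w + s)) w :=
    DifferentiableAt.comp w (differentiableAt_riemannZeta e2) (by fun_prop)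
  exact d1.mul d2

theorem gamma_sub_diff {j : ℕ} {w : ℂ} (h : ∀ m : ℕ, w - j ≠ -m) :
    DifferentiableAt ℂ (fun w => Complex.Gamma (w - j)) w :=
  DifferentiableAt.comp w (Complex.differentiableAt_Gamma _ h) (by fun_prop)

theorem fj_VB (j : ℕ) (s : ℂ) {L : ℂ} (hL : |L.im| < π / 2) (A B : ℝ) : ∃ η, 0 < η ∧ VB A B (-η) (fj j s L) := by
  set g := π / 2 - |L.im| with hg
  have hg0 : 0 < g := by rw [hg]; linarith
  have hp := Real.pi_le_four
  have hp0 := Real.pi_pos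
  have hg2 : g ≤ 2 := by rw [hg]; linarith [abs_nonneg L.im]
  have h1 := VB.gamma_sub (φ := π / 2 - g / 4) A B j (by rw [hg]; linarith [abs_nonneg L.im]) (by linarith)
  have h2 := VB.exp A B L
  have h3 := VB.comp_add (A := A) (B := B) (f := riemannZeta) (1 / 2 - s) (θ := g / 8) (by linarith)
    (VB.zeta _ _ (by linarith) (by linarith))
  have h4 := VB.comp_add (A := A) (B := B) (f := riemannZeta) (1 / 2 + s) (θ := g / 8) (by linarith)
    (VB.zeta _ _ (by linarith) (by linarith))
  have h5 := (h1.mul h2).mul (h3.mul h4)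
  refine ⟨g / 2, by linarith, ?_⟩
  convert h5 using 1
  · rw [hg]; ring
  · ext w
    simp only [fj, Dz]
    congr 3 <;> ring_nf

theorem contour_shift (j : ℕ) {s L : ℂ} (hs : |s.re| < 1 / 2) (hs0 : s ≠ 0) (hL : |L.im| < π / 2) {c : ℝ}
    (hc : 1 / 2 + |s.re| < c) (hc1 : c < 1) :
    (∫ t : ℝ, fj j s L (((c + j : ℝ) : ℂ) + t * Complex.I)) - (∫ t : ℝ, fj j s L (((-c : ℝ) : ℂ) + t * Complex.I)) =
    2 * π * ((∑ ℓ ∈ Finset.range (j + 1), (-1 : ℂ) ^ (j - ℓ) / (Nat.factorial (j - ℓ) : ℂ) *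
      (Complex.exp (-ℓ * L) * Dz s ℓ)) +
      Complex.Gamma (1 / 2 + s - j) * Complex.exp (-(1 / 2 + s) * L) * riemannZeta (1 + 2 * s) +
      Complex.Gamma (1 / 2 - s - j) * Complex.exp (-(1 / 2 - s) * L) * riemannZeta (1 - 2 * s)) := by
  classical
  obtain ⟨η, hη, hb⟩ := fj_VB j s hL (-c) (c + j)
  have hj : (0:ℝ) ≤ j := j.cast_nonneg
  have ⟨ha1, ha2⟩ := abs_lt.mp hs
  have hsa := abs_nonneg s.re
  set R : ℕ → ℂ := fun ℓ => (-1 : ℂ) ^ (j - ℓ) / (Nat.factorial (j - ℓ) : ℂ) *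
      (Complex.exp (-ℓ * L) * Dz s ℓ) with hR
  set R1 : ℂ := Complex.Gamma (1 / 2 + s - j) * Complex.exp (-(1 / 2 + s) * L) * riemannZeta (1 + 2 * s) with hR1
  set R2 : ℂ := Complex.Gamma (1 / 2 - s - j) * Complex.exp (-(1 / 2 - s) * L) * riemannZeta (1 - 2 * s) with hR2
  set r : ℂ → ℂ := fun p => (∑ ℓ ∈ Finset.range (j + 1), if p = ((ℓ : ℕ) : ℂ) then R ℓ else 0) +
    (if p = 1 / 2 + s then R1 else 0) + (if p = 1 / 2 - s then R2 else 0) with hr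
  set P : Finset ℂ := (Finset.range (j + 1)).image (fun ℓ : ℕ => (ℓ : ℂ)) ∪ {1 / 2 + s, 1 / 2 - s} with hPdef
  have n1 : ∀ n : ℤ, (1 / 2 + s : ℂ) ≠ n := by
    intro n h
    have := congrArg Complex.re h
    simp at this
    have h1 : (0:ℝ) < n := by linarith
    have h2 : (n:ℝ) < 1 := by linarith
    have h1' : 0 < n := by exact_mod_cast h1
    have h2' : n < 1 := by exact_mod_cast h2
    omega
  have n2 : ∀ n : ℤ, (1 / 2 - s : ℂ) ≠ n := by
    intro n h
    have := congrArg Complex.re h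
    simp at this
    have h1 : (0:ℝ) < n := by linarith
    have h2 : (n:ℝ) < 1 := by linarith
    have h1' : 0 < n := by exact_mod_cast h1
    have h2' : n < 1 := by exact_mod_cast h2
    omega
  have n1' : ∀ n : ℕ, (n : ℂ) ≠ 1 / 2 + s := fun n h => n1 n (by rw [← h]; simp)
  have n2' : ∀ n : ℕ, (n : ℂ) ≠ 1 / 2 - s := fun n h => n2 n (by rw [← h]; simp)
  have n12 : (1 / 2 + s : ℂ) ≠ 1 / 2 - s := fun h => hs0 (by linear_combination h / 2)
  have hPmem : ∀ p, p ∈ P ↔ (∃ ℓ : ℕ, ℓ < j + 1 ∧ (ℓ : ℂ) = p) ∨ p = 1 / 2 + s ∨ p = 1 / 2 - s := by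
    intro p; rw [hPdef, Finset.mem_union, Finset.mem_image, Finset.mem_insert, Finset.mem_singleton]; simp only [Finset.mem_range]
  have key := line_shift (A := -c) (B := c + j) (f := fj j s L) (by linarith) hη P r ?_ ?_ ?_ hb
  · rw [key]
    congr 1
    rw [hr]
    rw [sum_add_distrib, sum_add_distrib, sum_comm]
    congr 1
    · congr 1
      · refine sum_congr rfl fun ℓ hℓ => ?_
        rw [sum_ite_eq', if_pos]
        exact (hPmem _).mpr (Or.inl ⟨ℓ, by simpa using hℓ, rfl⟩)
      · rw [sum_ite_eq', if_pos]
        exact (hPmem _).mpr (Or.inr (Or.inl rfl))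
    · rw [sum_ite_eq', if_pos]
      exact (hPmem _).mpr (Or.inr (Or.inr rfl))
  · intro p hp
    rcases (hPmem p).mp hp with ⟨ℓ, hℓ, rfl⟩ | rfl | rfl
    · have h1 : (ℓ : ℝ) ≤ j := by exact_mod_cast Nat.lt_succ_iff.mp hℓ
      have h2 : (0:ℝ) ≤ ℓ := ℓ.cast_nonneg
      simp only [Complex.natCast_re]
      constructor <;> linarith
    · simp
      constructor <;> linarith [le_abs_self s.re]
    · simp
      constructor <;> linarith [neg_abs_le s.re]
  · intro w hA hB hw
    rw [hPmem] at hw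
    push Not at hw
    obtain ⟨w1, w2, w3⟩ := hw
    refine (DifferentiableAt.mul (gamma_sub_diff ?_) (by fun_prop)).mul (Dz_diff w2 w3)
    intro m hm
    have hw : w = ((j - m : ℤ) : ℂ) := by push_cast; linear_combination hm
    have hre : w.re = ((j - m : ℤ) : ℝ) := by rw [hw]; simp
    have hk : (-1 : ℝ) < ((j - m : ℤ) : ℝ) := by rw [← hre]; linarith
    have hk' : (-1 : ℤ) < j - m := by exact_mod_cast hk
    apply w1 (j - m) (by omega)
    rw [hw, Nat.cast_sub (by omega)]
    push_cast; ring
  · intro p hp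
    rcases (hPmem p).mp hp with ⟨ℓ, hℓ, rfl⟩ | rfl | rfl
    · have er : r ℓ = R ℓ := by
        simp only [hr, if_neg (n1' ℓ), if_neg (n2' ℓ), add_zero, Nat.cast_inj]
        rw [sum_ite_eq, if_pos (by simpa using hℓ)]
      rw [er]
      have hle : ℓ ≤ j := by omega
      have h1 := (gamma_residue (j - ℓ)).comp (tendsto_punctured_add (ℓ:ℂ) (-(j:ℂ)) (-((j - ℓ : ℕ) : ℂ))
        (by rw [Nat.cast_sub hle]; ring))
      have h2 : DifferentiableAt ℂ (fun w : ℂ => Complex.exp (-w * L) * Dz s w) (ℓ : ℂ) :=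
        DifferentiableAt.mul (by fun_prop) (Dz_diff (n1' ℓ) (n2' ℓ))
      have h3 := h1.mul (h2.continuousAt.tendsto.mono_left (nhdsWithin_le_nhds (s := {(ℓ:ℂ)}ᶜ)))
      refine h3.congr fun w => ?_
      simp only [Function.comp, fj]
      rw [Nat.cast_sub hle]
      ring_nf
    · have er : r (1 / 2 + s) = R1 := by
        simp only [hr, if_neg n12, if_true, add_zero]
        rw [sum_eq_zero (fun ℓ _ => if_neg (n1' ℓ).symm), zero_add]
      rw [er]
      have h1 := riemannZeta_residue_one.comp (tendsto_punctured_add (1 / 2 + s) (1 / 2 - s) 1 (by ring))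
      have h2 : DifferentiableAt ℂ (fun w : ℂ => Complex.Gamma (w - j) * Complex.exp (-w * L) *
          riemannZeta (1 / 2 + w + s)) (1 / 2 + s) := by
        refine DifferentiableAt.mul (DifferentiableAt.mul (gamma_sub_diff ?_) (by fun_prop)) ?_
        · intro m hm
          apply n1 (j - m); push_cast; linear_combination hm
        · refine DifferentiableAt.comp (g := riemannZeta) (1 / 2 + s) (differentiableAt_riemannZeta ?_) (by fun_prop)
          intro h; apply hs0; linear_combination h / 2
      have h3 := h1.mul (h2.continuousAt.tendsto.mono_left (nhdsWithin_le_nhds (s := {(1 / 2 + s : ℂ)}ᶜ)))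
      have e : (1 / 2 + (1 / 2 + s) + s) = 1 + 2 * s := by ring
      rw [one_mul, e] at h3
      refine h3.congr fun w => ?_
      simp only [Function.comp, fj, Dz]
      have e1 : w + (1 / 2 - s) = 1 / 2 + w - s := by ring
      rw [e1]
      ring
    · have er : r (1 / 2 - s) = R2 := by
        simp only [hr, if_neg n12.symm, if_true, add_zero]
        rw [sum_eq_zero (fun ℓ _ => if_neg (n2' ℓ).symm), zero_add]
      rw [er]
      have h1 := riemannZeta_residue_one.comp (tendsto_punctured_add (1 / 2 - s) (1 / 2 + s) 1 (by ring))
      have h2 : DifferentiableAt ℂ (fun w : ℂ => Complex.Gamma (w - j) * Complex.exp (-w * L) *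
          riemannZeta (1 / 2 + w - s)) (1 / 2 - s) := by
        refine DifferentiableAt.mul (DifferentiableAt.mul (gamma_sub_diff ?_) (by fun_prop)) ?_
        · intro m hm
          apply n2 (j - m); push_cast; linear_combination hm
        · refine DifferentiableAt.comp (g := riemannZeta) (1 / 2 - s) (differentiableAt_riemannZeta ?_) (by fun_prop)
          intro h; apply hs0; linear_combination -h / 2
      have h3 := h1.mul (h2.continuousAt.tendsto.mono_left (nhdsWithin_le_nhds (s := {(1 / 2 - s : ℂ)}ᶜ)))
      have e : (1 / 2 + (1 / 2 - s) - s) = 1 - 2 * s := by ring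
      rw [one_mul, e] at h3
      refine h3.congr fun w => ?_
      simp only [Function.comp, fj, Dz]
      have e1 : w + (1 / 2 + s) = 1 / 2 + w + s := by ring
      rw [e1]
      ring

open Complex Real Finset MeasureTheory
open Filter Topology

noncomputable def tj (s γ : ℂ) (j : ℕ) : ℂ :=
  ∏ ℓ ∈ Finset.range j, (((ℓ:ℂ) + 1/2)^2 - s^2) / (((ℓ:ℂ) + 1) * (γ + ℓ))

noncomputable def uj (s : ℂ) (σ : ℝ) (j : ℕ) : ℝ :=
  ∏ ℓ ∈ Finset.range j, (((ℓ:ℝ) + 1/2)^2 + ‖s‖^2) / (((ℓ:ℝ) + 1) * (σ + ℓ))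

theorem tj_eq (s γ : ℂ) (j : ℕ) : tj s γ j = Q2 j s / (Nat.factorial j : ℂ) / ∏ ℓ ∈ Finset.range j, (γ + ℓ) := by
  unfold tj Q2
  rw [prod_div_distrib, prod_mul_distrib, ← Finset.prod_range_add_one_eq_factorial, div_div]
  push_cast
  rfl

theorem tj_succ (s γ : ℂ) (j : ℕ) : tj s γ (j + 1) =
    tj s γ j * ((((j:ℂ) + 1/2)^2 - s^2) / (((j:ℂ) + 1) * (γ + j))) := prod_range_succ _ _

theorem uj_succ (s : ℂ) (σ : ℝ) (j : ℕ) : uj s σ (j + 1) =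
    uj s σ j * ((((j:ℝ) + 1/2)^2 + ‖s‖^2) / (((j:ℝ) + 1) * (σ + j))) := prod_range_succ _ _

theorem uj_nonneg (s : ℂ) {σ : ℝ} (hσ : 0 < σ) (j : ℕ) : 0 ≤ uj s σ j :=
  prod_nonneg fun ℓ _ => by positivity

theorem norm_tj_le (s : ℂ) {γ : ℂ} {σ : ℝ} (hσ : 0 < σ) (hγ : σ ≤ γ.re) (j : ℕ) : ‖tj s γ j‖ ≤ uj s σ j := by
  unfold tj uj
  rw [norm_prod]
  refine prod_le_prod (fun _ _ => norm_nonneg _) fun ℓ _ => ?_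
  rw [norm_div, norm_mul]
  have h1 : ‖((ℓ:ℂ) + 1/2)^2 - s^2‖ ≤ ((ℓ:ℝ) + 1/2)^2 + ‖s‖^2 := by
    refine (norm_sub_le _ _).trans ?_
    rw [norm_pow, norm_pow]
    have : ‖(ℓ:ℂ) + 1/2‖ = (ℓ:ℝ) + 1/2 := by
      rw [show (ℓ:ℂ) + 1/2 = (((ℓ:ℝ) + 1/2 : ℝ) : ℂ) by push_cast; ring, Complex.norm_real, Real.norm_of_nonneg (by positivity)]
    rw [this]
  have h2 : ‖(ℓ:ℂ) + 1‖ = (ℓ:ℝ) + 1 := by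
    rw [show (ℓ:ℂ) + 1 = (((ℓ:ℝ) + 1 : ℝ) : ℂ) by push_cast; ring, Complex.norm_real, Real.norm_of_nonneg (by positivity)]
  have h3 : σ + ℓ ≤ ‖γ + ℓ‖ := by
    refine le_trans ?_ (Complex.re_le_norm _)
    simpa using hγ
  rw [h2]
  gcongr

theorem uj_tele (s : ℂ) {σ : ℝ} (hσ : 0 < σ) (j : ℕ) : (j:ℝ) * uj s σ j - (j + 1 : ℕ) * uj s σ (j + 1) =
    uj s σ j * (((σ - 1) * j - 1 / 4 - ‖s‖ ^ 2) / (σ + j)) := by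
  rw [uj_succ]
  have h1 : σ + j ≠ 0 := by positivity
  have h2 : (j:ℝ) + 1 ≠ 0 := by positivity
  push_cast
  field_simp
  ring

theorem uj_summable (s : ℂ) {σ : ℝ} (hσ : 1 < σ) : Summable (uj s σ) := by
  have hσ0 : 0 < σ := by linarith
  -- eventually the ratio is at least (σ-1)/2
  obtain ⟨J, hJ⟩ := exists_nat_ge ((1 / 2 + 2 * ‖s‖ ^ 2 + σ * (σ - 1)) / (σ - 1))
  have hJ' : 1 / 2 + 2 * ‖s‖ ^ 2 + σ * (σ - 1) ≤ J * (σ - 1) := by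
    rwa [div_le_iff₀ (by linarith)] at hJ
  have key : ∀ j : ℕ, (σ - 1) / 2 * uj s σ (j + J) ≤
      ((j + J : ℕ) : ℝ) * uj s σ (j + J) - (j + J + 1 : ℕ) * uj s σ (j + J + 1) := by
    intro j
    rw [uj_tele s hσ0, mul_comm]
    refine mul_le_mul_of_nonneg_left ?_ (uj_nonneg s hσ0 _)
    rw [le_div_iff₀ (by positivity)]
    push_cast
    have : (0:ℝ) ≤ j * (σ - 1) := mul_nonneg j.cast_nonneg (by linarith)
    nlinarith
  rw [← summable_nat_add_iff J]
  have hs2 : Summable (fun j => (σ - 1) / 2 * uj s σ (j + J)) := by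
    refine summable_of_sum_range_le (c := (J:ℝ) * uj s σ J)
      (fun j => mul_nonneg (by linarith) (uj_nonneg s hσ0 _)) fun n => ?_
    refine (sum_le_sum fun j _ => key j).trans ?_
    have := Finset.sum_range_sub' (fun j => ((j + J : ℕ) : ℝ) * uj s σ (j + J)) n
    have e : ∀ i, ((i + 1 + J : ℕ) : ℝ) * uj s σ (i + 1 + J) = (i + J + 1 : ℕ) * uj s σ (i + J + 1) := by
      intro i; rw [show i + 1 + J = i + J + 1 by ring]
    simp only [e] at this
    rw [this]
    have h0 : 0 ≤ ((n + J : ℕ) : ℝ) * uj s σ (n + J) := mul_nonneg (Nat.cast_nonneg _) (uj_nonneg s hσ0 _)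
    simp only [zero_add]
    linarith
  exact (summable_mul_left_iff (by linarith)).mp hs2

theorem uj_tendsto (s : ℂ) {σ : ℝ} (hσ : 1 < σ) : Tendsto (fun j : ℕ => (j:ℝ) * uj s σ j) atTop (𝓝 0) := by
  have hσ0 : 0 < σ := by linarith
  have hsum := uj_summable s hσ
  have hd : Summable (fun j : ℕ => (j:ℝ) * uj s σ j - (j + 1 : ℕ) * uj s σ (j + 1)) := by
    refine Summable.of_norm_bounded (g := fun j => (σ - 1 + (1 / 4 + ‖s‖ ^ 2)/ σ) * uj s σ j) (hsum.mul_left _) fun j => ?_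
    rw [uj_tele s hσ0, norm_mul, Real.norm_of_nonneg (uj_nonneg s hσ0 _), mul_comm]
    refine mul_le_mul_of_nonneg_right ?_ (uj_nonneg s hσ0 _)
    have hj : (0:ℝ) ≤ j := j.cast_nonneg
    have hn : 0 ≤ ‖s‖ ^ 2 := by positivity
    have hp : 0 < σ + j := by positivity
    have h1 : ((σ - 1) * j) / (σ + j) ≤ σ - 1 := by
      rw [div_le_iff₀ hp]; nlinarith
    have h1' : 0 ≤ ((σ - 1) * j) / (σ + j) := div_nonneg (mul_nonneg (by linarith) hj) hp.le
    have h2 : (1 / 4 + ‖s‖ ^ 2) / (σ + j) ≤ (1 / 4 + ‖s‖ ^ 2) / σ := by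
      gcongr; linarith
    have h2' : 0 ≤ (1 / 4 + ‖s‖ ^ 2) / (σ + j) := by positivity
    rw [show ((σ - 1) * j - 1 / 4 - ‖s‖ ^ 2) / (σ + j) = ((σ - 1) * j) / (σ + j) - (1 / 4 + ‖s‖ ^ 2) / (σ + j) by
      rw [← sub_div]; ring_nf, Real.norm_eq_abs, abs_le]
    constructor <;> linarith
  have ht := hd.hasSum.tendsto_sum_nat
  simp only [Finset.sum_range_sub' (fun j : ℕ => (j:ℝ) * uj s σ j)] at ht
  have ht2 : Tendsto (fun j : ℕ => (j:ℝ) * uj s σ j) atTop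
      (𝓝 (-(∑' j : ℕ, ((j:ℝ) * uj s σ j - (j + 1 : ℕ) * uj s σ (j + 1))))) := by
    have := ht.neg
    simpa using this
  set l := -(∑' j : ℕ, ((j:ℝ) * uj s σ j - (j + 1 : ℕ) * uj s σ (j + 1))) with hl
  have hl0 : 0 ≤ l := ge_of_tendsto' ht2 fun j => mul_nonneg j.cast_nonneg (uj_nonneg s hσ0 _)
  rcases hl0.eq_or_lt with h | h
  · rwa [← h] at ht2
  · exfalso
    apply Real.not_summable_one_div_natCast
    refine Summable.of_norm_bounded_eventually_nat (g := fun j => (2 / l) * uj s σ j) (hsum.mul_left _) ?_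
    filter_upwards [ht2.eventually (lt_mem_nhds (show l / 2 < l by linarith)), eventually_gt_atTop 0] with j hj hj0
    have hj0' : (0:ℝ) < j := by exact_mod_cast hj0
    rw [Real.norm_of_nonneg (by positivity), div_le_iff₀ hj0']
    have : 2 / l * (l / 2) ≤ 2 / l * (j * uj s σ j) := mul_le_mul_of_nonneg_left hj.le (by positivity)
    have e : 2 / l * (l / 2) = 1 := by field_simp
    linarith

theorem tj_summable (s : ℂ) {γ : ℂ} (hγ : 1 < γ.re) : Summable (tj s γ) :=
  Summable.of_norm_bounded (uj_summable s hγ) fun j => norm_tj_le s (by linarith) le_rfl j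

theorem add_nat_ne_zero {γ : ℂ} (hγ : 0 < γ.re) (k : ℕ) : γ + k ≠ 0 := by
  intro h
  have := congrArg Complex.re h
  simp at this
  have hk : (0:ℝ) ≤ k := k.cast_nonneg
  linarith

theorem tj_shift (s : ℂ) {γ : ℂ} (hγ : 0 < γ.re) (j : ℕ) : tj s (γ + 1) j * (γ + j) = tj s γ j * γ := by
  induction j with
  | zero => simp [tj]
  | succ j ih =>
    rw [tj_succ, tj_succ]
    have h1 := add_nat_ne_zero hγ j
    have h2 := add_nat_ne_zero hγ (j + 1)
    have h3 : (j:ℂ) + 1 ≠ 0 := by exact_mod_cast Nat.succ_ne_zero j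
    have h4 : γ + 1 + j ≠ 0 := by
      intro h; apply h2; push_cast; linear_combination h
    have : tj s (γ + 1) j = tj s γ j * γ / (γ + j) := by rw [eq_div_iff h1, ih]
    rw [this]
    push_cast
    field_simp
    ring

theorem tj_tele (s : ℂ) {γ : ℂ} (hγ : 0 < γ.re) (j : ℕ) :
    γ * (γ - 1) * tj s γ j - (γ - 1 / 2 - s) * (γ - 1 / 2 + s) * tj s (γ + 1) j =
    γ * j * tj s γ j - γ * (j + 1 : ℕ) * tj s γ (j + 1) := by
  have h1 := add_nat_ne_zero hγ j
  have h3 : (j:ℂ) + 1 ≠ 0 := by exact_mod_cast Nat.succ_ne_zero j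
  have : tj s (γ + 1) j = tj s γ j * γ / (γ + j) := by rw [eq_div_iff h1, tj_shift s hγ]
  rw [this, tj_succ]
  push_cast
  field_simp
  ring

theorem gauss_rec (s : ℂ) {γ : ℂ} (hγ : 1 < γ.re) :
    γ * (γ - 1) * ∑' j, tj s γ j = (γ - 1 / 2 - s) * (γ - 1 / 2 + s) * ∑' j, tj s (γ + 1) j := by
  have hγ0 : 0 < γ.re := by linarith
  have h1 := (tj_summable s hγ).hasSum.mul_left (γ * (γ - 1))
  have h2 := (tj_summable s (γ := γ + 1) (by simp; linarith)).hasSum.mul_left ((γ - 1 / 2 - s) * (γ - 1 / 2 + s))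
  have h3 := (h1.sub h2).tendsto_sum_nat
  simp only [tj_tele s hγ0] at h3
  simp only [Finset.sum_range_sub' (fun j : ℕ => γ * (j:ℂ) * tj s γ j)] at h3
  have h4 : Tendsto (fun j : ℕ => γ * (j:ℂ) * tj s γ j) atTop (𝓝 0) := by
    refine squeeze_zero_norm (a := fun j : ℕ => ‖γ‖ * ((j:ℝ) * uj s γ.re j)) (fun j => ?_) ?_
    · rw [norm_mul, norm_mul, mul_assoc, Complex.norm_natCast]
      gcongr
      exact norm_tj_le s hγ0 le_rfl j
    · simpa using (uj_tendsto s hγ).const_mul ‖γ‖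
  have h5 := h4.const_sub (γ * ((0:ℕ):ℂ) * tj s γ 0)
  have := tendsto_nhds_unique h3 h5
  simp at this
  linear_combination this

theorem gauss_lim (s : ℂ) {γ : ℂ} (hγ : 1 < γ.re) :
    Tendsto (fun n : ℕ => ∑' j, tj s (γ + n) j) atTop (𝓝 1) := by
  have e : (1:ℂ) = ∑' j : ℕ, (if j = 0 then 1 else 0) := by rw [tsum_ite_eq]
  rw [e]
  refine tendsto_tsum_of_dominated_convergence (uj_summable s hγ) (fun j => ?_) (Eventually.of_forall fun n j => ?_)
  · rcases j with _ | j
    · simp [tj]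
    · simp only [Nat.add_eq_zero_iff, one_ne_zero, and_false, if_false]
      refine squeeze_zero_norm (a := fun n : ℕ => uj s γ.re j * (‖((j:ℂ) + 1/2)^2 - s^2‖ / ‖(j:ℂ) + 1‖ *
        (1 / ((n : ℝ) + 1)))) (fun n => ?_) ?_
      · rw [tj_succ, norm_mul, norm_div, norm_mul, ← div_div, div_eq_mul_one_div _ ‖γ + n + j‖]
        have h1 : (n:ℝ) + 1 ≤ ‖γ + n + j‖ := by
          refine le_trans ?_ (Complex.re_le_norm _)
          have hj : (0:ℝ) ≤ j := j.cast_nonneg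
          simp
          linarith
        gcongr
        · exact uj_nonneg s (by linarith) _
        · exact norm_tj_le s (by linarith) (by simp) j
      · simpa using (tendsto_one_div_add_atTop_nhds_zero_nat (𝕜 := ℝ)).const_mul
          (‖((j:ℂ) + 1/2)^2 - s^2‖ / ‖(j:ℂ) + 1‖) |>.const_mul (uj s γ.re j)
  · exact norm_tj_le s (by linarith) (by simp) j

theorem gauss_iter (s : ℂ) {γ : ℂ} (hγ : 1 < γ.re) (n : ℕ) :
    (∏ k ∈ range n, (γ + k)) * (∏ k ∈ range n, (γ - 1 + k)) * ∑' j, tj s γ j =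
    (∏ k ∈ range n, (γ - 1 / 2 - s + k)) * (∏ k ∈ range n, (γ - 1 / 2 + s + k)) * ∑' j, tj s (γ + n) j := by
  induction n with
  | zero => simp
  | succ n ih =>
    have h := gauss_rec s (γ := γ + n) (by simp; have : (0:ℝ) ≤ n := n.cast_nonneg
                                           linarith)
    simp only [prod_range_succ]
    push_cast
    rw [← add_assoc]
    linear_combination (γ + n) * (γ - 1 + n) * ih +
      (∏ k ∈ range n, (γ - 1 / 2 - s + k)) * (∏ k ∈ range n, (γ - 1 / 2 + s + k)) * h

theorem gauss_sum {s γ : ℂ} (hs : |s.re| < 1 / 2) (hγ : 1 < γ.re) :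
    (∑' j, tj s γ j) * (Complex.Gamma (γ - 1 / 2 - s) * Complex.Gamma (γ - 1 / 2 + s)) =
      Complex.Gamma γ * Complex.Gamma (γ - 1) := by
  have ⟨ha1, ha2⟩ := abs_lt.mp hs
  have r1 : 0 < (γ - 1 / 2 - s).re := by simp; linarith
  have r2 : 0 < (γ - 1 / 2 + s).re := by simp; linarith
  have r3 : 0 < γ.re := by linarith
  have r4 : 0 < (γ - 1).re := by simp; linarith
  have l1 := (Complex.GammaSeq_tendsto_Gamma (γ - 1 / 2 - s)).mul (Complex.GammaSeq_tendsto_Gamma (γ - 1 / 2 + s))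
  have l2 := (Complex.GammaSeq_tendsto_Gamma γ).mul (Complex.GammaSeq_tendsto_Gamma (γ - 1))
  have l3 := l2.mul ((gauss_lim s hγ).comp (tendsto_add_atTop_nat 1))
  have l4 := l1.const_mul (∑' j, tj s γ j)
  rw [mul_one] at l3
  refine tendsto_nhds_unique l4 (l3.congr' ?_)
  filter_upwards [eventually_gt_atTop 0] with n hn
  have hn0 : (n:ℂ) ≠ 0 := by exact_mod_cast hn.ne'
  have h := gauss_iter s hγ (n + 1)
  simp only [Function.comp, Complex.GammaSeq]
  have p1 : ∏ k ∈ range (n + 1), (γ - 1 / 2 - s + k) ≠ 0 := prod_ne_zero_iff.mpr fun k _ => add_nat_ne_zero r1 k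
  have p2 : ∏ k ∈ range (n + 1), (γ - 1 / 2 + s + k) ≠ 0 := prod_ne_zero_iff.mpr fun k _ => add_nat_ne_zero r2 k
  have p3 : ∏ k ∈ range (n + 1), (γ + k) ≠ 0 := prod_ne_zero_iff.mpr fun k _ => add_nat_ne_zero r3 k
  have p4 : ∏ k ∈ range (n + 1), (γ - 1 + k) ≠ 0 := prod_ne_zero_iff.mpr fun k _ => add_nat_ne_zero r4 k
  have e : (n:ℂ) ^ γ * (n:ℂ) ^ (γ - 1) = (n:ℂ) ^ (γ - 1 / 2 - s) * (n:ℂ) ^ (γ - 1 / 2 + s) := by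
    rw [← Complex.cpow_add _ _ hn0, ← Complex.cpow_add _ _ hn0]; congr 1; ring
  generalize (∏ k ∈ range (n + 1), (γ - 1 / 2 - s + k)) = P1 at *
  generalize (∏ k ∈ range (n + 1), (γ - 1 / 2 + s + k)) = P2 at *
  generalize (∏ k ∈ range (n + 1), (γ + k)) = P3 at *
  generalize (∏ k ∈ range (n + 1), (γ - 1 + k)) = P4 at *
  generalize (∑' j, tj s γ j) = X at *
  generalize (∑' j, tj s (γ + (n + 1 : ℕ)) j) = Y at *
  generalize (n:ℂ) ^ γ = A at *
  generalize (n:ℂ) ^ (γ - 1) = B at *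
  generalize (n:ℂ) ^ (γ - 1 / 2 - s) = C at *
  generalize (n:ℂ) ^ (γ - 1 / 2 + s) = D at *
  generalize (Nat.factorial n : ℂ) = N at *
  rw [div_mul_div_comm, div_mul_div_comm, div_mul_eq_mul_div, ← mul_div_assoc,
    div_eq_div_iff (mul_ne_zero p3 p4) (mul_ne_zero p1 p2)]
  linear_combination (-N ^ 2 * A * B) * h + (N ^ 2 * P3 * P4 * X) * e

open Complex Real Finset MeasureTheory
open Filter Topology

theorem gamma_sub_prod {w : ℂ} (hw : w.re < 0) (j : ℕ) :
    Complex.Gamma (w - j) * ((-1) ^ j * ∏ k ∈ range j, (1 - w + k)) = Complex.Gamma w := by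
  induction j with
  | zero => simp
  | succ j ih =>
    rw [← ih, prod_range_succ]
    have h : w - (j + 1 : ℕ) ≠ 0 := by
      intro h
      have := congrArg Complex.re h
      simp at this
      have hk : (0:ℝ) ≤ j := j.cast_nonneg
      linarith
    have h2 := Complex.Gamma_add_one _ h
    rw [show w - (j + 1 : ℕ) + 1 = w - j by push_cast; ring] at h2
    rw [h2]
    push_cast
    ring

theorem coef_fj {s L w : ℂ} (hw : w.re < 0) (j : ℕ) :
    (-1 : ℂ) ^ j * Q2 j s / (Nat.factorial j : ℂ) * fj j s L w = tj s (1 - w) j * fj 0 s L w := by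
  unfold fj
  rw [Nat.cast_zero, sub_zero, ← gamma_sub_prod hw j, tj_eq]
  have hp : ∏ k ∈ range j, (1 - w + k) ≠ 0 :=
    prod_ne_zero_iff.mpr fun k _ => add_nat_ne_zero (by simp; linarith) k
  have h1 : ((-1 : ℂ) ^ j) * (-1) ^ j = 1 := by rw [← mul_pow]; simp
  have hf : (Nat.factorial j : ℂ) ≠ 0 := by exact_mod_cast Nat.factorial_ne_zero j
  field_simp

theorem Dz_neg {s v : ℂ} (hs : |s.re| < 1 / 2) (hv : 1 / 2 + |s.re| < v.re) :
    Dz s (-v) = 2 * Complex.exp (-(1 + 2 * v) * Real.log (2 * π)) * (Complex.Gamma (1 / 2 + v - s) * Complex.Gamma (1 / 2 + v + s)) *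
      (Complex.cos (π * s) - Complex.sin (π * v)) * Dz s v := by
  have ha1 := le_abs_self s.re
  have ha2 := neg_abs_le s.re
  have h2pi : (2 * π : ℂ) ≠ 0 := by exact_mod_cast (by positivity : (2 * π : ℝ) ≠ 0)
  have aux : ∀ x : ℂ, 1 < x.re → riemannZeta (1 - x) =
      2 * Complex.exp (-x * Real.log (2 * π)) * Complex.Gamma x * Complex.cos (π * x / 2) * riemannZeta x := by
    intro x hx
    rw [riemannZeta_one_sub]
    · rw [Complex.cpow_def_of_ne_zero h2pi, Complex.ofReal_log (by positivity)]
      push_cast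
      rw [mul_comm (Complex.log _)]
    · intro n h
      rw [h] at hx
      simp at hx
      have hk : (0:ℝ) ≤ n := n.cast_nonneg
      linarith
    · intro h
      rw [h] at hx
      simp at hx
  have e1 := aux (1 / 2 + v + s) (by simp; linarith)
  have e2 := aux (1 / 2 + v - s) (by simp; linarith)
  have hc : 2 * Complex.cos (π * (1 / 2 + v + s) / 2) * Complex.cos (π * (1 / 2 + v - s) / 2) =
      Complex.cos (π * s) - Complex.sin (π * v) := by
    have h1 : π * s = π * (1 / 2 + v + s) / 2 - π * (1 / 2 + v - s) / 2 := by ring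
    have h2 : Complex.sin (π * v) = - Complex.cos (π * (1 / 2 + v + s) / 2 + π * (1 / 2 + v - s) / 2) := by
      rw [← Complex.cos_pi_div_two_sub, ← Complex.cos_pi_sub]
      congr 1; ring
    rw [h2, h1, Complex.cos_add, Complex.cos_sub]
    ring
  have he : Complex.exp (-(1 + 2 * v) * Real.log (2 * π)) =
      Complex.exp (-(1 / 2 + v + s) * Real.log (2 * π)) * Complex.exp (-(1 / 2 + v - s) * Real.log (2 * π)) := by
    rw [← Complex.exp_add]; congr 1; ring
  unfold Dz
  rw [show 1 / 2 + -v - s = 1 - (1 / 2 + v + s) by ring, show 1 / 2 + -v + s = 1 - (1 / 2 + v - s) by ring, e1, e2, ← hc, he]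
  ring

theorem sin_pi_ne {v : ℂ} (h0 : 0 < v.re) (h1 : v.re < 1) : Complex.sin (π * v) ≠ 0 := by
  intro h
  rw [Complex.sin_eq_zero_iff] at h
  obtain ⟨k, hk⟩ := h
  have hp : (π : ℂ) ≠ 0 := by exact_mod_cast Real.pi_ne_zero
  have : v = k := mul_left_cancel₀ hp (by rw [hk]; ring)
  rw [this] at h0 h1
  simp at h0 h1
  have a : 0 < k := by exact_mod_cast h0
  have b : k < 1 := by exact_mod_cast h1
  omega

theorem pointwise {s L v : ℂ} (hs : |s.re| < 1 / 2) (hv : 1 / 2 + |s.re| < v.re) (hv1 : v.re < 1) :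
    (∑' j, tj s (1 + v) j) * fj 0 s L (-v) =
      fj 0 s (2 * Real.log (2 * π) - L) v - Complex.cos (π * s) / Complex.sin (π * v) *
        fj 0 s (2 * Real.log (2 * π) - L) v := by
  have hv0 : 0 < v.re := by linarith [abs_nonneg s.re]
  have hsin := sin_pi_ne hv0 hv1
  have g := gauss_sum (γ := 1 + v) hs (by simp; linarith)
  rw [show 1 + v - 1 / 2 - s = 1 / 2 + v - s by ring, show 1 + v - 1 / 2 + s = 1 / 2 + v + s by ring,
    show 1 + v - 1 = v by ring] at g
  have r := Complex.Gamma_mul_Gamma_one_sub (-v)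
  rw [mul_neg, Complex.sin_neg, sub_neg_eq_add] at r
  have he : Complex.exp (-v * (2 * Real.log (2 * π) - L)) * Complex.exp (-(Real.log (2 * π))) =
      Complex.exp (-(1 + 2 * v) * Real.log (2 * π)) * Complex.exp (- -v * L) := by
    rw [← Complex.exp_add, ← Complex.exp_add]; congr 1; ring
  have he2 : Complex.exp (-(Real.log (2 * π) : ℂ)) = 1 / (2 * π) := by
    rw [Complex.exp_neg, ← Complex.ofReal_exp, Real.exp_log (by positivity)]
    push_cast; rw [one_div]
  have hp : (π : ℂ) ≠ 0 := by exact_mod_cast Real.pi_ne_zero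
  rw [he2] at he
  unfold fj
  rw [Nat.cast_zero, sub_zero, sub_zero, Dz_neg hs hv]
  have key : (∑' j, tj s (1 + v) j) * (Complex.Gamma (-v) * Complex.exp (- -v * L) *
      (2 * Complex.exp (-(1 + 2 * v) * Real.log (2 * π)) * (Complex.Gamma (1 / 2 + v - s) * Complex.Gamma (1 / 2 + v + s)) *
      (Complex.cos (π * s) - Complex.sin (π * v)) * Dz s v)) =
      2 * (Complex.Gamma (-v) * Complex.Gamma (1 + v)) * Complex.Gamma v *
       (Complex.exp (-(1 + 2 * v) * Real.log (2 * π)) * Complex.exp (- -v * L)) *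
      (Complex.cos (π * s) - Complex.sin (π * v)) * Dz s v := by
    linear_combination (Complex.Gamma (-v) * Complex.exp (- -v * L) * 2 * Complex.exp (-(1 + 2 * v) * Real.log (2 * π)) *
      (Complex.cos (π * s) - Complex.sin (π * v)) * Dz s v) * g
  rw [key, r, ← he]
  field_simp
  ring

theorem fj_line_integrable {j : ℕ} {s L : ℂ} (hL : |L.im| < π / 2) {c : ℝ} (hg : ∀ k : ℤ, c ≠ k)
    (h1 : c ≠ 1 / 2 + s.re) (h2 : c ≠ 1 / 2 - s.re) :
    Continuous (fun t : ℝ => fj j s L ((c : ℂ) + t * Complex.I)) ∧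
    Integrable (fun t : ℝ => fj j s L ((c : ℂ) + t * Complex.I)) := by
  have hc : Continuous (fun t : ℝ => fj j s L ((c : ℂ) + t * Complex.I)) := by
    refine line_cont fun w hw => ?_
    refine (DifferentiableAt.mul (gamma_sub_diff ?_) (by fun_prop)).mul (Dz_diff ?_ ?_)
    · intro m hm
      apply hg (j - m)
      rw [← hw]
      have := congrArg Complex.re hm
      simp at this
      push_cast
      linarith
    · intro h; apply h1; rw [← hw, h]; simp
    · intro h; apply h2; rw [← hw, h]; simp
  obtain ⟨η, hη, hb⟩ := fj_VB j s hL c c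
  exact ⟨hc, VB.integrable_line hη hb le_rfl le_rfl hc⟩

theorem sin_line_bound {c : ℝ} (hc0 : 0 < c) (hc1 : c < 1) (t : ℝ) :
    Real.sin (π * c) ≤ ‖Complex.sin (π * (c + t * Complex.I))‖ := by
  have h0 : 0 < Real.sin (π * c) := Real.sin_pos_of_pos_of_lt_pi (by positivity) (by nlinarith [Real.pi_pos])
  have e : (Complex.sin (π * (c + t * Complex.I))).re = Real.sin (π * c) * Real.cosh (π * t) := by
    rw [show (π * (c + t * Complex.I) : ℂ) = ((π * c : ℝ) : ℂ) + ((π * t : ℝ) : ℂ) * Complex.I by push_cast; ring,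
      Complex.sin_add_mul_I]
    rw [← Complex.ofReal_sin, ← Complex.ofReal_cos, ← Complex.ofReal_cosh, ← Complex.ofReal_sinh]
    rw [← Complex.ofReal_mul, ← Complex.ofReal_mul, Complex.add_re, Complex.ofReal_re, Complex.re_ofReal_mul, Complex.I_re]
    ring
  refine le_trans ?_ (Complex.re_le_norm _)
  rw [e]
  nlinarith [Real.one_le_cosh (π * t)]

theorem sum_side {s L : ℂ} (hs : |s.re| < 1 / 2) (hL : |L.im| < π / 2) {c : ℝ}
    (hc : 1 / 2 + |s.re| < c) (hc1 : c < 1) :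
    HasSum (fun j : ℕ => (-1 : ℂ) ^ j * Q2 j s / (Nat.factorial j : ℂ) *
      ∫ t : ℝ, fj j s L (((-c : ℝ) : ℂ) + t * Complex.I))
    (∫ t : ℝ, (fj 0 s (2 * Real.log (2 * π) - L) (c + t * Complex.I) -
      Complex.cos (π * s) / Complex.sin (π * (c + t * Complex.I)) *
        fj 0 s (2 * Real.log (2 * π) - L) (c + t * Complex.I))) := by
  have ha0 := abs_nonneg s.re
  have ha1 := le_abs_self s.re
  have ha2 := neg_abs_le s.re
  have hIntg : ∀ j : ℕ, Integrable (fun t : ℝ => fj j s L (((-c : ℝ) : ℂ) + t * Complex.I)) := fun j => by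
    refine (fj_line_integrable hL ?_ ?_ ?_).2
    · intro k hk
      have a : (-1 : ℝ) < k := by linarith
      have b : (k : ℝ) < 0 := by linarith
      have a' : -1 < k := by exact_mod_cast a
      have b' : k < 0 := by exact_mod_cast b
      omega
    · intro h; linarith
    · intro h; linarith
  have hre : ∀ t : ℝ, (((-c : ℝ) : ℂ) + t * Complex.I).re = -c := fun t => by simp
  have hE : ∀ (j : ℕ) (t : ℝ), (-1 : ℂ) ^ j * Q2 j s / (Nat.factorial j : ℂ) * fj j s L (((-c : ℝ) : ℂ) + t * Complex.I) =
      tj s (1 - (((-c : ℝ) : ℂ) + t * Complex.I)) j * fj 0 s L (((-c : ℝ) : ℂ) + t * Complex.I) :=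
    fun j t => coef_fj (by rw [hre]; linarith) j
  have main := hasSum_integral_of_summable_integral_norm (μ := volume)
    (F := fun (j : ℕ) (t : ℝ) => (-1 : ℂ) ^ j * Q2 j s / (Nat.factorial j : ℂ) * fj j s L (((-c : ℝ) : ℂ) + t * Complex.I))
    (fun j => (hIntg j).const_mul _) ?_
  · simp only [integral_const_mul] at main
    have hval : (∫ t : ℝ, ∑' j : ℕ, (-1 : ℂ) ^ j * Q2 j s / (Nat.factorial j : ℂ) *
        fj j s L (((-c : ℝ) : ℂ) + t * Complex.I)) =
        (∫ t : ℝ, (fj 0 s (2 * Real.log (2 * π) - L) (c + t * Complex.I) -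
      Complex.cos (π * s) / Complex.sin (π * (c + t * Complex.I)) *
        fj 0 s (2 * Real.log (2 * π) - L) (c + t * Complex.I))) := by
      rw [← integral_neg_eq_self]
      congr 1; ext t
      simp only [hE]
      rw [tsum_mul_right]
      rw [← pointwise hs (by simpa using hc) (by simpa using hc1)]
      push_cast
      congr 2
      · congr 1; ext j; congr 1; ring
      · ring
    rw [← hval]
    exact main
  · refine Summable.of_nonneg_of_le (fun j => integral_nonneg fun t => norm_nonneg _)
      (f := fun j => uj s (1 + c) j * ∫ t : ℝ, ‖fj 0 s L (((-c : ℝ) : ℂ) + t * Complex.I)‖) (fun j => ?_)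
      ((uj_summable s (by linarith)).mul_right _)
    rw [← integral_const_mul]
    refine integral_mono ((hIntg j).const_mul _).norm ((hIntg 0).norm.const_mul _) fun t => ?_
    beta_reduce
    rw [hE, norm_mul]
    gcongr
    exact norm_tj_le s (by linarith) (by simp) j

open Complex Real Finset MeasureTheory
open Filter Topology

noncomputable def LL (z : ℂ) : ℂ := (Real.log (2*π) : ℂ) + π * Complex.I/2 - Complex.log z

theorem LL_im {z : ℂ} (hz : 0 < z.im) : |(LL z).im| < π / 2 := by
  have h1 : 0 < Complex.arg z := by
    rcases (Complex.arg_nonneg_iff.mpr hz.le).eq_or_lt with h | h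
    · exfalso
      have := (Complex.arg_eq_zero_iff.mp h.symm).2
      linarith
    · exact h
  have h2 : Complex.arg z < π := by
    refine lt_of_le_of_ne (Complex.arg_le_pi z) fun h => ?_
    have := (Complex.arg_eq_pi_iff.mp h).2
    linarith
  have e : (LL z).im = π / 2 - Complex.arg z := by
    unfold LL
    rw [show (π * Complex.I / 2 : ℂ) = ((π / 2 : ℝ) : ℂ) * Complex.I by push_cast; ring]
    rw [Complex.sub_im, Complex.add_im, Complex.ofReal_im, Complex.im_ofReal_mul, Complex.I_im, Complex.log_im]
    ring
  rw [e, abs_lt]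
  constructor <;> linarith

theorem exp_LL {z : ℂ} (hz : z ≠ 0) : Complex.exp (LL z) = 2 * π * Complex.I / z := by
  unfold LL
  rw [Complex.exp_sub, Complex.exp_add, ← Complex.ofReal_exp, Real.exp_log (by positivity), Complex.exp_log hz,
    show (π * Complex.I / 2 : ℂ) = π / 2 * Complex.I by ring, Complex.exp_pi_div_two_mul_I]
  push_cast; ring

theorem exp_neg_nat_LL {z : ℂ} (hz : z ≠ 0) (j : ℕ) : Complex.exp (-j * LL z) = (z / (2 * π * Complex.I)) ^ j := by
  rw [show -(j:ℂ) * LL z = j * (-(LL z)) by ring, Complex.exp_nat_mul, Complex.exp_neg, exp_LL hz, inv_div]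

theorem exp_LL2 {z : ℂ} (hz : z ≠ 0) : Complex.exp (2 * Real.log (2 * π) - LL z) = -(2 * π * Complex.I * z) := by
  have hp : (π : ℂ) ≠ 0 := by exact_mod_cast Real.pi_ne_zero
  rw [Complex.exp_sub, exp_LL hz, two_mul, Complex.exp_add, ← Complex.ofReal_exp, Real.exp_log (by positivity)]
  push_cast
  field_simp
  rw [Complex.I_sq]; ring

theorem Sfun_inv (j : ℕ) {s z : ℂ} (hz : 0 < z.im) {c : ℝ} (hc : 1 / 2 + |s.re| < c) :
    z ^ j * Sfun j s (-1 / z) = (1 / (2 * π) : ℂ) *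
      ∫ t : ℝ, fj j s (LL z) (((c + j : ℝ) : ℂ) + t * Complex.I) := by
  have hz0 : z ≠ 0 := fun h => by rw [h] at hz; simp at hz
  have h := series_integral j (L := LL z) (LL_im hz) hc
  rw [Sfun_eq]
  have e : ∀ n : ℕ, Complex.exp (2 * π * Complex.I * n * (-1 / z)) * acoef j s n =
      Complex.exp (-(n * Complex.exp (LL z))) * acoef j s n := by
    intro n
    rw [exp_LL hz0]; congr 2; ring
  simp only [e]
  rw [h, ← mul_assoc, mul_one_div, ← div_pow, ← exp_neg_nat_LL hz0, mul_left_comm, ← integral_const_mul]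
  congr 2; ext t
  unfold fj
  rw [show (((c + j : ℝ) : ℂ) + t * Complex.I) - j = c + t * Complex.I by push_cast; ring,
    show (((c + j : ℝ) : ℂ) + t * Complex.I) = c + t * Complex.I + j by push_cast; ring,
    show -(c + t * Complex.I + j) * LL z = -j * LL z + -(c + t * Complex.I) * LL z by ring, Complex.exp_add]
  ring

theorem Sfun_zero {s z : ℂ} (hz : 0 < z.im) {c : ℝ} (hc : 1 / 2 + |s.re| < c) :
    Sfun 0 s z = (1 / (2 * π) : ℂ) *
      ∫ t : ℝ, fj 0 s (2 * Real.log (2 * π) - LL z) (c + t * Complex.I) := by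
  have hz0 : z ≠ 0 := fun h => by rw [h] at hz; simp at hz
  have him : |(2 * Real.log (2 * π) - LL z : ℂ).im| < π / 2 := by
    have : (2 * Real.log (2 * π) - LL z : ℂ).im = - (LL z).im := by
      rw [Complex.sub_im, show (2 * Real.log (2 * π) : ℂ) = ((2 * Real.log (2 * π) : ℝ) : ℂ) by push_cast; rfl,
        Complex.ofReal_im, zero_sub]
    rw [this, abs_neg]
    exact LL_im hz
  have h := series_integral 0 him hc
  rw [Sfun_eq]
  have e : ∀ n : ℕ, Complex.exp (2 * π * Complex.I * n * z) * acoef 0 s n =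
      Complex.exp (-(n * Complex.exp (2 * Real.log (2 * π) - LL z))) * acoef 0 s n := by
    intro n
    rw [exp_LL2 hz0]; congr 2; ring
  simp only [e]
  rw [h, pow_zero, div_one, one_mul]
  simp only [fj, Nat.cast_zero, sub_zero, add_zero]

theorem Zigrand_eq (s z : ℂ) (δ t : ℝ) : Zigrand s z δ t =
    Complex.cos (π * s) / Complex.sin (π * (((1 / 2 + δ : ℝ) : ℂ) + t * Complex.I)) *
        fj 0 s (2 * Real.log (2 * π) - LL z) (((1 / 2 + δ : ℝ) : ℂ) + t * Complex.I) := by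
  unfold Zigrand fj Dz pow2
  rw [show (2 * Real.log (2 * π) - LL z : ℂ) = (Real.log (2*π) : ℂ) + Complex.log z - π * Complex.I/2 by unfold LL; ring]
  rw [Nat.cast_zero, sub_zero]
  ring

/-- Lemma 3 of the paper: the exact reciprocity formula for `S_0(s,z)`. -/
theorem S_reciprocity (s z : ℂ) (hs : |s.re| < 1/2) (hs0 : s ≠ 0) (hz : 0 < z.im)
    (δ : ℝ) (hδ1 : |s.re| < δ) (hδ2 : δ < 1/2) :
    Integrable (Zigrand s z δ) ∧
    Summable (fun j : ℕ =>
      ((-1:ℂ))^j * Q2 j s / (Nat.factorial j : ℂ) *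
        (z^j * Sfun j s (-1/z)
          - (∑ ℓ ∈ Finset.range (j+1),
              ((-1:ℂ))^(j-ℓ) / (Nat.factorial (j-ℓ) : ℂ) *
                riemannZeta (1/2 + ℓ + s) * riemannZeta (1/2 + ℓ - s) *
                (z/(2 * π * Complex.I))^ℓ)
          - Complex.Gamma (1/2 + s - j) * riemannZeta (1 + 2*s) * pow1 z (-(1/2) - s)
          - Complex.Gamma (1/2 - s - j) * riemannZeta (1 - 2*s) * pow1 z (-(1/2) + s))) ∧
    Sfun 0 s z =
      (∑' j : ℕ,
        ((-1:ℂ))^j * Q2 j s / (Nat.factorial j : ℂ) *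
          (z^j * Sfun j s (-1/z)
            - (∑ ℓ ∈ Finset.range (j+1),
                ((-1:ℂ))^(j-ℓ) / (Nat.factorial (j-ℓ) : ℂ) *
                  riemannZeta (1/2 + ℓ + s) * riemannZeta (1/2 + ℓ - s) *
                  (z/(2 * π * Complex.I))^ℓ)
            - Complex.Gamma (1/2 + s - j) * riemannZeta (1 + 2*s) * pow1 z (-(1/2) - s)
            - Complex.Gamma (1/2 - s - j) * riemannZeta (1 - 2*s) * pow1 z (-(1/2) + s)))
      + (1/(2*π)) * ∫ t : ℝ, Zigrand s z δ t := by
  have ha0 := abs_nonneg s.re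
  have ha1 := le_abs_self s.re
  have ha2 := neg_abs_le s.re
  have hz0 : z ≠ 0 := fun h => by rw [h] at hz; simp at hz
  have hc : 1 / 2 + |s.re| < 1 / 2 + δ := by linarith
  have hc1 : 1 / 2 + δ < 1 := by linarith
  have him : |(2 * Real.log (2 * π) - LL z : ℂ).im| < π / 2 := by
    have : (2 * Real.log (2 * π) - LL z : ℂ).im = - (LL z).im := by
      rw [Complex.sub_im, show (2 * Real.log (2 * π) : ℂ) = ((2 * Real.log (2 * π) : ℝ) : ℂ) by push_cast; rfl,
        Complex.ofReal_im, zero_sub]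
    rw [this, abs_neg]
    exact LL_im hz
  have hpc : (π : ℂ) ≠ 0 := by exact_mod_cast Real.pi_ne_zero
  -- integrability on the line
  obtain ⟨-, hI0⟩ := fj_line_integrable (j := 0) (s := s) him (c := 1 / 2 + δ) (by
      intro k hk
      have a : (0 : ℝ) < k := by linarith
      have b : (k : ℝ) < 1 := by linarith
      have a' : 0 < k := by exact_mod_cast a
      have b' : k < 1 := by exact_mod_cast b
      omega) (by intro h; linarith) (by intro h; linarith)
  have hsin0 : 0 < Real.sin (π * (1 / 2 + δ)) :=
    Real.sin_pos_of_pos_of_lt_pi (mul_pos Real.pi_pos (by linarith)) (by nlinarith [Real.pi_pos])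
  have hIZ : Integrable (fun t : ℝ => Complex.cos (π * s) / Complex.sin (π * (((1 / 2 + δ : ℝ) : ℂ) + t * Complex.I)) *
        fj 0 s (2 * Real.log (2 * π) - LL z) (((1 / 2 + δ : ℝ) : ℂ) + t * Complex.I)) := by
    refine Integrable.bdd_mul (c := ‖Complex.cos (π * s)‖ / Real.sin (π * (1 / 2 + δ))) hI0 ?_ (Eventually.of_forall fun t => ?_)
    · refine Continuous.aestronglyMeasurable ?_
      refine Continuous.div continuous_const (by fun_prop) fun t => ?_
      exact sin_pi_ne (by simp; linarith) (by simp; linarith)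
    · rw [norm_div]
      gcongr
      exact sin_line_bound (by linarith) (by linarith) t
  have hZI : Integrable (Zigrand s z δ) := by
    have e : Zigrand s z δ = fun t => _ := funext (Zigrand_eq s z δ)
    rw [e]; exact hIZ
  -- the bracket
  have hbr : ∀ j : ℕ, ((-1:ℂ))^j * Q2 j s / (Nat.factorial j : ℂ) *
        (z^j * Sfun j s (-1/z)
          - (∑ ℓ ∈ Finset.range (j+1),
              ((-1:ℂ))^(j-ℓ) / (Nat.factorial (j-ℓ) : ℂ) *
                riemannZeta (1/2 + ℓ + s) * riemannZeta (1/2 + ℓ - s) *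
                (z/(2 * π * Complex.I))^ℓ)
          - Complex.Gamma (1/2 + s - j) * riemannZeta (1 + 2*s) * pow1 z (-(1/2) - s)
          - Complex.Gamma (1/2 - s - j) * riemannZeta (1 - 2*s) * pow1 z (-(1/2) + s)) =
      (1 / (2 * π) : ℂ) * (((-1:ℂ))^j * Q2 j s / (Nat.factorial j : ℂ) *
        ∫ t : ℝ, fj j s (LL z) (((-(1 / 2 + δ) : ℝ) : ℂ) + t * Complex.I)) := by
    intro j
    rw [Sfun_inv j hz hc]
    have h := contour_shift j hs hs0 (LL_im hz) hc hc1
    have e1 : (∑ ℓ ∈ Finset.range (j+1), ((-1:ℂ))^(j-ℓ) / (Nat.factorial (j-ℓ) : ℂ) *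
                riemannZeta (1/2 + ℓ + s) * riemannZeta (1/2 + ℓ - s) *
                (z/(2 * π * Complex.I))^ℓ) =
        ∑ ℓ ∈ Finset.range (j + 1), (-1 : ℂ) ^ (j - ℓ) / (Nat.factorial (j - ℓ) : ℂ) *
      (Complex.exp (-ℓ * LL z) * Dz s ℓ) := by
      refine sum_congr rfl fun ℓ _ => ?_
      rw [exp_neg_nat_LL hz0, Dz]; ring
    have e2 : pow1 z (-(1/2) - s) = Complex.exp (-(1 / 2 + s) * LL z) := by
      unfold pow1 LL; congr 1; ring
    have e3 : pow1 z (-(1/2) + s) = Complex.exp (-(1 / 2 - s) * LL z) := by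
      unfold pow1 LL; congr 1; ring
    rw [e1, e2, e3]
    rw [sub_eq_iff_eq_add] at h
    rw [h]
    have h2 : (1 / (2 * π) : ℂ) * (2 * π) = 1 := by field_simp
    rw [mul_add, ← mul_assoc, h2, one_mul]
    generalize (∫ t : ℝ, fj j s (LL z) (((-(1 / 2 + δ) : ℝ) : ℂ) + t * Complex.I)) = X
    generalize (∑ ℓ ∈ Finset.range (j + 1), (-1 : ℂ) ^ (j - ℓ) / (Nat.factorial (j - ℓ) : ℂ) *
      (Complex.exp (-ℓ * LL z) * Dz s ℓ)) = Y
    ring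
  have hsum := (sum_side hs (LL_im hz) hc hc1).mul_left (1 / (2 * π) : ℂ)
  simp only [← hbr] at hsum
  refine ⟨hZI, hsum.summable, ?_⟩
  rw [hsum.tsum_eq, integral_sub hI0 hIZ, Sfun_zero hz hc]
  have e : Zigrand s z δ = fun t => _ := funext (Zigrand_eq s z δ)
  rw [e]
  ring
end
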